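/- arXiv:2207.05554 — 3 statements merged into one kernel-verified Lean document; each statement's English description precedes it below -/
import Mathlib

section
/- Let $G_n = a_1(n)\alpha_1^n + \cdots + a_d(n)\alpha_d^n$ and $H_m = b_1(m)\beta_1^m + \cdots + b_t(m)\beta_t^m$ be two non-degenerate linear recurrence sequences defined over a function field $F$ in one variable over $\mathbb{C}$. Assume that $\alpha_1 \notin \mathbb{C}$, and that for every $j \in \{1,\ldots,t\}$ the pair $(\alpha_1, \beta_j)$ is multiplicatively independent. Let $\mu$ be a valuation on $F$ such that $\mu(\alpha_1) \le \mu(\alpha_i)$ for all $i \in \{1,\ldots,d\}$, and fix $a, b \in F^*$. Then there exist effectively computable constants $c_0$ and $C$, independent of $n$ and $m$, such that for all pairs $(n,m)$ of non-negative integers with $\min\{n,m\} > c_0$ one has $\mu(a G_n - b H_m) \le \mu(G_n) + C$. -/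
/-!
STATEMENT 0: Theorem 1 (both indices large) of the paper, for linear recurrence
sequences over a function field `F` in one variable over `ℂ`.
-/

/-- A (normalized discrete) valuation on a function field `F` over `ℂ`:
a map `F → ℤ ∪ {∞}` that is `∞` exactly at `0`, additive on products,
satisfies the ultrametric inequality, is trivial on the constants `ℂ`,
and attains the value `1` (i.e. is a normalized discrete valuation). -/
structure FFValuation (F : Type*) [Field F] [Algebra ℂ F] where
  v : F → WithTop ℤ
  v_zero : v 0 = ⊤
  v_ne_top : ∀ f : F, f ≠ 0 → v f ≠ ⊤
  v_mul : ∀ f g : F, v (f * g) = v f + v g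
  v_add : ∀ f g : F, min (v f) (v g) ≤ v (f + g)
  v_const : ∀ c : ℂ, c ≠ 0 → v (algebraMap ℂ F c) = 0
  v_exists_one : ∃ f : F, v f = 1

/-- `f` lies in the field of constants `ℂ` of `F`. -/
def IsConst (F : Type*) [Field F] [Algebra ℂ F] (f : F) : Prop :=
  f ∈ Set.range (algebraMap ℂ F)

/-- `α` and `β` are multiplicatively independent: `α^r β^s ∈ ℂ` forces `r = s = 0`. -/
def MultIndep (F : Type*) [Field F] [Algebra ℂ F] (α β : F) : Prop :=
  ∀ r s : ℤ, IsConst F (α ^ r * β ^ s) → r = 0 ∧ s = 0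

lemma fgBound {K : Type*} [Field K] [Algebra ℂ K] (v : AddValuation K (WithTop ℤ))
    (hc : ∀ c : ℂ, 0 ≤ v (algebraMap ℂ K c)) (V : Submodule ℂ K) (hV : V.FG) :
    ∃ C : ℕ, ∀ x ∈ V, (((-(C : ℤ) : ℤ) : WithTop ℤ) ≤ v x) ∧
      (x ≠ 0 → v x ≤ ((C : ℤ) : WithTop ℤ)) := by
  have hsm : ∀ (c : ℂ) (x : K), v x ≤ v (c • x) := by
    intro c x
    rw [Algebra.smul_def, v.map_mul]
    exact le_add_of_nonneg_left (hc c)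
  let L : ℤ → Submodule ℂ K := fun n =>
    { carrier := {x | (n : WithTop ℤ) ≤ v x}
      add_mem' := fun {x y} hx hy => le_trans (le_min hx hy) (v.map_add x y)
      zero_mem' := by simp
      smul_mem' := fun c x hx => le_trans hx (hsm c x) }
  -- lower bound
  have hlow : ∃ C : ℕ, V ≤ L (-(C : ℤ)) := by
    obtain ⟨s, rfl⟩ := hV
    choose! e he using fun x : K => show ∃ n : ℕ, x ∈ L (-(n : ℤ)) by
      rcases h : v x with _ | k
      · refine ⟨0, ?_⟩
        change _ ≤ v x
        rw [h]; exact le_top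
      · refine ⟨k.natAbs, ?_⟩
        change _ ≤ v x
        rw [h]
        exact WithTop.coe_le_coe.2 (by omega)
    refine ⟨∑ x ∈ s, e x, Submodule.span_le.2 fun x hx => ?_⟩
    have hex : ((-(e x : ℤ) : ℤ) : WithTop ℤ) ≤ v x := he x
    refine le_trans (WithTop.coe_le_coe.2 ?_) hex
    have : e x ≤ ∑ x ∈ s, e x := Finset.single_le_sum (fun _ _ => Nat.zero_le _) hx
    omega
  have hup : ∃ C : ℕ, V ⊓ L (C : ℤ) = ⊥ := by
    have : Module.Finite ℂ V := Module.Finite.iff_fg.2 hV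
    let f : ℕ →o (Submodule ℂ V)ᵒᵈ :=
      ⟨fun n => OrderDual.toDual ((L (n : ℤ)).comap V.subtype), fun m n h => by
        change (L (n : ℤ)).comap V.subtype ≤ (L (m : ℤ)).comap V.subtype
        refine Submodule.comap_mono fun x hx => ?_
        have hx' : ((n : ℤ) : WithTop ℤ) ≤ v x := hx
        exact le_trans (WithTop.coe_le_coe.2 (by exact_mod_cast h)) hx'⟩
    obtain ⟨n, hn⟩ := IsArtinian.monotone_stabilizes f
    refine ⟨n, ?_⟩
    rw [eq_bot_iff]
    rintro x ⟨hxV, hxL⟩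
    have hall : ∀ m : ℕ, n ≤ m → x ∈ L (m : ℤ) := by
      intro m hm
      have h1 : (⟨x, hxV⟩ : V) ∈ (L (n : ℤ)).comap V.subtype := hxL
      have h2 : (L (n : ℤ)).comap V.subtype = (L (m : ℤ)).comap V.subtype := hn m hm
      rw [h2] at h1
      exact h1
    have : v x = ⊤ := by
      rcases h : v x with _ | k
      · rfl
      · exfalso
        have h3 : ((max n (k.natAbs + 1) : ℕ) : ℤ) ≤ v x := hall _ (le_max_left _ _)
        rw [h] at h3
        have h4 := WithTop.coe_le_coe.1 h3
        push_cast at h4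
        have := le_max_right (n : ℤ) (|k| + 1)
        have := le_abs_self k
        omega
    simpa using (v.top_iff.1 this)
  obtain ⟨C1, h1⟩ := hlow
  obtain ⟨C2, h2⟩ := hup
  refine ⟨max C1 C2, fun x hx => ⟨le_trans (WithTop.coe_le_coe.2 ?_) (h1 hx), fun hx0 => ?_⟩⟩
  · omega
  · by_contra hlt
    apply hx0
    have : x ∈ V ⊓ L (C2 : ℤ) := ⟨hx, le_trans (WithTop.coe_le_coe.2 (by omega)) (not_le.1 hlt).le⟩
    rw [h2] at this
    simpa using this

lemma coreClaim {K : Type*} [Field K] [Algebra ℂ K] (v : AddValuation K (WithTop ℤ))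
    (hc : ∀ c : ℂ, 0 ≤ v (algebraMap ℂ K c)) (D : Derivation ℂ K K)
    (hD : ∀ x, v x ≤ v (D x)) (hker : ∀ x, D x = 0 → ∃ c : ℂ, algebraMap ℂ K c = x)
    (W : Submodule ℂ K) (hW : W.FG) (k : ℕ) :
    ∀ V : Submodule ℂ K, V.FG → ∃ C : ℕ, ∀ (x u l : Fin (k + 1) → K),
      (∀ i, x i ∈ V) → (∀ i, u i ≠ 0) → (∀ i, l i ∈ W) → (∀ i, D (u i) = l i * u i) →
      LinearIndependent ℂ (fun i => x i * u i) →
      ∀ i, v (∑ i, x i * u i) ≤ v (u i) + ((C : ℤ) : WithTop ℤ) := by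
  induction k with
  | zero =>
    intro V hV
    obtain ⟨C, hC⟩ := fgBound v hc V hV
    refine ⟨C, fun x u l hx hu hl hDu hli i => ?_⟩
    obtain rfl : i = 0 := Fin.fin_one_eq_zero i
    simp only [Fin.sum_univ_one, Nat.reduceAdd, Fin.isValue]
    have hne : x 0 ≠ 0 := by
      intro h
      exact hli.ne_zero 0 (by simp [h])
    rw [v.map_mul, add_comm]
    gcongr
    exact (hC _ (hx 0)).2 hne
  | succ k ih =>
    intro V hV
    let V1 : Submodule ℂ K := V ⊔ V.map (D : K →ₗ[ℂ] K) ⊔ V * W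
    have hV1 : V1.FG := (hV.sup (hV.map _)).sup (hV.mul hW)
    have hVV1 : V ≤ V1 := le_trans le_sup_left le_sup_left
    have hDV1 : ∀ x ∈ V, D x ∈ V1 := fun x hx =>
      (le_trans le_sup_right le_sup_left : V.map (D : K →ₗ[ℂ] K) ≤ V1) ⟨x, hx, rfl⟩
    have hWV1 : ∀ x ∈ V, ∀ w ∈ W, x * w ∈ V1 := fun x hx w hw =>
      (le_sup_right : V * W ≤ V1) (Submodule.mul_mem_mul hx hw)
    obtain ⟨C1, hC1⟩ := ih (V1 * V1) (hV1.mul hV1)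
    obtain ⟨C2, hC2⟩ := fgBound v hc V hV
    refine ⟨C1 + C2, fun x u l hx hu hl hDu hli i => ?_⟩
    obtain ⟨j, hj⟩ := exists_ne i
    obtain ⟨i', rfl⟩ := Fin.exists_succAbove_eq hj.symm
    set f := ∑ i, x i * u i with hf
    let y : Fin (k + 1) → K := fun i =>
      (D (x j) + x j * l j) * x (j.succAbove i)
        - x j * (D (x (j.succAbove i)) + x (j.succAbove i) * l (j.succAbove i))
    have hDw : ∀ i, D (x i * u i) = (D (x i) + x i * l i) * u i := by
      intro i
      rw [D.leibniz, hDu, smul_eq_mul, smul_eq_mul]; ring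
    have hyw : ∀ i, u j * (y i * u (j.succAbove i)) =
        D (x j * u j) * (x (j.succAbove i) * u (j.succAbove i))
          - (x j * u j) * D (x (j.succAbove i) * u (j.succAbove i)) := by
      intro i
      rw [hDw, hDw]; simp only [y]; ring
    have hwj : x j * u j ≠ 0 := hli.ne_zero j
    have hxj : x j ≠ 0 := left_ne_zero_of_mul hwj
    have huj0 : u j ≠ 0 := hu j
    have key := hC1 y (fun i => u (j.succAbove i)) (fun i => l (j.succAbove i)) (fun i =>
      sub_mem (Submodule.mul_mem_mul (add_mem (hDV1 _ (hx _)) (hWV1 _ (hx _) _ (hl _))) (hVV1 (hx _)))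
        (Submodule.mul_mem_mul (hVV1 (hx _)) (add_mem (hDV1 _ (hx _)) (hWV1 _ (hx _) _ (hl _)))))
      (fun i => hu _) (fun i => hl _) (fun i => hDu _) ?_ i'
    · -- valuation estimate
      have hsum : u j * ∑ i, y i * u (j.succAbove i) = D (x j * u j) * f - (x j * u j) * D f := by
        rw [Finset.mul_sum, hf, Fin.sum_univ_succAbove _ j, map_add, map_sum]
        simp only [hyw, Finset.sum_sub_distrib, mul_add, Finset.mul_sum]
        ring
      have h1 : v (u j) + v (x j) + v f ≤ v (u j) + v (∑ i, y i * u (j.succAbove i)) := by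
        rw [← v.map_mul (u j) (∑ i, _), hsum]
        refine le_trans (le_min ?_ ?_) (v.map_sub _ _)
        · rw [v.map_mul]
          gcongr
          refine le_trans ?_ (hD _)
          rw [v.map_mul, add_comm]
        · rw [v.map_mul, v.map_mul, add_comm (v (x j))]
          gcongr
          exact hD _
      have huj : v (u j) ≠ ⊤ := fun h => hu j (v.top_iff.1 h)
      rw [add_assoc, WithTop.add_le_add_iff_left huj] at h1
      have h2 : v (x j) + v f ≤ v (u (j.succAbove i')) + ((C1 : ℤ) : WithTop ℤ) := h1.trans key
      have h3 := (hC2 _ (hx j)).1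
      have h4 : ((-(C2 : ℤ) : ℤ) : WithTop ℤ) + v f ≤
        v (u (j.succAbove i')) + ((C1 : ℤ) : WithTop ℤ) := le_trans (by gcongr) h2
      have h5 : v f = (((C2 : ℤ) : ℤ) : WithTop ℤ) + (((-(C2 : ℤ) : ℤ) : WithTop ℤ) + v f) := by
        rw [← add_assoc, ← WithTop.coe_add]; simp
      rw [h5]
      calc _ ≤ (((C2 : ℤ) : ℤ) : WithTop ℤ) +
              (v (u (j.succAbove i')) + ((C1 : ℤ) : WithTop ℤ)) := by gcongr
        _ = _ := by rw [Nat.cast_add, WithTop.coe_add]; abel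
    · -- linear independence
      rw [Fintype.linearIndependent_iff]
      intro c hc0
      set g := ∑ i, c i • (x (j.succAbove i) * u (j.succAbove i)) with hg
      have hz : D (x j * u j) * g - (x j * u j) * D g = 0 := by
        have : u j * ∑ i, c i • (y i * u (j.succAbove i)) = 0 := by rw [hc0, mul_zero]
        rw [← this, hg, map_sum, Finset.mul_sum, Finset.mul_sum, Finset.mul_sum,
          ← Finset.sum_sub_distrib]
        refine Finset.sum_congr rfl fun i _ => ?_
        rw [D.map_smul, mul_smul_comm, mul_smul_comm, mul_smul_comm, hyw, smul_sub]
      have hd : D (g * (x j * u j)⁻¹) = 0 := by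
        rw [D.leibniz, D.leibniz_inv]
        simp only [smul_eq_mul]
        generalize x j * u j = w at *
        field_simp
        linear_combination -hz
      obtain ⟨e, he⟩ := hker _ hd
      have hge : g = e • (x j * u j) := by
        rw [Algebra.smul_def, he]; field_simp
      rw [Fintype.linearIndependent_iff] at hli
      have := hli (j.insertNth (-e) c) (by
        rw [Fin.sum_univ_succAbove _ j]
        simp only [Fin.insertNth_apply_same, Fin.insertNth_apply_succAbove]
        rw [← hg, hge]; simp)
      intro i
      simpa using this (j.succAbove i)

lemma abs_claim {F K : Type*} [Field F] [Algebra ℂ F] [Field K] [Algebra ℂ K]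
    (v : AddValuation K (WithTop ℤ)) (w : AddValuation F (WithTop ℤ))
    (hcK : ∀ c : ℂ, 0 ≤ v (algebraMap ℂ K c)) (D : Derivation ℂ K K)
    (hD : ∀ x, v x ≤ v (D x)) (hker : ∀ x, D x = 0 → ∃ c : ℂ, algebraMap ℂ K c = x)
    (φ : F →ₐ[ℂ] K) (hφ : ∀ f, v (φ f) = w f)
    {ι : Type*} [Fintype ι] (γ : ι → F) (hγ : ∀ i, γ i ≠ 0) (V : Submodule ℂ F) (hV : V.FG) :
    ∃ C : ℕ, ∀ (T : Finset ι) (e : ι → ℕ) (x : ι → F), (∀ i ∈ T, x i ∈ V) →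
      LinearIndepOn ℂ (fun i => x i * γ i ^ e i) (T : Set ι) →
      ∀ i ∈ T, w (∑ i ∈ T, x i * γ i ^ e i) ≤ w (γ i ^ e i) + ((C : ℤ) : WithTop ℤ) := by
  classical
  let W : Submodule ℂ (K) :=
    Submodule.span ℂ (Set.range fun i => D (φ (γ i)) / φ (γ i))
  have hW : W.FG := Submodule.fg_span (Set.finite_range _)
  have hclaim : ∀ k : ℕ, _ := fun k => coreClaim v hcK D hD hker W hW k (V.map φ.toLinearMap) (hV.map _)
  choose C hC using hclaim
  refine ⟨∑ k ∈ Finset.range (Fintype.card ι), C k, ?_⟩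
  intro T e x hx hli i hi
  obtain ⟨k, hk⟩ : ∃ k, T.card = k + 1 :=
    Nat.exists_eq_succ_of_ne_zero (Finset.card_ne_zero_of_mem hi)
  have hkι : k < Fintype.card ι := by
    have := Finset.card_le_univ T
    omega
  let σ : T ≃ Fin (k + 1) := T.equivFinOfCardEq hk
  have hφ0 : ∀ i, φ (γ i) ≠ 0 := fun i => by simpa using hγ i
  have h := hC k (fun j => φ (x (σ.symm j))) (fun j => φ (γ (σ.symm j)) ^ e (σ.symm j))
    (fun j => (e (σ.symm j) : ℂ) • (D (φ (γ (σ.symm j))) / φ (γ (σ.symm j))))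
    (fun j => ⟨_, hx _ (σ.symm j).2, rfl⟩) (fun j => pow_ne_zero _ (hφ0 _))
    (fun j => W.smul_mem _ (Submodule.subset_span ⟨_, rfl⟩))
    (fun j => by
      rw [Derivation.leibniz_pow]
      rcases Nat.eq_zero_or_pos (e (σ.symm j)) with h0 | h0
      · simp [h0]
      · obtain ⟨q, hq⟩ := Nat.exists_eq_succ_of_ne_zero h0.ne'
        rw [hq]
        have := hφ0 (σ.symm j)
        rw [nsmul_eq_mul, Algebra.smul_def (R := ℂ), map_natCast]
        simp only [Nat.succ_eq_add_one, Nat.add_sub_cancel, smul_eq_mul, pow_succ]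
        field_simp)
    (by
      have h1 : LinearIndependent ℂ (fun j : T => x j * γ j ^ e j) := hli
      have h2 := (h1.map' φ.toLinearMap (LinearMap.ker_eq_bot.2 φ.toRingHom.injective)).comp
        σ.symm σ.symm.injective
      have h3 : (fun j => φ (x (σ.symm j)) * φ (γ (σ.symm j)) ^ e (σ.symm j)) =
          ((φ.toLinearMap ∘ fun j : T => x j * γ j ^ e j) ∘ σ.symm) := by
        funext j
        simp
      rw [h3]
      exact h2)
    (σ ⟨i, hi⟩)
  have hs : (∑ j, φ (x (σ.symm j)) * φ (γ (σ.symm j)) ^ e (σ.symm j)) =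
      φ (∑ i ∈ T, x i * γ i ^ e i) := by
    rw [← Finset.sum_coe_sort T, map_sum, ← Equiv.sum_comp σ.symm]
    simp
  rw [hs, hφ, ← map_pow, hφ] at h
  simp only [Equiv.symm_apply_apply] at h
  refine h.trans ?_
  gcongr
  exact_mod_cast Finset.single_le_sum (f := C) (fun _ _ => Nat.zero_le _)
    (Finset.mem_range.2 hkι)

section LaurentPart
/-- the standard `ℂ`-algebra structure on Laurent series -/
noncomputable abbrev laurAlg : Algebra ℂ (LaurentSeries ℂ) := HahnSeries.instAlgebra

attribute [local instance] laurAlg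

/-- Euler derivation `t d/dt` on Laurent series. -/
noncomputable def eulerFun (f : LaurentSeries ℂ) : LaurentSeries ℂ where
  coeff n := (n : ℂ) * f.coeff n
  isPWO_support' := f.isPWO_support.mono (by
    intro n hn
    simp only [Function.mem_support, ne_eq, mul_eq_zero, not_or] at hn
    exact hn.2)

@[simp] lemma eulerFun_coeff (f : LaurentSeries ℂ) (n : ℤ) :
    (eulerFun f).coeff n = (n : ℂ) * f.coeff n := rfl

lemma eulerFun_support (f : LaurentSeries ℂ) : (eulerFun f).support ⊆ f.support := by
  intro n hn
  simp only [HahnSeries.mem_support, eulerFun_coeff, ne_eq, mul_eq_zero, not_or] at hn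
  exact hn.2

noncomputable def eulerDer : Derivation ℂ (LaurentSeries ℂ) (LaurentSeries ℂ) :=
  Derivation.mk'
    { toFun := eulerFun
      map_add' := fun f g => by ext n; simp [mul_add]
      map_smul' := fun c f => by ext n; simp; ring }
    (by
      intro f g
      ext n
      simp only [LinearMap.coe_mk, AddHom.coe_mk, smul_eq_mul]
      rw [HahnSeries.coeff_add, mul_comm g, eulerFun_coeff,
        HahnSeries.coeff_mul_left' f.isPWO_support (eulerFun_support f),
        HahnSeries.coeff_mul_right' g.isPWO_support (eulerFun_support g),
        HahnSeries.coeff_mul, Finset.mul_sum, ← Finset.sum_add_distrib]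
      refine Finset.sum_congr rfl fun ij hij => ?_
      have : ij.1 + ij.2 = n := by
        simpa using (Finset.mem_antidiagonal.1 hij).2.2
      rw [← this]
      simp; ring)

lemma eulerDer_coeff (f : LaurentSeries ℂ) (n : ℤ) :
    (eulerDer f).coeff n = (n : ℂ) * f.coeff n := rfl

lemma eulerDer_val (f : LaurentSeries ℂ) :
    HahnSeries.addVal ℤ ℂ f ≤ HahnSeries.addVal ℤ ℂ (eulerDer f) := by
  rw [HahnSeries.addVal_apply, HahnSeries.addVal_apply, HahnSeries.le_orderTop_iff_forall]
  intro j hj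
  rw [eulerDer_coeff, HahnSeries.coeff_eq_zero_of_lt_orderTop hj, mul_zero]

lemma eulerDer_ker (f : LaurentSeries ℂ) (h : eulerDer f = 0) :
    ∃ c : ℂ, algebraMap ℂ (LaurentSeries ℂ) c = f := by
  refine ⟨f.coeff 0, ?_⟩
  ext n
  have := congrArg (fun g => HahnSeries.coeff g n) h
  simp only [eulerDer_coeff, HahnSeries.coeff_zero, mul_eq_zero, Int.cast_eq_zero] at this
  rw [HahnSeries.algebraMap_apply, HahnSeries.C_apply]
  by_cases hn : n = 0
  · subst hn; simp
  · rw [HahnSeries.coeff_single_of_ne hn]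
    exact (this.resolve_left hn).symm

lemma laurent_const (c : ℂ) :
    0 ≤ HahnSeries.addVal ℤ ℂ (algebraMap ℂ (LaurentSeries ℂ) c) := by
  rw [HahnSeries.algebraMap_apply, HahnSeries.C_apply, HahnSeries.addVal_apply]
  exact HahnSeries.orderTop_single_le

open Polynomial in
lemma bivariate_of_functionField {F : Type*} [Field F] [Algebra ℂ F] [Algebra (RatFunc ℂ) F]
    [IsScalarTower ℂ (RatFunc ℂ) F] (hFF : FunctionField ℂ F) (p : F) (hp : Transcendental ℂ p)
    (f : F) : ∃ P : ℂ[X][X], P ≠ 0 ∧ Polynomial.eval₂ (aeval p : ℂ[X] →ₐ[ℂ] F).toRingHom f P = 0 := by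
  have hfd : FiniteDimensional (IntermediateField.adjoin ℂ {p}) F :=
    FunctionField.finiteDimensional_of_adjoin_transcendental hp
  have h1 : IsAlgebraic (IntermediateField.adjoin ℂ {p}) f := Algebra.IsAlgebraic.isAlgebraic f
  rw [IntermediateField.isAlgebraic_adjoin_iff] at h1
  obtain ⟨q, hq0, hq⟩ := h1
  let g : ℂ[X] →ₐ[ℂ] Algebra.adjoin ℂ {p} := aeval ⟨p, Algebra.subset_adjoin rfl⟩
  have hgv : ∀ r, ((g r : Algebra.adjoin ℂ {p}) : F) = aeval p r := by
    intro r
    have := Polynomial.aeval_algHom_apply (Algebra.adjoin ℂ {p}).val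
      (⟨p, Algebra.subset_adjoin rfl⟩ : Algebra.adjoin ℂ {p}) r
    simp [g]
  have hg : Function.Surjective g := by
    rintro ⟨y, hy⟩
    have hy' := hy
    rw [Algebra.adjoin_singleton_eq_range_aeval] at hy'
    obtain ⟨r, hr⟩ := hy'
    exact ⟨r, Subtype.ext ((hgv r).trans hr)⟩
  obtain ⟨P, hP⟩ := Polynomial.map_surjective g.toRingHom hg q
  refine ⟨P, ?_, ?_⟩
  · rintro rfl
    exact hq0 (by rw [← hP]; simp)
  · rw [← hP, aeval_def, eval₂_map] at hq
    rw [← hq]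
    congr 1
    refine RingHom.ext fun r => ?_
    exact (hgv r).symm

lemma const_of_isAlgebraic {F : Type*} [Field F] [Algebra ℂ F] (x : F) (hx : IsAlgebraic ℂ x) :
    ∃ c : ℂ, algebraMap ℂ F c = x := by
  have hi := hx.isIntegral
  exact minpoly.mem_range_of_degree_eq_one ℂ x
    (IsAlgClosed.degree_eq_one_of_irreducible ℂ (minpoly.irreducible hi))

open Polynomial in
lemma residue_exists {F : Type*} [Field F] [Algebra ℂ F] [Algebra (RatFunc ℂ) F]
    [IsScalarTower ℂ (RatFunc ℂ) F] (hFF : FunctionField ℂ F) (w : AddValuation F (WithTop ℤ))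
    (hc : ∀ c : ℂ, c ≠ 0 → w (algebraMap ℂ F c) = 0) (p : F) (hp : w p = 1)
    (f : F) (hf : 0 ≤ w f) : ∃ c : ℂ, 1 ≤ w (f - algebraMap ℂ F c) := by
  have hcn : ∀ c : ℂ, 0 ≤ w (algebraMap ℂ F c) := by
    intro c
    by_cases h : c = 0
    · simp [h]
    · rw [hc c h]
  have htr : Transcendental ℂ p := by
    intro halg
    obtain ⟨c, rfl⟩ := const_of_isAlgebraic p halg
    by_cases h : c = 0
    · simp [h] at hp
    · rw [hc c h] at hp
      exact absurd hp (by decide)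
  obtain ⟨P, hP0, hP⟩ := bivariate_of_functionField hFF p htr f
  obtain ⟨Q, hQ, hQd⟩ := (FiniteMultiplicity.of_prime_left
    (Polynomial.prime_C_iff.2 (Polynomial.prime_X (R := ℂ))) hP0).exists_eq_pow_mul_and_not_dvd
  have hp0 : p ≠ 0 := by rintro rfl; simp at hp
  have hQ0 : Polynomial.eval₂ (aeval p : ℂ[X] →ₐ[ℂ] F).toRingHom f Q = 0 := by
    rw [hQ, eval₂_mul, eval₂_pow, eval₂_C] at hP
    refine (mul_eq_zero.1 hP).resolve_left (pow_ne_zero _ ?_)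
    simpa using hp0
  let R : ℂ[X] := Q.map (evalRingHom 0)
  have hR0 : R ≠ 0 := by
    intro hR
    apply hQd
    rw [C_dvd_iff_dvd_coeff]
    intro i
    rw [X_dvd_iff]
    have := congrArg (fun r => r.coeff i) hR
    simpa [R, coeff_map, coeff_zero_eq_eval_zero] using this
  have hcoef : ∀ r : ℂ[X], 0 ≤ w (aeval p r) := by
    intro r
    rw [aeval_eq_sum_range]
    refine w.map_le_sum fun i _ => ?_
    rw [Algebra.smul_def, w.map_mul, w.map_pow, hp]
    exact add_nonneg (hcn _) (nsmul_nonneg (by decide) _)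
  have hdiff : 1 ≤ w (aeval f R) := by
    have h1 : aeval f R = - (Polynomial.eval₂ (aeval p : ℂ[X] →ₐ[ℂ] F).toRingHom f Q - aeval f R) := by
      rw [hQ0]; simp
    rw [h1, w.map_neg, aeval_def, eval₂_map, eval₂_eq_sum_range, eval₂_eq_sum_range,
      ← Finset.sum_sub_distrib]
    refine w.map_le_sum fun i _ => ?_
    rw [← sub_mul, w.map_mul, w.map_pow]
    have h2 : (1 : WithTop ℤ) ≤ w ((aeval p : ℂ[X] →ₐ[ℂ] F).toRingHom (Q.coeff i) -
        ((algebraMap ℂ F).comp (evalRingHom 0)) (Q.coeff i)) := by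
      have h3 : (aeval p : ℂ[X] →ₐ[ℂ] F).toRingHom (Q.coeff i) -
        ((algebraMap ℂ F).comp (evalRingHom 0)) (Q.coeff i) = p * aeval p (divX (Q.coeff i)) := by
        have h4 := congrArg (aeval p) (X_mul_divX_add (Q.coeff i))
        simp only [map_add, map_mul, aeval_X, aeval_C] at h4
        have h5 : (aeval p : ℂ[X] →ₐ[ℂ] F).toRingHom (Q.coeff i) = aeval p (Q.coeff i) := rfl
        rw [h5, ← h4]
        simp [coeff_zero_eq_eval_zero]
      rw [h3, w.map_mul, hp]
      exact le_add_of_nonneg_right (hcoef _)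
    exact le_add_of_le_of_nonneg h2 (nsmul_nonneg hf _)
  by_contra hno
  push Not at hno
  have hfc : ∀ c : ℂ, w (f - algebraMap ℂ F c) ≤ 0 := by
    intro c
    have := hno c
    rcases h : w (f - algebraMap ℂ F c) with _ | k
    · rw [h] at this; exact absurd this not_top_lt
    · rw [h] at this
      have h6 : k < 1 := WithTop.coe_lt_coe.1 this
      exact WithTop.coe_le_coe.2 (by omega)
  have hsplit := (IsAlgClosed.splits R).eq_prod_roots
  have hms : ∀ s : Multiset ℂ, w ((s.map fun a => f - algebraMap ℂ F a).prod) ≤ 0 := by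
    intro s
    induction s using Multiset.induction with
    | empty => simp
    | cons a s ih =>
      rw [Multiset.map_cons, Multiset.prod_cons, w.map_mul]
      exact add_nonpos (hfc a) ih
  rw [hsplit, map_mul, aeval_C, w.map_mul, hc _ (leadingCoeff_ne_zero.2 hR0), zero_add,
    map_multiset_prod, Multiset.map_map] at hdiff
  have h7 := hms R.roots
  have h8 : (Multiset.map ((aeval f) ∘ fun a => X - C a) R.roots) =
      R.roots.map fun a => f - algebraMap ℂ F a := by
    refine Multiset.map_congr rfl fun a _ => ?_
    simp
  rw [h8] at hdiff
  exact absurd (hdiff.trans h7) (by decide)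

open Polynomial in
lemma laurent_embed {F : Type*} [Field F] [Algebra ℂ F] (w : AddValuation F (WithTop ℤ))
    (hc : ∀ c : ℂ, c ≠ 0 → w (algebraMap ℂ F c) = 0) (p : F) (hp : w p = 1)
    (hres : ∀ f : F, 0 ≤ w f → ∃ c : ℂ, 1 ≤ w (f - algebraMap ℂ F c)) :
    ∃ φ : F →ₐ[ℂ] LaurentSeries ℂ, ∀ f, HahnSeries.addVal ℤ ℂ (φ f) = w f := by
  have hcn : ∀ c : ℂ, 0 ≤ w (algebraMap ℂ F c) := by
    intro c
    by_cases h : c = 0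
    · simp [h]
    · rw [hc c h]
  have hp0 : p ≠ 0 := by rintro rfl; simp at hp
  have hwpow : ∀ n : ℕ, w (p ^ n) = ((n : ℤ) : WithTop ℤ) := by
    intro n
    rw [w.map_pow, hp]
    induction n with
    | zero => simp
    | succ n ih => rw [succ_nsmul, ih]; push_cast; rfl
  have hcoef : ∀ r : ℂ[X], 0 ≤ w (aeval p r) := by
    intro r
    rw [aeval_eq_sum_range]
    refine w.map_le_sum fun i _ => ?_
    rw [Algebra.smul_def, w.map_mul, w.map_pow, hp]
    exact add_nonneg (hcn _) (nsmul_nonneg (by decide) _)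
  -- expansion relation
  let R : F → PowerSeries ℂ → Prop := fun f L =>
    ∀ N : ℕ, ((N : ℤ) : WithTop ℤ) ≤ w (f - aeval p (PowerSeries.trunc N L))
  have hRadd : ∀ f g L M, R f L → R g M → R (f + g) (L + M) := by
    intro f g L M hf hg N
    rw [map_add, map_add, add_sub_add_comm]
    exact le_trans (le_min (hf N) (hg N)) (w.map_add _ _)
  have hRmul : ∀ f g L M, 0 ≤ w f → R f L → R g M → R (f * g) (L * M) := by
    intro f g L M hf0 hf hg N
    have hdvd : (X : ℂ[X]) ^ N ∣ PowerSeries.trunc N L * PowerSeries.trunc N M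
        - PowerSeries.trunc N (L * M) := by
      rw [X_pow_dvd_iff]
      intro d hd
      have h1 := PowerSeries.coeff_mul_eq_coeff_trunc_mul_trunc L M hd
      rw [coeff_sub, PowerSeries.coeff_trunc, if_pos hd, h1, ← Polynomial.coe_mul,
        Polynomial.coeff_coe, sub_self]
    obtain ⟨S, hS⟩ := hdvd
    have hS' := congrArg (aeval p) hS
    simp only [map_sub, map_mul, map_pow, aeval_X] at hS'
    have hdec : f * g - aeval p (PowerSeries.trunc N (L * M)) =
        f * (g - aeval p (PowerSeries.trunc N M)) +
        (aeval p (PowerSeries.trunc N M)) * (f - aeval p (PowerSeries.trunc N L))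
        + p ^ N * aeval p S := by
      rw [← hS']; ring
    rw [hdec]
    refine le_trans (le_min (le_trans (le_min ?_ ?_) (w.map_add _ _)) ?_) (w.map_add _ _)
    · rw [w.map_mul]; exact le_add_of_nonneg_of_le hf0 (hg N)
    · rw [w.map_mul]; exact le_add_of_nonneg_of_le (hcoef _) (hf N)
    · rw [w.map_mul, hwpow]; exact le_add_of_nonneg_right (hcoef _)
  have hRC : ∀ c : ℂ, R (algebraMap ℂ F c) (PowerSeries.C c) := by
    intro c N
    cases N with
    | zero => simpa using hcn c
    | succ n => rw [PowerSeries.trunc_C, aeval_C, sub_self]; simp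
  have hRex : ∀ f, 0 ≤ w f → ∃ L, R f L := by
    intro f hf
    choose res hres' using fun f : {f : F // 0 ≤ w f} => hres f.1 f.2
    let step : {f : F // 0 ≤ w f} → {f : F // 0 ≤ w f} := fun f =>
      ⟨(f.1 - algebraMap ℂ F (res f)) * p⁻¹, by
        have h1 := hres' f
        have h2 : w ((f.1 - algebraMap ℂ F (res f)) * p⁻¹) + 1 =
            w (f.1 - algebraMap ℂ F (res f)) := by
          rw [← hp, ← w.map_mul, mul_assoc, inv_mul_cancel₀ hp0, mul_one]
        rw [← h2] at h1
        rcases h : w ((f.1 - algebraMap ℂ F (res f)) * p⁻¹) with _ | k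
        · exact le_top
        · rw [h] at h1
          have h6 : 1 ≤ k + 1 := WithTop.coe_le_coe.1 h1
          exact WithTop.coe_le_coe.2 (by omega)⟩
    let s : ℕ → {f : F // 0 ≤ w f} := fun n => step^[n] ⟨f, hf⟩
    have hs : ∀ n, (s n).1 = algebraMap ℂ F (res (s n)) + p * (s (n + 1)).1 := by
      intro n
      have : s (n + 1) = step (s n) := Function.iterate_succ_apply' _ _ _
      rw [this]
      simp only [step]
      field_simp
      ring
    refine ⟨PowerSeries.mk fun n => res (s n), ?_⟩
    intro N
    have h1 : f - aeval p (PowerSeries.trunc N (PowerSeries.mk fun n => res (s n))) =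
        p ^ N * (s N).1 := by
      induction N with
      | zero => simp [s]
      | succ n ih =>
        rw [PowerSeries.trunc_succ, map_add, ← sub_sub, ih, hs n, PowerSeries.coeff_mk,
          aeval_monomial]
        ring
    rw [h1, w.map_mul, hwpow]
    exact le_add_of_nonneg_right (s N).2
  have hRord : ∀ f L, R f L → L ≠ 0 →
      HahnSeries.addVal ℤ ℂ (HahnSeries.ofPowerSeries ℤ ℂ L) = w f := by
    classical
    intro f L hf hL
    have hex : ∃ n, PowerSeries.coeff n L ≠ 0 := by
      by_contra hno
      push Not at hno
      exact hL (PowerSeries.ext (by simpa using hno))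
    obtain ⟨k, hk, hlt⟩ : ∃ k, PowerSeries.coeff k L ≠ 0 ∧ ∀ m < k, PowerSeries.coeff m L = 0 :=
      ⟨Nat.find hex, Nat.find_spec hex, fun m hm => not_not.1 (Nat.find_min hex hm)⟩
    have htr : PowerSeries.trunc (k + 1) L = monomial k (PowerSeries.coeff k L) := by
      ext m
      rw [PowerSeries.coeff_trunc, coeff_monomial]
      by_cases h1 : k = m
      · subst h1; simp
      · rw [if_neg h1]
        split_ifs with h2
        · exact hlt m (by omega)
        · rfl
    have h1 := hf (k + 1)
    rw [htr, aeval_monomial] at h1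
    have h2 : w (algebraMap ℂ F (PowerSeries.coeff k L) * p ^ k) = ((k : ℤ) : WithTop ℤ) := by
      rw [w.map_mul, hc _ hk, hwpow, zero_add]
    have h3 : w f = ((k : ℤ) : WithTop ℤ) := by
      have h4 : w (algebraMap ℂ F (PowerSeries.coeff k L) * p ^ k) <
          w (f - algebraMap ℂ F (PowerSeries.coeff k L) * p ^ k) := by
        rw [h2]
        refine lt_of_lt_of_le (WithTop.coe_lt_coe.2 ?_) h1
        push_cast; omega
      have h5 := w.map_add_eq_of_lt_left h4
      rw [add_sub_cancel, h2] at h5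
      exact h5
    rw [h3, HahnSeries.addVal_apply]
    refine HahnSeries.orderTop_eq_of_le ?_ ?_
    · rw [HahnSeries.mem_support, HahnSeries.ofPowerSeries_apply_coeff]
      exact hk
    · intro g hg
      rw [HahnSeries.mem_support] at hg
      by_contra hgk
      apply hg
      by_cases hg0 : 0 ≤ g
      · lift g to ℕ using hg0
        rw [HahnSeries.ofPowerSeries_apply_coeff]
        exact hlt g (by omega)
      · rw [HahnSeries.ofPowerSeries_apply]
        refine HahnSeries.embDomain_of_notMem_range ?_
        rintro ⟨n, hn⟩
        apply hg0
        rw [← hn]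
        simp
  have hR0 : ∀ L, R 0 L → L = 0 := by
    intro L hL
    by_contra h
    have := hRord 0 L hL h
    rw [w.map_zero, AddValuation.top_iff] at this
    exact h (HahnSeries.ofPowerSeries_injective (by rw [this, map_zero]))
  have hRuniq : ∀ f L M, R f L → R f M → L = M := by
    intro f L M hL hM
    have h1 : R (algebraMap ℂ F (-1) * f) (PowerSeries.C (-1) * M) :=
      hRmul _ _ _ _ (hcn _) (hRC _) hM
    have h2 := hRadd _ _ _ _ hL h1
    have h3 := hR0 (L + PowerSeries.C (-1) * M) (by simpa using h2)
    have h4 : PowerSeries.C (-1 : ℂ) * M = - M := by rw [map_neg, map_one]; ring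
    rw [h4] at h3
    exact eq_of_sub_eq_zero (by rw [sub_eq_add_neg]; exact h3)
  let O : ValuationSubring F :=
    { carrier := {f | 0 ≤ w f}
      mul_mem' := fun {a b} ha hb => by
        change 0 ≤ w (a * b)
        rw [w.map_mul]; exact add_nonneg ha hb
      one_mem' := by simp
      add_mem' := fun {a b} ha hb => le_trans (le_min ha hb) (w.map_add a b)
      zero_mem' := by simp
      neg_mem' := fun {a} ha => by
        change 0 ≤ w (-a)
        rw [w.map_neg]; exact ha
      mem_or_inv_mem' := fun a => by
        change 0 ≤ w a ∨ 0 ≤ w a⁻¹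
        by_contra hh
        push Not at hh
        by_cases ha : a = 0
        · simp [ha] at hh
        have h1 : w a + w a⁻¹ = 0 := by rw [← w.map_mul, mul_inv_cancel₀ ha, w.map_one]
        have h2 : w a + w a⁻¹ < 0 := 
          lt_of_le_of_lt (add_le_of_nonpos_right hh.2.le) hh.1
        rw [h1] at h2
        exact lt_irrefl _ h2 }
  choose E hE using fun f : O => hRex f.1 f.2
  let e : O →+* PowerSeries ℂ :=
    { toFun := E
      map_one' := hRuniq _ _ _ (hE 1) (by simpa using hRC 1)
      map_zero' := hRuniq _ _ _ (hE 0) (by simpa using hRC 0)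
      map_mul' := fun a b => hRuniq _ _ _ (hE (a * b)) (hRmul _ _ _ _ a.2 (hE a) (hE b))
      map_add' := fun a b => hRuniq _ _ _ (hE (a + b)) (hRadd _ _ _ _ (hE a) (hE b)) }
  let e' : O →+* LaurentSeries ℂ := (HahnSeries.ofPowerSeries ℤ ℂ).comp e
  have he'v : ∀ a : O, HahnSeries.addVal ℤ ℂ (e' a) = w a.1 := by
    intro a
    by_cases h : E a = 0
    · have hw : w a.1 = ⊤ := by
        have h1 := hE a
        rw [h] at h1
        rcases hwa : w a.1 with _ | k
        · rfl
        · exfalso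
          have h2 := h1 (k.natAbs + 1)
          rw [map_zero, map_zero, sub_zero, hwa] at h2
          have h3 : ((k.natAbs + 1 : ℕ) : ℤ) ≤ k := WithTop.coe_le_coe.1 h2
          omega
      rw [hw]
      have : e' a = 0 := by
        change HahnSeries.ofPowerSeries ℤ ℂ (E a) = 0
        rw [h, map_zero]
      rw [this]; simp
    · exact hRord _ _ (hE a) h
  have hinj : Function.Injective e' := by
    rw [injective_iff_map_eq_zero]
    intro a ha
    have h1 := he'v a
    rw [ha, AddValuation.map_zero] at h1
    exact Subtype.ext (w.top_iff.1 h1.symm)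
  let φ : F →+* LaurentSeries ℂ := IsFractionRing.lift hinj
  have hφ : ∀ a : O, φ a.1 = e' a := fun a => IsFractionRing.lift_algebraMap hinj a
  refine ⟨⟨φ, fun c => ?_⟩, fun f => ?_⟩
  · have h1 := hφ ⟨algebraMap ℂ F c, hcn c⟩
    have h2 : E ⟨algebraMap ℂ F c, hcn c⟩ = PowerSeries.C c := hRuniq _ _ _ (hE _) (hRC c)
    change φ (algebraMap ℂ F c) = _
    rw [HahnSeries.algebraMap_apply]
    refine h1.trans ?_
    change HahnSeries.ofPowerSeries ℤ ℂ (E _) = _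
    rw [h2]
    simp
  · change HahnSeries.addVal ℤ ℂ (φ f) = w f
    rcases O.mem_or_inv_mem f with h | h
    · exact (congrArg _ (hφ ⟨f, h⟩)).trans (he'v ⟨f, h⟩)
    · by_cases hf : f = 0
      · simp [hf]
      have h1 : HahnSeries.addVal ℤ ℂ (φ f⁻¹) = w f⁻¹ :=
        (congrArg _ (hφ ⟨f⁻¹, h⟩)).trans (he'v ⟨f⁻¹, h⟩)
      have h2 : HahnSeries.addVal ℤ ℂ (φ f) + HahnSeries.addVal ℤ ℂ (φ f⁻¹) = 0 := by
        rw [← AddValuation.map_mul, ← map_mul, mul_inv_cancel₀ hf, map_one, AddValuation.map_one]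
      have h3 : w f + w f⁻¹ = 0 := by rw [← w.map_mul, mul_inv_cancel₀ hf, w.map_one]
      rw [h1, ← h3] at h2
      have h4 : w f⁻¹ ≠ ⊤ := fun h => inv_ne_zero hf (w.top_iff.1 h)
      exact (WithTop.add_right_inj h4).1 h2

lemma place_claim {F : Type*} [Field F] [Algebra ℂ F] [Algebra (RatFunc ℂ) F]
    [IsScalarTower ℂ (RatFunc ℂ) F] (hFF : FunctionField ℂ F) (w : AddValuation F (WithTop ℤ))
    (hc : ∀ c : ℂ, c ≠ 0 → w (algebraMap ℂ F c) = 0) (p : F) (hp : w p = 1)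
    {ι : Type*} [Fintype ι] (γ : ι → F) (hγ : ∀ i, γ i ≠ 0) (V : Submodule ℂ F) (hV : V.FG) :
    ∃ C : ℕ, ∀ (T : Finset ι) (e : ι → ℕ) (x : ι → F), (∀ i ∈ T, x i ∈ V) →
      LinearIndepOn ℂ (fun i => x i * γ i ^ e i) (T : Set ι) →
      ∀ i ∈ T, w (∑ i ∈ T, x i * γ i ^ e i) ≤ w (γ i ^ e i) + ((C : ℤ) : WithTop ℤ) := by
  classical
  obtain ⟨φ, hφ⟩ := laurent_embed w hc p hp (fun f hf => residue_exists hFF w hc p hp f hf)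
  exact abs_claim (HahnSeries.addVal ℤ ℂ) w laurent_const eulerDer eulerDer_val eulerDer_ker φ hφ
    γ hγ V hV

end LaurentPart

/-- turn a `ℤᵐ⁰`-valued valuation into an additive one -/
noncomputable def toAddVal {F : Type*} [Field F] (v : Valuation F (WithZero (Multiplicative ℤ))) :
    AddValuation F (WithTop ℤ) := by
  classical
  exact AddValuation.of
    (fun f => if f = 0 then ⊤ else ((-(WithZero.log (v f)) : ℤ) : WithTop ℤ))
    (by simp) (by simp)
    (fun x y => by
      by_cases hx : x = 0
      · simp [hx]
      by_cases hy : y = 0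
      · simp [hy]
      by_cases hxy : x + y = 0
      · simp [hxy]
      simp only [hx, hy, hxy, if_false]
      have hx' : v x ≠ 0 := (v.ne_zero_iff).2 hx
      have hy' : v y ≠ 0 := (v.ne_zero_iff).2 hy
      have hxy' : v (x + y) ≠ 0 := (v.ne_zero_iff).2 hxy
      rcases le_max_iff.1 (v.map_add x y) with h | h
      · exact min_le_iff.2 (Or.inl (WithTop.coe_le_coe.2
          (neg_le_neg ((WithZero.log_le_log hxy' hx').2 h))))
      · exact min_le_iff.2 (Or.inr (WithTop.coe_le_coe.2
          (neg_le_neg ((WithZero.log_le_log hxy' hy').2 h)))))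
    (fun x y => by
      by_cases hx : x = 0
      · simp [hx]
      by_cases hy : y = 0
      · simp [hy]
      simp only [hx, hy, mul_eq_zero, or_self, if_false]
      have hx' : v x ≠ 0 := (v.ne_zero_iff).2 hx
      have hy' : v y ≠ 0 := (v.ne_zero_iff).2 hy
      rw [map_mul, WithZero.log_mul hx' hy', ← WithTop.coe_add, neg_add])

lemma toAddVal_apply {F : Type*} [Field F] (v : Valuation F (WithZero (Multiplicative ℤ)))
    (f : F) (hf : f ≠ 0) : toAddVal v f = ((-(WithZero.log (v f)) : ℤ) : WithTop ℤ) := by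
  classical
  simp [toAddVal, hf]

open Polynomial in
open scoped IntermediateField.algebraAdjoinAdjoin in
lemma exists_place {F : Type*} [Field F] [Algebra ℂ F] [Algebra (RatFunc ℂ) F]
    [IsScalarTower ℂ (RatFunc ℂ) F] (hFF : FunctionField ℂ F) (g : F)
    (hg : Transcendental ℂ g) :
    ∃ w : AddValuation F (WithTop ℤ), (∀ c : ℂ, c ≠ 0 → w (algebraMap ℂ F c) = 0) ∧
      (∃ p, w p = 1) ∧ w g ≠ 0 := by
  have hg0 : g ≠ 0 := by
    rintro rfl
    exact hg isAlgebraic_zero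
  let A := Algebra.adjoin ℂ {g}
  let K := IntermediateField.adjoin ℂ {g}
  have hfd : FiniteDimensional K F :=
    FunctionField.finiteDimensional_of_adjoin_transcendental hg
  let hAK : Algebra A K :=
    inferInstanceAs (Algebra (Algebra.adjoin ℂ {g}) (IntermediateField.adjoin ℂ {g}))
  have hfr : IsFractionRing A K :=
    inferInstanceAs (IsFractionRing (Algebra.adjoin ℂ {g}) (IntermediateField.adjoin ℂ {g}))
  have hst : IsScalarTower A K F :=
    inferInstanceAs (IsScalarTower (Algebra.adjoin ℂ {g}) (IntermediateField.adjoin ℂ {g}) F)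
  let gA : A := ⟨g, Algebra.subset_adjoin rfl⟩
  let ψ : ℂ[X] →ₐ[ℂ] A := aeval gA
  have hgv : ∀ r, ((ψ r : A) : F) = aeval g r := by
    intro r
    simp [ψ, gA]
  have hψ : Function.Surjective ψ := by
    rintro ⟨y, hy⟩
    have hy' : y ∈ Algebra.adjoin ℂ {g} := hy
    rw [Algebra.adjoin_singleton_eq_range_aeval] at hy'
    obtain ⟨r, hr⟩ := hy'
    exact ⟨r, Subtype.ext ((hgv r).trans hr)⟩
  have hpid : IsPrincipalIdealRing A := IsPrincipalIdealRing.of_surjective ψ.toRingHom hψ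
  have hded : IsDedekindDomain A := inferInstance
  let B := integralClosure A F
  have hBd : IsDedekindDomain B := IsIntegralClosure.isDedekindDomain A K F B
  have hBf : IsFractionRing B F := integralClosure.isFractionRing_of_finite_extension K F
  let gB : B := algebraMap A B gA
  have hnu : ¬ IsUnit gB := by
    intro hu
    obtain ⟨b, hb⟩ := hu.exists_right_inv
    have hbF : (b : F) = g⁻¹ := by
      have := congrArg (algebraMap B F) hb
      rw [map_mul, map_one] at this
      exact eq_inv_of_mul_eq_one_right this
    have hgint : IsIntegral A (g⁻¹ : F) := hbF ▸ b.2
    let gK : K := algebraMap A K gA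
    have hgint' : IsIntegral A (gK⁻¹ : K) := by
      rw [← isIntegral_algebraMap_iff (B := F) (algebraMap K F).injective]
      rw [map_inv₀]
      exact hgint
    obtain ⟨y, hy⟩ := IsIntegrallyClosed.isIntegral_iff.1 hgint'
    obtain ⟨r, rfl⟩ := hψ y
    have h1 : aeval g r = g⁻¹ := by
      rw [← hgv]
      have := congrArg (algebraMap K F) hy
      rw [map_inv₀] at this
      exact this
    have h2 : aeval g (X * r - 1) = 0 := by
      rw [map_sub, map_mul, aeval_X, h1, mul_inv_cancel₀ hg0, map_one, sub_self]
    have h3 := (transcendental_iff.1 hg) _ h2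
    have h4 := congrArg (eval 0) h3
    simp at h4
  have hgB0 : gB ≠ 0 := by
    intro h
    apply hg0
    exact congrArg (algebraMap B F) h
  obtain ⟨M, hM, hgM⟩ := exists_max_ideal_of_mem_nonunits hnu
  let P : IsDedekindDomain.HeightOneSpectrum B :=
    ⟨M, hM.isPrime, fun h => hgB0 (by rw [h] at hgM; simpa using hgM)⟩
  let v : Valuation F (WithZero (Multiplicative ℤ)) := P.valuation F
  have hle : ∀ c : ℂ, v (algebraMap ℂ F c) ≤ 1 := by
    intro c
    exact P.valuation_le_one (K := F) (algebraMap A B (algebraMap ℂ A c))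
  refine ⟨toAddVal v, ?_, ?_, ?_⟩
  · intro c hc
    have h1 : v (algebraMap ℂ F c) = 1 := by
      refine le_antisymm (hle c) ?_
      have h2 := hle c⁻¹
      rw [map_inv₀, map_inv₀] at h2
      have h3 : v (algebraMap ℂ F c) ≠ 0 := (v.ne_zero_iff).2 (by simpa using hc)
      exact (inv_le_one₀ (zero_lt_iff.2 h3)).1 h2
    rw [toAddVal_apply _ _ (by simpa using hc), h1]
    simp
  · obtain ⟨p, hp⟩ := P.valuation_exists_uniformizer F
    refine ⟨p, ?_⟩
    have hp0 : p ≠ 0 := by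
      rintro rfl
      rw [map_zero] at hp
      exact WithZero.exp_ne_zero hp.symm
    rw [toAddVal_apply _ _ hp0]
    change ((-(WithZero.log (P.valuation F p)) : ℤ) : WithTop ℤ) = 1
    rw [hp]
    simp
  · have hlt : v g < 1 := (P.valuation_lt_one_iff_mem (K := F) gB).2 hgM
    rw [toAddVal_apply _ _ hg0]
    intro h
    have h1 : -(WithZero.log (v g)) = 0 := WithTop.coe_eq_coe.1 h
    have h2 : v g ≠ 0 := (v.ne_zero_iff).2 hg0
    have h3 := (WithZero.log_lt_log h2 one_ne_zero).2 hlt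
    rw [WithZero.log_one] at h3
    omega

lemma min_relation {K F ι : Type*} [Field K] [AddCommGroup F] [Module K F] [Fintype ι]
    (y : ι → F) (k0 : ι) (f : F) (c0 : ι → K) (hc0 : c0 k0 ≠ 0) (hf : ∑ i, c0 i • y i = f) :
    ∃ c : ι → K, c k0 ≠ 0 ∧ c k0 = c0 k0 ∧ ∑ i, c i • y i = f ∧
      ∀ d : ι → K, ∑ i, d i • y i = 0 → d k0 = 0 → (∀ i, d i ≠ 0 → c i ≠ 0) → d = 0 := by
  classical
  let P : Set (ι → K) := {c | c k0 = c0 k0 ∧ ∑ i, c i • y i = f}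
  let s : (ι → K) → ℕ := fun c => (Finset.univ.filter fun i => c i ≠ 0).card
  have hP : P.Nonempty := ⟨c0, rfl, hf⟩
  let c := Function.argminOn s P hP
  have hc : c ∈ P := Function.argminOn_mem s P hP
  refine ⟨c, by rw [hc.1]; exact hc0, hc.1, hc.2, ?_⟩
  intro d hd hd0 hsub
  by_contra hne
  obtain ⟨j, hj⟩ := Function.ne_iff.1 hne
  have hj : d j ≠ 0 := hj
  let c' : ι → K := fun i => c i - c j / d j * d i
  have hc' : c' ∈ P := by
    refine ⟨?_, ?_⟩
    · simp only [c', hd0, mul_zero, sub_zero]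
      exact hc.1
    · simp only [c', sub_smul, Finset.sum_sub_distrib, mul_smul, ← Finset.smul_sum, hd, smul_zero,
        sub_zero]
      exact hc.2
  have hlt : s c' < s c := by
    apply Finset.card_lt_card
    rw [Finset.ssubset_iff_of_subset]
    · refine ⟨j, by simpa using hsub j hj, ?_⟩
      simp [c', hj]
    · intro i
      simp only [Finset.mem_filter, Finset.mem_univ, true_and]
      intro hi hci
      by_cases hdi : d i = 0
      · exact hi (by simp [c', hdi, hci])
      · exact hsub i hdi hci
  exact Function.not_lt_argminOn s P hc' hlt

lemma min_circuit {K F ι : Type*} [Field K] [AddCommGroup F] [Module K F] [Fintype ι]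
    (y : ι → F) (k0 : ι) (c0 : ι → K) (hc0 : c0 k0 ≠ 0) (hf : ∑ i, c0 i • y i = 0) :
    ∃ c : ι → K, c k0 ≠ 0 ∧ ∑ i, c i • y i = 0 ∧
      ∀ d : ι → K, ∑ i, d i • y i = 0 → (∃ k, c k ≠ 0 ∧ d k = 0) →
        (∀ i, d i ≠ 0 → c i ≠ 0) → d = 0 := by
  obtain ⟨c, h1, -, h2, h3⟩ := min_relation y k0 0 c0 hc0 hf
  refine ⟨c, h1, h2, ?_⟩
  rintro d hd ⟨k, hck, hdk⟩ hsub
  have h4 : (fun i => d k0 * c i - c k0 * d i) = 0 := by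
    apply h3
    · simp only [sub_smul, Finset.sum_sub_distrib, mul_smul, ← Finset.smul_sum, hd, h2, smul_zero,
        sub_zero]
    · ring
    · intro i hi hci
      by_cases hdi : d i = 0
      · simp [hci, hdi] at hi
      · exact hsub i hdi hci
  have h5 := congrFun h4 k
  simp only [hdk, mul_zero, sub_zero, Pi.zero_apply, mul_eq_zero, hck, or_false] at h5
  exact h3 d hd h5 hsub

/-- a place: trivial on the constants and normalized -/
def IsPlace {F : Type*} [Field F] [Algebra ℂ F] (w : AddValuation F (WithTop ℤ)) : Prop :=
  (∀ c : ℂ, c ≠ 0 → w (algebraMap ℂ F c) = 0) ∧ ∃ p, w p = 1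

lemma IsPlace.nonneg {F : Type*} [Field F] [Algebra ℂ F] {w : AddValuation F (WithTop ℤ)}
    (h : IsPlace w) (c : ℂ) : 0 ≤ w (algebraMap ℂ F c) := by
  by_cases hc : c = 0
  · simp [hc]
  · rw [h.1 c hc]

lemma IsPlace.smul {F : Type*} [Field F] [Algebra ℂ F] {w : AddValuation F (WithTop ℤ)}
    (h : IsPlace w) (c : ℂ) (hc : c ≠ 0) (x : F) : w (c • x) = w x := by
  rw [Algebra.smul_def, w.map_mul, h.1 c hc, zero_add]

lemma place_int {F : Type*} [Field F] (w : AddValuation F (WithTop ℤ)) (x : F) (hx : x ≠ 0) :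
    ∃ z : ℤ, w x = (z : WithTop ℤ) := by
  have h : w x ≠ ⊤ := fun h => hx ((AddValuation.top_iff w).1 h)
  exact ⟨(w x).untop h, (WithTop.coe_untop _ h).symm⟩

/-- values of `x` and `y` differ by at most `C` -/
def Near {F : Type*} [Field F] (w : AddValuation F (WithTop ℤ)) (C : ℕ) (x y : F) : Prop :=
  w x ≤ w y + ((C : ℤ) : WithTop ℤ) ∧ w y ≤ w x + ((C : ℤ) : WithTop ℤ)

lemma li_of_scaled {F ι : Type*} [Field F] [Algebra ℂ F] [Fintype ι]
    (c : ι → ℂ) (x u : ι → F) (T : Finset ι) (hT : ∀ i ∈ T, c i ≠ 0)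
    (h : ∀ d : ι → ℂ, ∑ i, d i • (x i * u i) = 0 → (∀ i, d i ≠ 0 → i ∈ T) → d = 0) :
    LinearIndepOn ℂ (fun i => (c i • x i) * u i) (T : Set ι) := by
  classical
  rw [linearIndepOn_finset_iff]
  intro g hg i hi
  have h1 := h (fun i => if i ∈ T then g i * c i else 0) ?_ ?_
  · have := congrFun h1 i
    simp only [hi, if_true, Pi.zero_apply, mul_eq_zero, hT i hi, or_false] at this
    exact this
  · simp only [ite_smul, zero_smul, Finset.sum_ite_mem, Finset.univ_inter]
    rw [← hg]
    refine Finset.sum_congr rfl fun i _ => ?_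
    rw [mul_smul, smul_mul_assoc]
  · intro i hi
    by_contra hn
    simp [hn] at hi

lemma circuit_near {F : Type*} [Field F] [Algebra ℂ F] [Algebra (RatFunc ℂ) F]
    [IsScalarTower ℂ (RatFunc ℂ) F] (hFF : FunctionField ℂ F) (w : AddValuation F (WithTop ℤ))
    (hw : IsPlace w)
    {ι : Type*} [Fintype ι] (γ : ι → F) (hγ : ∀ i, γ i ≠ 0) (V : Submodule ℂ F) (hV : V.FG) :
    ∃ C : ℕ, ∀ (e : ι → ℕ) (x : ι → F) (c : ι → ℂ), (∀ i, x i ∈ V) →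
      ∑ i, c i • (x i * γ i ^ e i) = 0 →
      (∀ d : ι → ℂ, ∑ i, d i • (x i * γ i ^ e i) = 0 → (∃ k, c k ≠ 0 ∧ d k = 0) →
        (∀ i, d i ≠ 0 → c i ≠ 0) → d = 0) →
      ∀ k l, c k ≠ 0 → c l ≠ 0 → k ≠ l → x k ≠ 0 → x l ≠ 0 →
        Near w C (γ k ^ e k) (γ l ^ e l) := by
  classical
  obtain ⟨p, hp⟩ := hw.2
  obtain ⟨C1, hC1⟩ := place_claim hFF w hw.1 p hp γ hγ V hV
  obtain ⟨C2, hC2⟩ := fgBound w hw.nonneg V hV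
  refine ⟨C1 + C2, ?_⟩
  intro e x c hx hc hd
  have key : ∀ k l, c k ≠ 0 → c l ≠ 0 → k ≠ l →
      w (γ k ^ e k) ≤ w (γ l ^ e l) + (((C1 + C2 : ℕ) : ℤ) : WithTop ℤ) := by
    intro k l hk hl hkl
    let T : Finset ι := (Finset.univ.filter fun i => c i ≠ 0).erase k
    have hTc : ∀ i ∈ T, c i ≠ 0 := by
      intro i hi
      simp only [T, Finset.mem_erase, Finset.mem_filter, Finset.mem_univ, true_and] at hi
      exact hi.2
    have hli : LinearIndepOn ℂ (fun i => (c i • x i) * γ i ^ e i) (T : Set ι) := by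
      refine li_of_scaled c x (fun i => γ i ^ e i) T hTc ?_
      intro d hd0 hdT
      refine hd d hd0 ⟨k, hk, ?_⟩ fun i hi => hTc i (hdT i hi)
      by_contra hdk
      have := hdT k hdk
      simp [T] at this
    have h1 := hC1 T e (fun i => c i • x i) (fun i _ => V.smul_mem _ (hx i)) hli l
      (by simp [T, hl, hkl.symm])
    have hsum : ∑ i ∈ T, (c i • x i) * γ i ^ e i = -(c k • (x k * γ k ^ e k)) := by
      rw [eq_neg_iff_add_eq_zero, ← hc,
        ← Finset.sum_filter_of_ne (p := fun i => c i ≠ 0) (s := Finset.univ)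
          (f := fun i => c i • (x i * γ i ^ e i))
          (by intro i _ hi hci; exact hi (by simp [hci])),
        ← Finset.sum_erase_add (a := k) (Finset.univ.filter fun i => c i ≠ 0) _ (by simpa using hk)]
      simp only [smul_mul_assoc, T]
    rw [hsum, w.map_neg, hw.smul _ hk, w.map_mul] at h1
    have h2 := (hC2 (x k) (hx k)).1
    obtain ⟨z1, hz1⟩ := place_int w (γ k ^ e k) (pow_ne_zero _ (hγ k))
    obtain ⟨z2, hz2⟩ := place_int w (γ l ^ e l) (pow_ne_zero _ (hγ l))
    rw [hz1, hz2] at h1 ⊢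
    have h3 := (add_le_add_left h2 (z1 : WithTop ℤ)).trans h1
    norm_cast at h3 ⊢
    push_cast
    linarith
  intro k l hk hl hkl _ _
  exact ⟨key k l hk hl hkl, key l k hl hk hkl.symm⟩

lemma main_core {F : Type*} [Field F] [Algebra ℂ F] [Algebra (RatFunc ℂ) F]
    [IsScalarTower ℂ (RatFunc ℂ) F] (hFF : FunctionField ℂ F) (μ : AddValuation F (WithTop ℤ))
    (hμ : IsPlace μ)
    {ι : Type*} [Fintype ι] (γ : ι → F) (hγ : ∀ i, γ i ≠ 0) (V : Submodule ℂ F) (hV : V.FG)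
    (k0 : ι) {τ : Type*} (E : τ → ι → ℕ) (N : τ → ℕ)
    (hsep : ∀ k, k ≠ k0 → ∃ w1 w2 : AddValuation F (WithTop ℤ), IsPlace w1 ∧ IsPlace w2 ∧
      ∀ C1 C2 : ℕ, ∃ M : ℕ, ∀ t, Near w1 C1 (γ k0 ^ E t k0) (γ k ^ E t k) →
        Near w2 C2 (γ k0 ^ E t k0) (γ k ^ E t k) → N t ≤ M) :
    ∃ c C : ℕ, ∀ t, c < N t → ∀ x : ι → F, (∀ i, x i ∈ V) → x k0 ≠ 0 →
      μ (∑ i, x i * γ i ^ E t i) ≤ μ (γ k0 ^ E t k0) + ((C : ℤ) : WithTop ℤ) := by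
  classical
  obtain ⟨p, hp⟩ := hμ.2
  obtain ⟨C, hC⟩ := place_claim hFF μ hμ.1 p hp γ hγ V hV
  have hM : ∀ k, ∃ M : ℕ, k ≠ k0 → ∀ t (x : ι → F) (c : ι → ℂ), (∀ i, x i ∈ V) →
      ∑ i, c i • (x i * γ i ^ E t i) = 0 →
      (∀ d : ι → ℂ, ∑ i, d i • (x i * γ i ^ E t i) = 0 → (∃ k, c k ≠ 0 ∧ d k = 0) →
        (∀ i, d i ≠ 0 → c i ≠ 0) → d = 0) →
      c k0 ≠ 0 → c k ≠ 0 → x k0 ≠ 0 → x k ≠ 0 → N t ≤ M := by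
    intro k
    by_cases hk : k = k0
    · exact ⟨0, fun h => absurd hk h⟩
    obtain ⟨w1, w2, hw1, hw2, h⟩ := hsep k hk
    obtain ⟨C1, hC1⟩ := circuit_near hFF w1 hw1 γ hγ V hV
    obtain ⟨C2, hC2⟩ := circuit_near hFF w2 hw2 γ hγ V hV
    obtain ⟨M, hM⟩ := h C1 C2
    refine ⟨M, fun _ t x c hx hc hd h0 h1 h2 h3 => hM t ?_ ?_⟩
    · exact hC1 (E t) x c hx hc hd k0 k h0 h1 (Ne.symm hk) h2 h3
    · exact hC2 (E t) x c hx hc hd k0 k h0 h1 (Ne.symm hk) h2 h3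
  choose M hM using hM
  refine ⟨∑ k, M k, C, ?_⟩
  intro t ht x hx hx0
  by_cases hrel : ∃ c : ι → ℂ, c k0 ≠ 0 ∧ ∑ i, c i • (x i * γ i ^ E t i) = 0
  · exfalso
    obtain ⟨c0, hc0, hs⟩ := hrel
    obtain ⟨c, h1, h2, h3⟩ := min_circuit (fun i => x i * γ i ^ E t i) k0 c0 hc0 hs
    have hy0 : x k0 * γ k0 ^ E t k0 ≠ 0 := mul_ne_zero hx0 (pow_ne_zero _ (hγ k0))
    -- another index in the support
    obtain ⟨k, hk, hck⟩ : ∃ k, k ≠ k0 ∧ c k ≠ 0 := by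
      by_contra hno
      push Not at hno
      rw [Finset.sum_eq_single k0 (fun k _ hk => by simp [hno k hk]) (by simp)] at h2
      exact (smul_ne_zero h1 hy0) h2
    have hxk : x k ≠ 0 := by
      intro hxk
      have h4 := h3 (fun i => if i = k then 1 else 0) (by simp [hxk])
        ⟨k0, h1, by simp [hk.symm]⟩ (by
          intro i hi
          by_cases hik : i = k
          · rw [hik]; exact hck
          · simp [hik] at hi)
      have h5 := congrFun h4 k
      simp at h5
    have h6 := hM k hk t x c hx h2 h3 h1 hck hx0 hxk
    have h7 := Finset.single_le_sum (f := M) (fun _ _ => Nat.zero_le _) (Finset.mem_univ k)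
    omega
  · push Not at hrel
    obtain ⟨c, h1, h2, h3, h4⟩ := min_relation (K := ℂ) (fun i => x i * γ i ^ E t i) k0
      (∑ i, x i * γ i ^ E t i) (fun _ => 1) one_ne_zero (by simp)
    let T : Finset ι := Finset.univ.filter fun i => c i ≠ 0
    have hTc : ∀ i ∈ T, c i ≠ 0 := by
      intro i hi
      simpa [T] using hi
    have hli : LinearIndepOn ℂ (fun i => (c i • x i) * γ i ^ E t i) (T : Set ι) := by
      refine li_of_scaled c x (fun i => γ i ^ E t i) T hTc ?_
      intro d hd0 hdT
      refine h4 d hd0 ?_ fun i hi => hTc i (hdT i hi)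
      by_contra h
      exact hrel d h hd0
    have h5 := hC T (E t) (fun i => c i • x i) (fun i _ => V.smul_mem _ (hx i)) hli k0
      (by simpa [T] using h1)
    have hsum : ∑ i ∈ T, (c i • x i) * γ i ^ E t i = ∑ i, x i * γ i ^ E t i := by
      rw [← h3,
        ← Finset.sum_filter_of_ne (p := fun i => c i ≠ 0) (s := Finset.univ)
          (f := fun i => c i • (x i * γ i ^ E t i))
          (by intro i _ hi hci; exact hi (by simp [hci]))]
      simp only [smul_mul_assoc, T]
    rw [hsum] at h5
    exact h5

/-- the additive valuation attached to an `FFValuation` -/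
noncomputable def FFValuation.toAdd {F : Type*} [Field F] [Algebra ℂ F] (μ : FFValuation F) :
    AddValuation F (WithTop ℤ) :=
  AddValuation.of μ.v μ.v_zero (by simpa using μ.v_const 1 one_ne_zero)
    (fun x y => μ.v_add x y) (fun x y => μ.v_mul x y)

lemma FFValuation.toAdd_apply {F : Type*} [Field F] [Algebra ℂ F] (μ : FFValuation F) (f : F) :
    μ.toAdd f = μ.v f := rfl

lemma FFValuation.isPlace {F : Type*} [Field F] [Algebra ℂ F] (μ : FFValuation F) :
    IsPlace μ.toAdd := ⟨μ.v_const, μ.v_exists_one⟩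

lemma exists_place_of_nonconst {F : Type*} [Field F] [Algebra ℂ F] [Algebra (RatFunc ℂ) F]
    [IsScalarTower ℂ (RatFunc ℂ) F] (hFF : FunctionField ℂ F) (g : F) (hg : ¬ IsConst F g) :
    ∃ w : AddValuation F (WithTop ℤ), IsPlace w ∧ w g ≠ 0 := by
  have ht : Transcendental ℂ g := by
    intro h
    obtain ⟨c, hc⟩ := const_of_isAlgebraic g h
    exact hg ⟨c, hc⟩
  obtain ⟨w, h1, h2, h3⟩ := exists_place hFF g ht
  exact ⟨w, ⟨h1, h2⟩, h3⟩

lemma place_pow {F : Type*} [Field F] (w : AddValuation F (WithTop ℤ)) (x : F) (z : ℤ)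
    (h : w x = (z : WithTop ℤ)) (n : ℕ) : w (x ^ n) = ((n * z : ℤ) : WithTop ℤ) := by
  rw [w.map_pow, h, ← WithTop.coe_nsmul, nsmul_eq_mul]

lemma place_inv {F : Type*} [Field F] (w : AddValuation F (WithTop ℤ)) (x : F) (hx : x ≠ 0) (z : ℤ)
    (h : w x = (z : WithTop ℤ)) : w x⁻¹ = ((-z : ℤ) : WithTop ℤ) := by
  obtain ⟨y, hy⟩ := place_int w x⁻¹ (inv_ne_zero hx)
  have h1 : w (x * x⁻¹) = 0 := by rw [mul_inv_cancel₀ hx, w.map_one]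
  rw [w.map_mul, h, hy] at h1
  have h2 : z + y = 0 := by exact_mod_cast h1
  rw [hy]
  congr 1
  omega

lemma place_zpow {F : Type*} [Field F] (w : AddValuation F (WithTop ℤ)) (x : F) (hx : x ≠ 0) (z : ℤ)
    (h : w x = (z : WithTop ℤ)) (n : ℤ) : w (x ^ n) = ((n * z : ℤ) : WithTop ℤ) := by
  obtain ⟨k, rfl | rfl⟩ := n.eq_nat_or_neg
  · rw [zpow_natCast]
    exact place_pow w x z h k
  · rw [zpow_neg, zpow_natCast, neg_mul]
    exact place_inv w _ (pow_ne_zero _ hx) _ (place_pow w x z h k)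

lemma sep_ratio {F : Type*} [Field F] [Algebra ℂ F] [Algebra (RatFunc ℂ) F]
    [IsScalarTower ℂ (RatFunc ℂ) F] (hFF : FunctionField ℂ F) (x y : F) (hx : x ≠ 0) (hy : y ≠ 0)
    (h : ¬ IsConst F (x / y)) :
    ∃ w : AddValuation F (WithTop ℤ), IsPlace w ∧
      ∀ C : ℕ, ∃ M : ℕ, ∀ n : ℕ, Near w C (x ^ n) (y ^ n) → n ≤ M := by
  obtain ⟨w, hw, hne⟩ := exists_place_of_nonconst hFF _ h
  refine ⟨w, hw, fun C => ⟨C, fun n hn => ?_⟩⟩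
  obtain ⟨p, hp⟩ := place_int w x hx
  obtain ⟨q, hq⟩ := place_int w y hy
  rw [div_eq_mul_inv, w.map_mul, place_inv w y hy q hq, hp] at hne
  have hpq : p - q ≠ 0 := by
    intro h0
    apply hne
    rw [← WithTop.coe_add, ← sub_eq_add_neg, h0]
    rfl
  obtain ⟨h1, h2⟩ := hn
  rw [place_pow w x p hp, place_pow w y q hq] at h1 h2
  have h1' : (n : ℤ) * p ≤ n * q + C := by exact_mod_cast h1
  have h2' : (n : ℤ) * q ≤ n * p + C := by exact_mod_cast h2
  have hn0 : (0 : ℤ) ≤ n := Int.natCast_nonneg n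
  have : (n : ℤ) ≤ C := by
    rcases lt_or_gt_of_ne hpq with h0 | h0
    · nlinarith
    · nlinarith
  exact_mod_cast this

lemma sep_indep {F : Type*} [Field F] [Algebra ℂ F] [Algebra (RatFunc ℂ) F]
    [IsScalarTower ℂ (RatFunc ℂ) F] (hFF : FunctionField ℂ F) (x y : F) (hx : x ≠ 0) (hy : y ≠ 0)
    (hx1 : ¬ IsConst F x) (h : MultIndep F x y) :
    ∃ w1 w2 : AddValuation F (WithTop ℤ), IsPlace w1 ∧ IsPlace w2 ∧
      ∀ C1 C2 : ℕ, ∃ M : ℕ, ∀ n m : ℕ, Near w1 C1 (x ^ n) (y ^ m) → Near w2 C2 (x ^ n) (y ^ m) →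
        n ≤ M := by
  obtain ⟨w1, hw1, hne1⟩ := exists_place_of_nonconst hFF _ hx1
  obtain ⟨p1, hp1⟩ := place_int w1 x hx
  obtain ⟨q1, hq1⟩ := place_int w1 y hy
  have hp10 : p1 ≠ 0 := by
    rintro rfl
    exact hne1 hp1
  have hnc : ¬ IsConst F (x ^ q1 * y ^ (-p1)) := by
    intro hc
    have := (h _ _ hc).2
    omega
  obtain ⟨w2, hw2, hne2⟩ := exists_place_of_nonconst hFF _ hnc
  obtain ⟨p2, hp2⟩ := place_int w2 x hx
  obtain ⟨q2, hq2⟩ := place_int w2 y hy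
  rw [w2.map_mul, place_zpow w2 x hx p2 hp2, place_zpow w2 y hy q2 hq2] at hne2
  have hdet : q1 * p2 - p1 * q2 ≠ 0 := by
    intro h0
    apply hne2
    rw [← WithTop.coe_add, neg_mul, ← sub_eq_add_neg, h0]
    rfl
  refine ⟨w1, w2, hw1, hw2, fun C1 C2 => ⟨(C2 * |q1| + C1 * |q2|).toNat, fun n m hn1 hn2 => ?_⟩⟩
  obtain ⟨h1, h2⟩ := hn1
  obtain ⟨h3, h4⟩ := hn2
  rw [place_pow w1 x p1 hp1, place_pow w1 y q1 hq1] at h1 h2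
  rw [place_pow w2 x p2 hp2, place_pow w2 y q2 hq2] at h3 h4
  have h1' : (n : ℤ) * p1 ≤ m * q1 + C1 := by exact_mod_cast h1
  have h2' : (m : ℤ) * q1 ≤ n * p1 + C1 := by exact_mod_cast h2
  have h3' : (n : ℤ) * p2 ≤ m * q2 + C2 := by exact_mod_cast h3
  have h4' : (m : ℤ) * q2 ≤ n * p2 + C2 := by exact_mod_cast h4
  have ha1 : |(n : ℤ) * p1 - m * q1| ≤ C1 := abs_le.2 ⟨by linarith, by linarith⟩
  have ha2 : |(n : ℤ) * p2 - m * q2| ≤ C2 := abs_le.2 ⟨by linarith, by linarith⟩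
  have hid : (n : ℤ) * (q1 * p2 - p1 * q2) =
      (n * p2 - m * q2) * q1 - (n * p1 - m * q1) * q2 := by ring
  have hb : |(n : ℤ) * (q1 * p2 - p1 * q2)| ≤ C2 * |q1| + C1 * |q2| := by
    rw [hid]
    refine (abs_sub _ _).trans ?_
    rw [abs_mul, abs_mul]
    gcongr
  rw [abs_mul, Nat.abs_cast] at hb
  have hd1 : 1 ≤ |q1 * p2 - p1 * q2| := Int.one_le_abs hdet
  have hn0 : (0 : ℤ) ≤ n := Int.natCast_nonneg n
  have : (n : ℤ) ≤ C2 * |q1| + C1 * |q2| := by nlinarith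
  omega

/-- the span of `a` times the coefficients of `P` -/
lemma eval_mem {F : Type*} [Field F] [Algebra ℂ F] (V : Submodule ℂ F) (a : F)
    (P : Polynomial F) (hP : ∀ k, a * P.coeff k ∈ V) (n : ℕ) : a * P.eval (n : F) ∈ V := by
  rw [Polynomial.eval_eq_sum_range, Finset.mul_sum]
  refine V.sum_mem fun k _ => ?_
  have : a * (P.coeff k * (n : F) ^ k) = ((n : ℂ) ^ k) • (a * P.coeff k) := by
    rw [Algebra.smul_def, map_pow, map_natCast]
    ring
  rw [this]
  exact V.smul_mem _ (hP k)

lemma coeff_space {F : Type*} [Field F] [Algebra ℂ F] {ι : Type*} [Finite ι]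
    (a : ι → F) (P : ι → Polynomial F) :
    ∃ V : Submodule ℂ F, V.FG ∧ ∀ i k, a i * (P i).coeff k ∈ V := by
  classical
  cases nonempty_fintype ι
  refine ⟨⨆ i, Submodule.span ℂ (Set.image (fun k => a i * (P i).coeff k) ((P i).support : Set ℕ)),
    Submodule.fg_iSup _ fun i => Submodule.fg_span ((P i).support.finite_toSet.image _), ?_⟩
  intro i k
  by_cases hk : (P i).coeff k = 0
  · rw [hk, mul_zero]
    exact Submodule.zero_mem _
  · refine Submodule.mem_iSup_of_mem i (Submodule.subset_span ⟨k, ?_, rfl⟩)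
    simpa using hk

lemma eventually_eval_ne {F : Type*} [Field F] [CharZero F] (P : Polynomial F) (hP : P ≠ 0) :
    ∃ M : ℕ, ∀ n : ℕ, M < n → P.eval (n : F) ≠ 0 := by
  have hfin : {n : ℕ | P.eval (n : F) = 0}.Finite := by
    have h1 : {z : F | P.IsRoot z}.Finite := Polynomial.finite_setOfPred_isRoot hP
    exact h1.preimage (f := fun n : ℕ => (n : F)) (Nat.cast_injective.injOn)
  obtain ⟨M, hM⟩ := hfin.bddAbove
  exact ⟨M, fun n hn h => absurd (hM h) (by omega)⟩

theorem stmt_0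
    (F : Type*) [Field F] [Algebra ℂ F] [Algebra (RatFunc ℂ) F]
    [IsScalarTower ℂ (RatFunc ℂ) F] (hFF : FunctionField ℂ F)
    (d t : ℕ)
    -- the data of the two linear recurrence sequences
    (α : Fin (d + 1) → F) (A : Fin (d + 1) → Polynomial F)
    (β : Fin (t + 1) → F) (B : Fin (t + 1) → Polynomial F)
    (hα0 : ∀ i, α i ≠ 0) (hA0 : ∀ i, A i ≠ 0)
    (hβ0 : ∀ j, β j ≠ 0) (hB0 : ∀ j, B j ≠ 0)
    (hαinj : Function.Injective α) (hβinj : Function.Injective β)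
    -- non-degeneracy
    (hGnd : ∀ i j, i ≠ j → ¬ IsConst F (α i / α j))
    (hHnd : ∀ i j, i ≠ j → ¬ IsConst F (β i / β j))
    -- `α₁ ∉ ℂ`
    (hα1 : ¬ IsConst F (α 0))
    -- `(α₁, βⱼ)` multiplicatively independent for all `j`
    (hindep : ∀ j, MultIndep F (α 0) (β j))
    -- a valuation `μ` with `μ(α₁) ≤ μ(αᵢ)` for all `i`
    (μ : FFValuation F)
    (hμmin : ∀ i, μ.v (α 0) ≤ μ.v (α i))
    (a b : F) (ha : a ≠ 0) (hb : b ≠ 0)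
    (G H : ℕ → F)
    (hG : ∀ n : ℕ, G n = ∑ i, (A i).eval (n : F) * α i ^ n)
    (hH : ∀ m : ℕ, H m = ∑ j, (B j).eval (m : F) * β j ^ m) :
    ∃ c₀ : ℕ, ∃ C : ℤ, ∀ n m : ℕ, c₀ < min n m →
      μ.v (a * G n - b * H m) ≤ μ.v (G n) + (C : WithTop ℤ) := by
  classical
  have hcz : CharZero F := charZero_of_injective_algebraMap (algebraMap ℂ F).injective
  let γ : Fin (d + 1) ⊕ Fin (t + 1) → F := Sum.elim α β
  let P : Fin (d + 1) ⊕ Fin (t + 1) → Polynomial F := Sum.elim A B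
  let s : Fin (d + 1) ⊕ Fin (t + 1) → F := Sum.elim (fun _ => a) (fun _ => -b)
  let E : ℕ × ℕ → Fin (d + 1) ⊕ Fin (t + 1) → ℕ :=
    fun r => Sum.elim (fun _ => r.1) (fun _ => r.2)
  have hγ : ∀ i, γ i ≠ 0 := by
    rintro (i | i)
    · exact hα0 i
    · exact hβ0 i
  obtain ⟨V, hV, hVm⟩ := coeff_space s P
  obtain ⟨V', hV', hVm'⟩ := coeff_space (fun _ => 1) A
  obtain ⟨C2, hC2⟩ := fgBound μ.toAdd μ.isPlace.nonneg V' hV'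
  obtain ⟨M0, hM0⟩ := eventually_eval_ne (A 0) (hA0 0)
  obtain ⟨c1, C1, hmain⟩ := main_core hFF μ.toAdd μ.isPlace γ hγ V hV (Sum.inl 0) E
    (fun r => r.1) (by
      rintro (i | j) hk
      · have hi : (0 : Fin (d + 1)) ≠ i := fun h => hk (by rw [h])
        obtain ⟨w, hw, h⟩ := sep_ratio hFF (α 0) (α i) (hα0 0) (hα0 i) (hGnd 0 i hi)
        refine ⟨w, w, hw, hw, fun C1 _ => ?_⟩
        obtain ⟨M, hM⟩ := h C1
        exact ⟨M, fun r h1 _ => hM r.1 h1⟩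
      · obtain ⟨w1, w2, hw1, hw2, h⟩ := sep_indep hFF (α 0) (β j) (hα0 0) (hβ0 j) hα1 (hindep j)
        refine ⟨w1, w2, hw1, hw2, fun C1 C2 => ?_⟩
        obtain ⟨M, hM⟩ := h C1 C2
        exact ⟨M, fun r h1 h2 => hM r.1 r.2 h1 h2⟩)
  refine ⟨max M0 c1, (C1 : ℤ) + C2, ?_⟩
  intro n m hnm
  have hnM : M0 < n := by
    have := (lt_min_iff.1 hnm).1
    exact (le_max_left _ _).trans_lt this
  have hnc : c1 < n := by
    have := (lt_min_iff.1 hnm).1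
    exact (le_max_right _ _).trans_lt this
  have h1 := hmain (n, m) hnc (fun i => s i * (P i).eval ((E (n, m) i : ℕ) : F))
    (fun i => eval_mem V (s i) (P i) (hVm i) _)
    (mul_ne_zero ha (hM0 n hnM))
  have hsum : ∑ i, s i * (P i).eval ((E (n, m) i : ℕ) : F) * γ i ^ E (n, m) i =
      a * G n - b * H m := by
    rw [Fintype.sum_sum_type, hG, hH, Finset.mul_sum, Finset.mul_sum, sub_eq_add_neg,
      ← Finset.sum_neg_distrib]
    congr 1
    · exact Finset.sum_congr rfl fun i _ => mul_assoc _ _ _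
    · refine Finset.sum_congr rfl fun i _ => ?_
      change -b * _ * _ = _
      rw [mul_assoc, neg_mul]
      rfl
  rw [hsum] at h1
  change μ.v (a * G n - b * H m) ≤ μ.toAdd (α 0 ^ n) + _ at h1
  obtain ⟨z, hz⟩ := place_int μ.toAdd (α 0) (hα0 0)
  have h2 : ((n * z + -(C2 : ℤ) : ℤ) : WithTop ℤ) ≤ μ.toAdd (G n) := by
    rw [hG]
    refine AddValuation.map_le_sum _ fun i _ => ?_
    obtain ⟨z', hz'⟩ := place_int μ.toAdd (α i) (hα0 i)
    have hzz : z ≤ z' := by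
      have := hμmin i
      rw [← FFValuation.toAdd_apply, ← FFValuation.toAdd_apply, hz, hz'] at this
      exact_mod_cast this
    rw [AddValuation.map_mul, place_pow _ _ _ hz', add_comm, WithTop.coe_add]
    refine add_le_add ?_ ?_
    · refine (hC2 _ ?_).1
      have := eval_mem V' 1 (A i) (hVm' i) n
      rwa [one_mul] at this
    · have : (n : ℤ) * z ≤ n * z' := by gcongr
      exact_mod_cast this
  rw [place_pow _ _ _ hz] at h1
  refine h1.trans ?_
  change _ ≤ μ.toAdd (G n) + _
  refine le_trans (le_of_eq ?_) (add_le_add_left h2 _)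
  norm_cast
  push_cast
  ring
end

section
/- Let $G_n = a_1(n)\alpha_1^n + \cdots + a_d(n)\alpha_d^n$ and $H_m = b_1(m)\beta_1^m + \cdots + b_t(m)\beta_t^m$ be two non-degenerate linear recurrence sequences defined over a function field $F$ in one variable over $\mathbb{C}$. Assume that no $\alpha_i$ and no $\beta_j$ is contained in $\mathbb{C}$, and that for every $j \in \{1,\ldots,t\}$ the pair $(\alpha_1, \beta_j)$ is multiplicatively independent. Let $\mu$ be a valuation on $F$ such that $\mu(\alpha_1) \le \mu(\alpha_i)$ for all $i \in \{1,\ldots,d\}$, and fix $a, b \in F^*$. Then there exist effectively computable constants $c_1$ and $C'$, independent of $n$ and $m$, such that for all pairs $(n,m)$ of non-negative integers with $\max\{n,m\} > c_1$ one has $\mu(a G_n - b H_m) \le \mu(G_n) + C'$. -/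
section Aux
open Pointwise

/-- Sets of quotients of elements of a finite-dimensional `ℂ`-subspace. -/
def BddSet {L : Type*} [Field L] [Algebra ℂ L] (S : Set L) : Prop :=
  ∃ V : Submodule ℂ L, V.FG ∧ ∀ f ∈ S, ∃ p ∈ V, ∃ q ∈ V, q ≠ 0 ∧ f = p / q

namespace BddSet
variable {L : Type*} [Field L] [Algebra ℂ L] {S T : Set L}

theorem mono (h : BddSet T) (hST : S ⊆ T) : BddSet S := by
  obtain ⟨V, hV, h⟩ := h
  exact ⟨V, hV, fun f hf => h f (hST hf)⟩

theorem of_fg (V : Submodule ℂ L) (hV : V.FG) : BddSet (V : Set L) := by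
  refine ⟨V ⊔ Submodule.span ℂ {1}, hV.sup (Submodule.fg_span_singleton _), fun f hf => ?_⟩
  exact ⟨f, Submodule.mem_sup_left hf, 1,
    Submodule.mem_sup_right (Submodule.mem_span_singleton_self _), one_ne_zero, by simp⟩

theorem of_finite (h : S.Finite) : BddSet S :=
  (of_fg (Submodule.span ℂ S) (Submodule.fg_span h)).mono Submodule.subset_span

theorem range_const : BddSet (Set.range (algebraMap ℂ L)) := by
  refine (of_fg (Submodule.span ℂ {(1 : L)}) (Submodule.fg_span_singleton _)).mono ?_
  rintro _ ⟨c, rfl⟩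
  exact Submodule.mem_span_singleton.2 ⟨c, by rw [Algebra.algebraMap_eq_smul_one]⟩

theorem mul (hS : BddSet S) (hT : BddSet T) : BddSet (S * T) := by
  obtain ⟨V, hV, hS⟩ := hS
  obtain ⟨W, hW, hT⟩ := hT
  refine ⟨V * W, hV.mul hW, ?_⟩
  rintro _ ⟨f, hf, g, hg, rfl⟩
  obtain ⟨p, hp, q, hq, hq0, rfl⟩ := hS f hf
  obtain ⟨p', hp', q', hq', hq0', rfl⟩ := hT g hg
  exact ⟨p * p', Submodule.mul_mem_mul hp hp', q * q', Submodule.mul_mem_mul hq hq',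
    mul_ne_zero hq0 hq0', by simp only; field_simp⟩

theorem inv (hS : BddSet S) : BddSet (S⁻¹) := by
  obtain ⟨V, hV, hS⟩ := hS
  refine ⟨V, hV, ?_⟩
  intro f hf
  obtain ⟨p, hp, q, hq, hq0, h⟩ := hS _ hf
  by_cases hp0 : p = 0
  · refine ⟨0, V.zero_mem, q, hq, hq0, ?_⟩
    rw [hp0, zero_div, inv_eq_zero] at h
    simp [h]
  · exact ⟨q, hq, p, hp, hp0, by rw [← inv_inv f, h, inv_div]⟩

theorem div (hS : BddSet S) (hT : BddSet T) : BddSet (S / T) := by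
  rw [div_eq_mul_inv]; exact hS.mul hT.inv

theorem add (hS : BddSet S) (hT : BddSet T) : BddSet (S + T) := by
  obtain ⟨V, hV, hS⟩ := hS
  obtain ⟨W, hW, hT⟩ := hT
  refine ⟨V * W, hV.mul hW, ?_⟩
  rintro _ ⟨f, hf, g, hg, rfl⟩
  obtain ⟨p, hp, q, hq, hq0, rfl⟩ := hS f hf
  obtain ⟨p', hp', q', hq', hq0', rfl⟩ := hT g hg
  refine ⟨p * q' + q * p', add_mem (Submodule.mul_mem_mul hp hq') (Submodule.mul_mem_mul hq hp'),
    q * q', Submodule.mul_mem_mul hq hq', mul_ne_zero hq0 hq0', by simp only; field_simp⟩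

theorem sub (hS : BddSet S) (hT : BddSet T) : BddSet (S - T) := by
  obtain ⟨V, hV, hS⟩ := hS
  obtain ⟨W, hW, hT⟩ := hT
  refine ⟨V * W, hV.mul hW, ?_⟩
  rintro _ ⟨f, hf, g, hg, rfl⟩
  obtain ⟨p, hp, q, hq, hq0, rfl⟩ := hS f hf
  obtain ⟨p', hp', q', hq', hq0', rfl⟩ := hT g hg
  refine ⟨p * q' - q * p', sub_mem (Submodule.mul_mem_mul hp hq') (Submodule.mul_mem_mul hq hp'),
    q * q', Submodule.mul_mem_mul hq hq', mul_ne_zero hq0 hq0', by simp only; field_simp⟩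

theorem union (hS : BddSet S) (hT : BddSet T) : BddSet (S ∪ T) := by
  obtain ⟨V, hV, hS⟩ := hS
  obtain ⟨W, hW, hT⟩ := hT
  refine ⟨V ⊔ W, hV.sup hW, ?_⟩
  rintro f (hf | hf)
  · obtain ⟨p, hp, q, hq, h⟩ := hS f hf
    exact ⟨p, Submodule.mem_sup_left hp, q, Submodule.mem_sup_left hq, h⟩
  · obtain ⟨p, hp, q, hq, h⟩ := hT f hf
    exact ⟨p, Submodule.mem_sup_right hp, q, Submodule.mem_sup_right hq, h⟩

theorem iUnion {ι : Type*} [Finite ι] {S : ι → Set L} (hS : ∀ i, BddSet (S i)) :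
    BddSet (⋃ i, S i) := by
  choose V hV h using hS
  refine ⟨⨆ i, V i, Submodule.fg_iSup _ hV, ?_⟩
  intro f hf
  obtain ⟨i, hi⟩ := Set.mem_iUnion.1 hf
  obtain ⟨p, hp, q, hq, h⟩ := h i f hi
  exact ⟨p, Submodule.mem_iSup_of_mem i hp, q, Submodule.mem_iSup_of_mem i hq, h⟩

theorem deriv (D : Derivation ℂ L L) (hS : BddSet S) : BddSet (D '' S) := by
  obtain ⟨V, hV, hS⟩ := hS
  refine ⟨V.map (D : L →ₗ[ℂ] L) * V ⊔ V * V, ((hV.map _).mul hV).sup (hV.mul hV), ?_⟩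
  rintro _ ⟨f, hf, rfl⟩
  obtain ⟨p, hp, q, hq, hq0, rfl⟩ := hS f hf
  refine ⟨D p * q - D q * p, Submodule.mem_sup_left (sub_mem (Submodule.mul_mem_mul
    (Submodule.mem_map_of_mem hp) hq) (Submodule.mul_mem_mul (Submodule.mem_map_of_mem hq) hp)),
    q * q, Submodule.mem_sup_right (Submodule.mul_mem_mul hq hq), mul_ne_zero hq0 hq0, ?_⟩
  rw [Derivation.leibniz_div]
  simp only [smul_eq_mul]
  field_simp

end BddSet

theorem val_fg_finite {L : Type*} [Field L] [Algebra ℂ L] {Γ : Type*}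
    [LinearOrderedCommGroupWithZero Γ] (w : Valuation L Γ) (hw : ∀ c : ℂ, w (algebraMap ℂ L c) ≤ 1)
    (V : Submodule ℂ L) (hV : V.FG) : (w '' (V : Set L)).Finite := by
  have hw1 : ∀ c : ℂ, c ≠ 0 → w (algebraMap ℂ L c) = 1 := by
    intro c hc
    apply le_antisymm (hw c)
    have h := hw c⁻¹
    rw [map_inv₀, map_inv₀] at h
    have h0 : w (algebraMap ℂ L c) ≠ 0 := by simpa using hc
    exact (inv_le_one₀ (zero_lt_iff.2 h0)).1 h
  classical
  obtain ⟨s, rfl⟩ := hV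
  induction s using Finset.induction with
  | empty => simp
  | insert e s _ ih =>
    set V := Submodule.span ℂ (s : Set L) with hVdef
    have key : ((fun g => w (e + g)) '' (V : Set L) \ w '' (V : Set L)).Subsingleton := by
      rintro _ ⟨⟨g, hg, rfl⟩, hg'⟩ _ ⟨⟨h, hh, rfl⟩, hh'⟩
      by_contra hne
      simp only at hne hg' hh'
      rcases lt_or_gt_of_ne hne with hlt | hlt
      · apply hh'
        refine ⟨h - g, sub_mem hh hg, ?_⟩
        rw [← w.map_sub_eq_of_lt_left hlt]
        congr 1; ring
      · apply hg'
        refine ⟨g - h, sub_mem hg hh, ?_⟩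
        rw [← w.map_sub_eq_of_lt_left hlt]
        congr 1; ring
    refine (ih.union (key.finite.union ih)).subset ?_
    rintro _ ⟨f, hf, rfl⟩
    rw [Finset.coe_insert, SetLike.mem_coe, Submodule.mem_span_insert] at hf
    obtain ⟨c, g, hg, rfl⟩ := hf
    by_cases hc : c = 0
    · left; exact ⟨g, hg, by simp [hc]⟩
    · right
      rw [Set.sdiff_union_self]
      left
      refine ⟨c⁻¹ • g, V.smul_mem _ hg, ?_⟩
      have : c • e + g = algebraMap ℂ L c * (e + c⁻¹ • g) := by
        rw [← Algebra.smul_def, smul_add, smul_smul, mul_inv_cancel₀ hc, one_smul]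
      rw [this, map_mul, hw1 c hc, one_mul]

theorem BddSet.val_finite {L : Type*} [Field L] [Algebra ℂ L] {Γ : Type*}
    [LinearOrderedCommGroupWithZero Γ] (w : Valuation L Γ) (hw : ∀ c : ℂ, w (algebraMap ℂ L c) ≤ 1)
    {S : Set L} (hS : BddSet S) : (w '' S).Finite := by
  obtain ⟨V, hV, hS⟩ := hS
  have h := val_fg_finite w hw V hV
  refine (h.div h).subset ?_
  rintro _ ⟨f, hf, rfl⟩
  obtain ⟨p, hp, q, hq, hq0, rfl⟩ := hS f hf
  exact ⟨w p, ⟨p, hp, rfl⟩, w q, ⟨q, hq, rfl⟩, by simp⟩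

theorem BddSet.val_lower {L : Type*} [Field L] [Algebra ℂ L] {Γ : Type*}
    [LinearOrderedCommGroupWithZero Γ] (w : Valuation L Γ) (hw : ∀ c : ℂ, w (algebraMap ℂ L c) ≤ 1)
    {S : Set L} (hS : BddSet S) : ∃ C : Γ, C ≠ 0 ∧ ∀ f ∈ S, f ≠ 0 → C ≤ w f := by
  have h := ((hS.val_finite w hw).subset (Set.sdiff_subset (t := {0}))).insert 1
  obtain ⟨C, hC, hC'⟩ := Set.exists_min_image _ id h ⟨1, Set.mem_insert _ _⟩
  refine ⟨C, ?_, fun f hf hf0 => hC' _ (Or.inr ⟨⟨f, hf, rfl⟩, by simpa using hf0⟩)⟩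
  rcases hC with rfl | hC
  · simp
  · exact fun h => hC.2 h

theorem BddSet.val_upper {L : Type*} [Field L] [Algebra ℂ L] {Γ : Type*}
    [LinearOrderedCommGroupWithZero Γ] (w : Valuation L Γ) (hw : ∀ c : ℂ, w (algebraMap ℂ L c) ≤ 1)
    {S : Set L} (hS : BddSet S) : ∃ C : Γ, C ≠ 0 ∧ ∀ f ∈ S, w f ≤ C := by
  obtain ⟨C, hC, h⟩ := (hS.inv).val_lower w hw
  refine ⟨C⁻¹, inv_ne_zero hC, fun f hf => ?_⟩
  by_cases hf0 : f = 0
  · simp [hf0]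
  have := h f⁻¹ (by simpa using hf) (inv_ne_zero hf0)
  rw [map_inv₀] at this
  have hw0 : w f ≠ 0 := by simpa using hf0
  exact (le_inv_comm₀ (zero_lt_iff.2 hC) (zero_lt_iff.2 hw0)).1 this

theorem exists_val {L : Type*} [Field L] [Algebra ℂ L] (γ : L)
    (hγ : γ ∉ Set.range (algebraMap ℂ L)) :
    ∃ A : ValuationSubring L, (∀ c : ℂ, A.valuation (algebraMap ℂ L c) ≤ 1) ∧
      1 < A.valuation γ := by
  by_contra! hcon
  apply hγ
  have hmem : γ ∈ (⨅ V : {V : ValuationSubring L // Set.range (algebraMap ℂ L) ⊆ V.toSubring},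
      V.1.toSubring) := by
    rw [Subring.mem_iInf]
    rintro ⟨V, hV⟩
    exact (V.valuation_le_one_iff _).1 (hcon V fun c =>
      (V.valuation_le_one_iff _).2 (hV ⟨c, rfl⟩))
  rw [iInf_valuationSubring_superset] at hmem
  have hint : IsIntegral (Subring.closure (Set.range (algebraMap ℂ L))) γ := hmem
  have hint2 : IsIntegral ℂ γ := by
    obtain ⟨p, hp, hp0⟩ := hint
    have hcl : Subring.closure (Set.range (algebraMap ℂ L)) = (algebraMap ℂ L).range := by
      rw [← RingHom.coe_range, Subring.closure_eq]
    have hl : p.map (algebraMap _ L) ∈ Polynomial.lifts (algebraMap ℂ L) := by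
      rw [Polynomial.lifts_iff_coeff_lifts]
      intro n
      have h1 : ((p.coeff n : _) : L) ∈ (algebraMap ℂ L).range := by
        rw [← hcl]
        exact (p.coeff n).2
      rw [Polynomial.coeff_map]
      exact h1
    obtain ⟨q, hq, -, hqm⟩ := Polynomial.lifts_and_degree_eq_and_monic hl (hp.map _)
    refine ⟨q, hqm, ?_⟩
    rw [← Polynomial.eval_map, hq, Polynomial.eval_map]
    exact hp0
  exact minpoly.mem_range_of_degree_eq_one ℂ γ
    (IsAlgClosed.degree_eq_one_of_irreducible ℂ (minpoly.irreducible hint2))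

theorem pow_finite {L : Type*} [Field L] [Algebra ℂ L] {S : Set L} (hS : BddSet S) (γ : L)
    (hγ : γ ∉ Set.range (algebraMap ℂ L)) : {n : ℕ | γ ^ n ∈ S}.Finite := by
  obtain ⟨A, hA, hA1⟩ := exists_val γ hγ
  have h := hS.val_finite A.valuation hA
  refine Set.Finite.of_finite_image (f := fun n => A.valuation γ ^ n) (h.subset ?_) ?_
  · rintro _ ⟨n, hn, rfl⟩
    exact ⟨_, hn, by simp⟩
  · exact ((pow_right_strictMono₀ hA1).injective).injOn

theorem pow_finite₂ {L : Type*} [Field L] [Algebra ℂ L] {S : Set L} (hS : BddSet S) (α β : L)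
    (hα : α ≠ 0) (hβ : β ≠ 0)
    (h : ∀ r s : ℤ, α ^ r * β ^ s ∈ Set.range (algebraMap ℂ L) → r = 0 ∧ s = 0) :
    {p : ℕ × ℕ | α ^ p.1 / β ^ p.2 ∈ S}.Finite := by
  have hα1 : α ∉ Set.range (algebraMap ℂ L) := by
    intro hc
    have := h 1 0 (by simpa using hc)
    simp at this
  obtain ⟨A, hA, hA1⟩ := exists_val α hα1
  have hf := hS.val_finite A.valuation hA
  have hvα : A.valuation α ≠ 0 := by simpa using hα
  have hvβ : A.valuation β ≠ 0 := by simpa using hβ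
  refine Set.Finite.of_finite_fibers (f := fun p => A.valuation (α ^ p.1 / β ^ p.2))
    (hf.subset ?_) ?_
  · rintro _ ⟨p, hp, rfl⟩
    exact ⟨_, hp, rfl⟩
  rintro g ⟨p₀, hp₀, rfl⟩
  have hinj : Function.Injective (fun r : ℤ => A.valuation α ^ r) :=
    (zpow_right_strictMono₀ hA1).injective
  -- the relation satisfied by elements of the fibre
  have hrel : ∀ p : ℕ × ℕ, A.valuation (α ^ p.1 / β ^ p.2) = A.valuation (α ^ p₀.1 / β ^ p₀.2) →
      A.valuation α ^ ((p.1 : ℤ) - p₀.1) = A.valuation β ^ ((p.2 : ℤ) - p₀.2) := by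
    intro p hp
    simp only [map_div₀, map_pow] at hp
    rw [zpow_sub₀ hvα, zpow_sub₀ hvβ]
    simp only [zpow_natCast]
    field_simp at hp ⊢
    rw [hp]
  by_cases hex : ∃ p₁ ∈ {p : ℕ × ℕ | α ^ p.1 / β ^ p.2 ∈ S} ∩ (fun p : ℕ × ℕ => A.valuation (α ^ p.1 / β ^ p.2)) ⁻¹'
      {A.valuation (α ^ p₀.1 / β ^ p₀.2)}, p₁.2 ≠ p₀.2
  · obtain ⟨p₁, ⟨hp₁, hp₁'⟩, hne⟩ := hex
    have h1 := hrel p₁ hp₁'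
    set r₁ : ℤ := (p₁.1 : ℤ) - p₀.1 with hr₁
    set s₁ : ℤ := (p₁.2 : ℤ) - p₀.2 with hs₁
    have hs₁0 : s₁ ≠ 0 := by rw [hs₁]; omega
    have hprop : ∀ p : ℕ × ℕ, A.valuation (α ^ p.1 / β ^ p.2) = A.valuation (α ^ p₀.1 / β ^ p₀.2) →
        ((p.1 : ℤ) - p₀.1) * s₁ = r₁ * ((p.2 : ℤ) - p₀.2) := by
      intro p hp
      apply hinj
      simp only
      rw [zpow_mul, hrel p hp, zpow_mul, h1, ← zpow_mul, ← zpow_mul, mul_comm]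
    have hγ : α ^ r₁ * β ^ (-s₁) ∉ Set.range (algebraMap ℂ L) := by
      intro hc
      have := (h _ _ hc).2
      omega
    obtain ⟨B, hB, hB1⟩ := exists_val _ hγ
    have hfB := (hS.val_finite B.valuation hB).image (fun x => x ^ s₁)
    have hwα : B.valuation α ≠ 0 := by simpa using hα
    have hwβ : B.valuation β ≠ 0 := by simpa using hβ
    refine Set.Finite.of_finite_image (f := fun p => (B.valuation (α ^ p.1 / β ^ p.2)) ^ s₁)
      (hfB.subset ?_) ?_
    · rintro _ ⟨p, hp, rfl⟩
      exact ⟨_, ⟨_, hp.1, rfl⟩, rfl⟩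
    · have hval : ∀ p : ℕ × ℕ, A.valuation (α ^ p.1 / β ^ p.2) = A.valuation (α ^ p₀.1 / β ^ p₀.2) →
          (B.valuation (α ^ p.1 / β ^ p.2)) ^ s₁ = (B.valuation (α ^ p₀.1 / β ^ p₀.2)) ^ s₁ *
            (B.valuation (α ^ r₁ * β ^ (-s₁))) ^ ((p.2 : ℤ) - p₀.2) := by
        intro p hp
        have h2 := hprop p hp
        have h3 : (α ^ p.1 / β ^ p.2) ^ s₁ = (α ^ p₀.1 / β ^ p₀.2) ^ s₁ *
            (α ^ r₁ * β ^ (-s₁)) ^ ((p.2 : ℤ) - p₀.2) := by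
          rw [mul_zpow, ← zpow_mul, ← h2, ← zpow_mul, div_zpow, div_zpow]
          simp only [← zpow_natCast, ← zpow_mul]
          rw [div_mul_eq_mul_div, ← mul_assoc, ← zpow_add₀ hα, div_eq_div_iff (zpow_ne_zero _ hβ) (zpow_ne_zero _ hβ),
            mul_assoc, ← zpow_add₀ hβ]
          congr 2 <;> ring
        rw [← map_zpow₀, h3, map_mul, map_zpow₀, map_zpow₀]
      rintro p ⟨hp, hp'⟩ q ⟨hq, hq'⟩ hpq
      simp only at hpq
      rw [hval p hp', hval q hq'] at hpq
      have hne0 : B.valuation (α ^ p₀.1 / β ^ p₀.2) ^ s₁ ≠ 0 := by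
        apply zpow_ne_zero
        rw [Valuation.ne_zero_iff]
        positivity
      have h4 := (zpow_right_strictMono₀ hB1).injective (mul_left_cancel₀ hne0 hpq)
      have h5 := hprop p hp'
      have h6 := hprop q hq'
      rw [h4, ← h6] at h5
      have h7 := mul_right_cancel₀ hs₁0 h5
      ext <;> omega
  · push Not at hex
    refine Set.Finite.subset (Set.finite_singleton p₀) ?_
    rintro p hp
    have h2 := hex p hp
    have h1 := hrel p hp.2
    rw [h2, sub_self, zpow_zero] at h1
    have h3 := hinj (a₁ := (p.1 : ℤ) - p₀.1) (a₂ := 0) (by simpa using h1)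
    rw [Set.mem_singleton_iff]
    ext
    · omega
    · exact h2


theorem core_lemma {L : Type*} [Field L] [Algebra ℂ L] {Γ : Type*}
    [LinearOrderedCommGroupWithZero Γ] (D : Derivation ℂ L L)
    (hD : ∀ f, D f = 0 → f ∈ Set.range (algebraMap ℂ L))
    (v : Valuation L Γ) (hv : ∀ c : ℂ, v (algebraMap ℂ L c) ≤ 1)
    (hvD : ∀ f, v (D f) ≤ v f) {ι : Type*} (k : ℕ) :
    ∀ S : Set L, BddSet S → ∃ T : Set L, BddSet T ∧ ∃ C : Γ, C ≠ 0 ∧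
      ∀ (s : Finset ι) (u₀ : L) (u : ι → L), s.card ≤ k → u₀ ≠ 0 → (∀ x ∈ s, u x ≠ 0) →
        D u₀ / u₀ ∈ S → (∀ x ∈ s, D (u x) / u x ∈ S) →
        (∃ x ∈ s, u₀ / u x ∈ T) ∨ C * v u₀ ≤ v (u₀ + ∑ x ∈ s, u x) := by
  classical
  induction k with
  | zero =>
    intro S _
    refine ⟨∅, BddSet.of_finite Set.finite_empty, 1, one_ne_zero, ?_⟩
    intro s u₀ u hs _ _ _ _
    right
    have : s = ∅ := by simpa using hs
    simp [this]
  | succ k ih =>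
    intro S hS
    have hSS := hS.sub hS
    obtain ⟨T', hT', C', hC', ih⟩ := ih (D '' (S - S) / (S - S) + (S - S))
      (((hSS.deriv D).div hSS).add hSS)
    obtain ⟨C'', hC'', hlow⟩ := hSS.val_lower v hv
    refine ⟨Set.range (algebraMap ℂ L) ∪ T' * ((S - S) / (S - S)),
      BddSet.range_const.union (hT'.mul (hSS.div hSS)), min 1 (C' * C''), ?_, ?_⟩
    · rcases min_choice 1 (C' * C'') with h | h <;> rw [h]
      · simp
      · exact mul_ne_zero hC' hC''
    intro s u₀ u hs hu₀ hu hl₀ hl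
    rcases s.eq_empty_or_nonempty with rfl | ⟨y, hy⟩
    · right
      simp only [Finset.sum_empty, add_zero]
      calc _ ≤ 1 * v u₀ := by gcongr; exact min_le_left _ _
        _ = _ := one_mul _
    have huy := hu y hy
    -- derivative of a quotient
    have hquot : ∀ f : L, f ≠ 0 → D (f / u y) = (f / u y) * (D f / f - D (u y) / u y) := by
      intro f hf
      rw [Derivation.leibniz_div]
      simp only [smul_eq_mul]
      field_simp
    by_cases h0 : D (u₀ / u y) = 0
    · left
      exact ⟨y, hy, Or.inl (hD _ h0)⟩
    have hld : ∀ f : L, f ≠ 0 → D f / f ∈ S → D (f / u y) ≠ 0 →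
        D (D (f / u y)) / D (f / u y) ∈ D '' (S - S) / (S - S) + (S - S) := by
      intro f hf hfS hne
      set l := D f / f - D (u y) / u y with hlf
      have hlS : l ∈ S - S := Set.sub_mem_sub hfS (hl y hy)
      have hl0 : l ≠ 0 := by
        intro h
        apply hne
        rw [hquot f hf, ← hlf, h, mul_zero]
      have : D (D (f / u y)) / D (f / u y) = D l / l + l := by
        rw [hquot f hf, ← hlf, Derivation.leibniz, hquot f hf, ← hlf]
        simp only [smul_eq_mul]
        field_simp
      rw [this]
      exact Set.add_mem_add (Set.div_mem_div ⟨l, hlS, rfl⟩ hlS) hlS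
    set s' := (s.erase y).filter (fun x => D (u x / u y) ≠ 0) with hs'
    have hsub : ∀ x ∈ s', x ∈ s ∧ D (u x / u y) ≠ 0 := by
      intro x hx
      simp only [hs', Finset.mem_filter, Finset.mem_erase] at hx
      exact ⟨hx.1.2, hx.2⟩
    have hcard : s'.card ≤ k := by
      have h1 : s'.card ≤ (s.erase y).card := Finset.card_filter_le _ _
      rw [Finset.card_erase_of_mem hy] at h1
      omega
    rcases ih s' (D (u₀ / u y)) (fun x => D (u x / u y)) hcard h0 (fun x hx => (hsub x hx).2)
      (hld u₀ hu₀ hl₀ h0)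
      (fun x hx => hld (u x) (hu x (hsub x hx).1) (hl x (hsub x hx).1) (hsub x hx).2) with
      ⟨x, hx, hxT⟩ | hle
    · left
      obtain ⟨hxs, hx0⟩ := hsub x hx
      refine ⟨x, hxs, Or.inr ?_⟩
      have hux := hu x hxs
      rw [hquot _ hux] at hx0
      rw [hquot _ hu₀] at h0
      have e : u₀ / u x = D (u₀ / u y) / D (u x / u y) *
          ((D (u x) / u x - D (u y) / u y) / (D u₀ / u₀ - D (u y) / u y)) := by
        rw [hquot _ hux, hquot _ hu₀]
        have h1 := right_ne_zero_of_mul hx0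
        have h2 := right_ne_zero_of_mul h0
        generalize D (u x) / u x - D (u y) / u y = P at *
        generalize D u₀ / u₀ - D (u y) / u y = Q at *
        field_simp
      rw [e]
      exact Set.mul_mem_mul hxT (Set.div_mem_div (Set.sub_mem_sub (hl x hxs) (hl y hy))
        (Set.sub_mem_sub hl₀ (hl y hy)))
    · right
      have hsum : D (u₀ / u y) + ∑ x ∈ s', D (u x / u y) =
          D ((u₀ + ∑ x ∈ s, u x) / u y) := by
        rw [hs', Finset.sum_filter_ne_zero, ← Finset.add_sum_erase s u hy, ← map_sum, add_div,
          add_div, Finset.sum_div, map_add, map_add, div_self huy]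
        simp
      have h1 := (hle.trans_eq (congrArg v hsum)).trans (hvD _)
      rw [hquot _ hu₀, map_mul, map_div₀, map_div₀] at h1
      have hvy : v (u y) ≠ 0 := by simpa using huy
      have hl0 : D u₀ / u₀ - D (u y) / u y ≠ 0 := by
        intro h
        apply h0
        rw [hquot _ hu₀, h, mul_zero]
      have h2 := hlow _ (Set.sub_mem_sub hl₀ (hl y hy)) hl0
      rw [div_mul_eq_mul_div, ← mul_div_assoc] at h1
      have h3 := (div_le_div_iff_of_pos_right (zero_lt_iff.2 hvy)).1 h1
      calc _ ≤ C' * C'' * v u₀ := by gcongr; exact min_le_right _ _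
        _ = C' * (v u₀ * C'') := by rw [mul_assoc, mul_comm C'']
        _ ≤ _ := by gcongr
        _ ≤ _ := h3

theorem poly_bdd {L : Type*} [Field L] [Algebra ℂ L] (p : Polynomial L) :
    BddSet (Set.range fun n : ℕ => p.eval (n : L)) := by
  refine (BddSet.of_fg (Submodule.span ℂ (p.coeff '' p.support)) (Submodule.fg_span
    (p.support.finite_toSet.image _))).mono ?_
  rintro _ ⟨n, rfl⟩
  simp only
  rw [Polynomial.eval_eq_sum, Polynomial.sum]
  refine Submodule.sum_mem _ fun i hi => ?_
  have : p.coeff i * (n : L) ^ i = ((n : ℂ) ^ i) • p.coeff i := by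
    rw [Algebra.smul_def]; simp [mul_comm]
  rw [this]
  exact Submodule.smul_mem _ _ (Submodule.subset_span ⟨i, hi, rfl⟩)

theorem term_bdd {L : Type*} [Field L] [Algebra ℂ L] (D : Derivation ℂ L L) (p : Polynomial L)
    (α : L) (hα : α ≠ 0) :
    ∃ S, BddSet S ∧ ∀ n : ℕ, p.eval (n : L) * α ^ n ≠ 0 →
      D (p.eval (n : L) * α ^ n) / (p.eval (n : L) * α ^ n) ∈ S := by
  have hP := poly_bdd p
  refine ⟨_, ((hP.deriv D).div hP).add (BddSet.of_fg (Submodule.span ℂ {D α / α})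
    (Submodule.fg_span_singleton _)), fun n hn => ?_⟩
  have hp := left_ne_zero_of_mul hn
  have e : D (p.eval (n : L) * α ^ n) / (p.eval (n : L) * α ^ n) =
      D (p.eval (n : L)) / p.eval (n : L) + (n : ℂ) • (D α / α) := by
    have e1 : (n : ℂ) • (D α / α) = (n : L) * (D α / α) := by
      rw [Algebra.smul_def, map_natCast]
    rw [Derivation.leibniz, Derivation.leibniz_pow, e1]
    simp only [smul_eq_mul, nsmul_eq_mul]
    rcases n with _ | n
    · simp
    · simp only [Nat.add_sub_cancel, pow_succ]
      field_simp
      ring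
  rw [e]
  exact Set.add_mem_add (Set.div_mem_div ⟨_, ⟨n, rfl⟩, rfl⟩ ⟨n, rfl⟩)
    (Submodule.smul_mem _ _ (Submodule.mem_span_singleton_self _))

theorem main_L {L : Type*} [Field L] [Algebra ℂ L] {Γ : Type*}
    [LinearOrderedCommGroupWithZero Γ] (D : Derivation ℂ L L)
    (hD : ∀ f, D f = 0 → f ∈ Set.range (algebraMap ℂ L))
    (v : Valuation L Γ) (hv : ∀ c : ℂ, v (algebraMap ℂ L c) ≤ 1)
    (hvD : ∀ f, v (D f) ≤ v f) (d t : ℕ)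
    (α : Fin (d + 1) → L) (A : Fin (d + 1) → Polynomial L)
    (β : Fin (t + 1) → L) (B : Fin (t + 1) → Polynomial L)
    (hα0 : ∀ i, α i ≠ 0) (hA0 : ∀ i, A i ≠ 0) (hβ0 : ∀ j, β j ≠ 0)
    (hnd : ∀ i, i ≠ 0 → α 0 / α i ∉ Set.range (algebraMap ℂ L))
    (hβ1 : ∀ j, β j ∉ Set.range (algebraMap ℂ L))
    (hind : ∀ j, ∀ r s : ℤ, α 0 ^ r * β j ^ s ∈ Set.range (algebraMap ℂ L) → r = 0 ∧ s = 0)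
    (hmin : ∀ i, v (α i) ≤ v (α 0)) (G H : ℕ → L)
    (hG : ∀ n : ℕ, G n = ∑ i, (A i).eval (n : L) * α i ^ n)
    (hH : ∀ m : ℕ, H m = ∑ j, (B j).eval (m : L) * β j ^ m) :
    ∃ c₁ : ℕ, ∃ C : Γ, C ≠ 0 ∧ ∀ n m : ℕ, c₁ < max n m → v (G n) * C ≤ v (G n + H m) := by
  classical
  have : CharZero L := charZero_of_injective_algebraMap (algebraMap ℂ L).injective
  choose SA hSA hSA' using fun i => term_bdd D (A i) (α i) (hα0 i)
  choose SB hSB hSB' using fun j => term_bdd D (B j) (β j) (hβ0 j)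
  have hSAb := BddSet.iUnion hSA
  have hSBb := BddSet.iUnion hSB
  -- upper bound for `G n`
  have hGup : ∃ C : Γ, C ≠ 0 ∧ ∀ n, v (G n) ≤ C * v (α 0) ^ n := by
    obtain ⟨C, hC, h⟩ := (BddSet.iUnion (fun i => poly_bdd (A i))).val_upper v hv
    refine ⟨C, hC, fun n => ?_⟩
    rw [hG]
    refine v.map_sum_le fun i _ => ?_
    rw [map_mul, map_pow]
    have h1 := h ((A i).eval (n : L)) (Set.mem_iUnion.2 ⟨i, n, rfl⟩)
    gcongr
    exact hmin i
  obtain ⟨C₁, hC₁, hGup⟩ := hGup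
  -- large `n`
  have hbig : ∃ N : ℕ, ∃ K : ℕ, ∃ C : Γ, C ≠ 0 ∧ ∀ n m : ℕ, N ≤ n → K < max n m →
      v (G n) * C ≤ v (G n + H m) := by
    obtain ⟨T, hT, C, hC, hcore⟩ := core_lemma (ι := Fin (d + 1) ⊕ Fin (t + 1)) D hD v hv hvD
      (Fintype.card (Fin (d + 1) ⊕ Fin (t + 1))) _ (hSAb.union hSBb)
    obtain ⟨C₂, hC₂, hlow⟩ := (poly_bdd (A 0)).val_lower v hv
    -- bad sets
    have hbad0 : {n : ℕ | (A 0).eval (n : L) = 0}.Finite := by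
      refine Set.Finite.of_finite_image (f := fun n : ℕ => (n : L))
        (((A 0).roots.toFinset.finite_toSet).subset ?_) (Nat.cast_injective.injOn)
      rintro _ ⟨n, hn, rfl⟩
      simpa [hA0 0] using hn
    have hbad1 : ∀ i, i ≠ 0 → {n : ℕ | (α 0 / α i) ^ n ∈
        T * (Set.range (fun n : ℕ => (A i).eval (n : L)) /
          Set.range (fun n : ℕ => (A 0).eval (n : L)))}.Finite := fun i hi =>
      pow_finite (hT.mul ((poly_bdd _).div (poly_bdd _))) _ (hnd i hi)
    have hbad2 : ∀ j, {p : ℕ × ℕ | α 0 ^ p.1 / β j ^ p.2 ∈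
        T * (Set.range (fun n : ℕ => (B j).eval (n : L)) /
          Set.range (fun n : ℕ => (A 0).eval (n : L)))}.Finite := fun j =>
      pow_finite₂ (hT.mul ((poly_bdd _).div (poly_bdd _))) _ _ (hα0 0) (hβ0 j) (hind j)
    have hbad1' : (⋃ i : {i : Fin (d + 1) // i ≠ 0}, {n : ℕ | (α 0 / α i) ^ n ∈
        T * (Set.range (fun n : ℕ => (A i).eval (n : L)) /
          Set.range (fun n : ℕ => (A 0).eval (n : L)))}).Finite :=
      Set.finite_iUnion fun i => hbad1 i.1 i.2
    have hbad2' := Set.finite_iUnion hbad2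
    obtain ⟨N₀, hN₀⟩ := hbad0.bddAbove
    obtain ⟨N₁, hN₁⟩ := hbad1'.bddAbove
    obtain ⟨K, hK⟩ := hbad2'.bddAbove
    refine ⟨N₀ + N₁ + 1, max K.1 K.2, C * C₂ * C₁⁻¹,
      mul_ne_zero (mul_ne_zero hC hC₂) (inv_ne_zero hC₁), fun n m hn hnm => ?_⟩
    have hA0n : (A 0).eval (n : L) ≠ 0 := by
      intro h
      have := hN₀ h
      omega
    set u : Fin (d + 1) ⊕ Fin (t + 1) → L := Sum.elim (fun i => (A i).eval (n : L) * α i ^ n)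
      (fun j => (B j).eval (m : L) * β j ^ m) with hu
    set s := (Finset.univ.erase (Sum.inl 0)).filter (fun x => u x ≠ 0) with hs
    have hu0 : u (Sum.inl 0) ≠ 0 := mul_ne_zero hA0n (pow_ne_zero _ (hα0 0))
    have hlog : ∀ x, u x ≠ 0 → D (u x) / u x ∈ (⋃ i, SA i) ∪ ⋃ j, SB j := by
      rintro (i | j) hx
      · exact Or.inl (Set.mem_iUnion.2 ⟨i, hSA' i n hx⟩)
      · exact Or.inr (Set.mem_iUnion.2 ⟨j, hSB' j m hx⟩)
    have hsum : u (Sum.inl 0) + ∑ x ∈ s, u x = G n + H m := by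
      rw [hs, Finset.sum_filter_ne_zero, Finset.add_sum_erase _ _ (Finset.mem_univ _),
        Fintype.sum_sum_type, hG, hH]
      rfl
    rcases hcore s (u (Sum.inl 0)) u (Finset.card_le_univ _) hu0
      (fun x hx => (Finset.mem_filter.1 hx).2) (hlog _ hu0)
      (fun x hx => hlog x (Finset.mem_filter.1 hx).2) with ⟨x, hx, hxT⟩ | hle
    · exfalso
      have hx0 := (Finset.mem_filter.1 hx).2
      have hxne := Finset.ne_of_mem_erase (Finset.mem_filter.1 hx).1
      rcases x with i | j
      · have hi : i ≠ 0 := fun h => hxne (by rw [h])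
        have hAi : (A i).eval (n : L) ≠ 0 := left_ne_zero_of_mul hx0
        have hαi := hα0 i
        have hmem : n ∈ (⋃ i : {i : Fin (d + 1) // i ≠ 0}, {n : ℕ | (α 0 / α i) ^ n ∈
          T * (Set.range (fun n : ℕ => (A i).eval (n : L)) /
          Set.range (fun n : ℕ => (A 0).eval (n : L)))}) := by
          refine Set.mem_iUnion.2 ⟨⟨i, hi⟩, ?_⟩
          refine ⟨_, hxT, _, Set.div_mem_div ⟨n, rfl⟩ ⟨n, rfl⟩, ?_⟩
          simp only [hu, Sum.elim_inl, div_pow]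
          field_simp
        have := hN₁ hmem
        omega
      · have hBj : (B j).eval (m : L) ≠ 0 := left_ne_zero_of_mul hx0
        have hβj := hβ0 j
        have hmem : (n, m) ∈ ⋃ j, {p : ℕ × ℕ | α 0 ^ p.1 / β j ^ p.2 ∈
            T * (Set.range (fun n : ℕ => (B j).eval (n : L)) /
            Set.range (fun n : ℕ => (A 0).eval (n : L)))} := by
          refine Set.mem_iUnion.2 ⟨j, ?_⟩
          refine ⟨_, hxT, _, Set.div_mem_div ⟨m, rfl⟩ ⟨n, rfl⟩, ?_⟩
          simp only [hu, Sum.elim_inl, Sum.elim_inr]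
          field_simp
        have h1 := hK hmem
        have h2 : n ≤ K.1 := h1.1
        have h3 : m ≤ K.2 := h1.2
        omega
    · rw [hsum] at hle
      refine le_trans ?_ hle
      simp only [hu, Sum.elim_inl, map_mul, map_pow]
      have h1 := hlow _ ⟨n, rfl⟩ hA0n
      calc v (G n) * (C * C₂ * C₁⁻¹) ≤ (C₁ * v (α 0) ^ n) * (C * C₂ * C₁⁻¹) := by
            gcongr; exact hGup n
        _ = C * (C₂ * v (α 0) ^ n) := by field_simp
        _ ≤ _ := by gcongr
  obtain ⟨N, K, C, hC, hbig⟩ := hbig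
  -- fixed `n`
  have hfix : ∀ n, ∃ M : ℕ, ∃ C : Γ, C ≠ 0 ∧ ∀ m, M < m → v (G n) * C ≤ v (G n + H m) := by
    intro n
    by_cases hg : G n = 0
    · exact ⟨0, 1, one_ne_zero, fun m _ => by simp [hg]⟩
    obtain ⟨T, hT, C, hC, hcore⟩ := core_lemma (ι := Fin (t + 1)) D hD v hv hvD
      (Fintype.card (Fin (t + 1))) _
      ((BddSet.of_finite (Set.finite_singleton (D (G n) / G n))).union hSBb)
    have hbad := Set.finite_iUnion fun j => pow_finite ((hT.mul ((poly_bdd (B j)).div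
      (BddSet.of_finite (Set.finite_singleton (G n))))).inv) (β j) (hβ1 j)
    obtain ⟨M, hM⟩ := hbad.bddAbove
    refine ⟨M, C, hC, fun m hm => ?_⟩
    set u : Fin (t + 1) → L := fun j => (B j).eval (m : L) * β j ^ m with hu
    rcases hcore (Finset.univ.filter (fun x => u x ≠ 0)) (G n) u (Finset.card_le_univ _) hg
      (fun x hx => (Finset.mem_filter.1 hx).2) (Or.inl rfl)
      (fun x hx => Or.inr (Set.mem_iUnion.2 ⟨x, hSB' x m (Finset.mem_filter.1 hx).2⟩)) with
      ⟨j, hx, hxT⟩ | hle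
    · exfalso
      have hx0 := (Finset.mem_filter.1 hx).2
      have hBj : (B j).eval (m : L) ≠ 0 := left_ne_zero_of_mul hx0
      have hβj := hβ0 j
      have := hM (Set.mem_iUnion.2 ⟨j, by
        refine Set.mem_inv.2 ?_
        refine ⟨_, hxT, _, Set.div_mem_div ⟨m, rfl⟩ rfl, ?_⟩
        simp only [hu]
        field_simp⟩)
      omega
    · rw [Finset.sum_filter_ne_zero, ← hH] at hle
      rwa [mul_comm]
  have hfix' : ∀ N, ∃ M : ℕ, ∃ C : Γ, C ≠ 0 ∧ ∀ n m, n < N → M < m →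
      v (G n) * C ≤ v (G n + H m) := by
    intro N
    induction N with
    | zero => exact ⟨0, 1, one_ne_zero, fun n m hn => by omega⟩
    | succ N ih =>
      obtain ⟨M, C, hC, h⟩ := ih
      obtain ⟨M', C', hC', h'⟩ := hfix N
      refine ⟨max M M', min C C', ?_, fun n m hn hm => ?_⟩
      · rcases min_choice C C' with h | h <;> rw [h] <;> assumption
      rcases Nat.lt_succ_iff_lt_or_eq.1 hn with hn | rfl
      · refine le_trans ?_ (h n m hn (by omega))
        gcongr
        exact min_le_left _ _
      · refine le_trans ?_ (h' m (by omega))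
        gcongr
        exact min_le_right _ _
  obtain ⟨M, C', hC', hfix'⟩ := hfix' N
  refine ⟨max K (max N M), min C C', ?_, fun n m hnm => ?_⟩
  · rcases min_choice C C' with h | h <;> rw [h] <;> assumption
  by_cases hn : N ≤ n
  · refine le_trans ?_ (hbig n m hn (by omega))
    gcongr
    exact min_le_left _ _
  · refine le_trans ?_ (hfix' n m (by omega) (by omega))
    gcongr
    exact min_le_right _ _


theorem trdeg_le_one_of_functionField (F : Type*) [Field F] [Algebra ℂ F] [Algebra (RatFunc ℂ) F]
    [IsScalarTower ℂ (RatFunc ℂ) F] (hFF : FunctionField ℂ F) : Algebra.trdeg ℂ F = 1 := by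
  have h1 : Algebra.trdeg ℂ (RatFunc ℂ) = 1 := by
    have : Algebra.IsAlgebraic (Polynomial ℂ) (RatFunc ℂ) :=
      IsLocalization.isAlgebraic _ (nonZeroDivisors (Polynomial ℂ))
    rw [← trdeg_add_eq ℂ (Polynomial ℂ) (A := RatFunc ℂ), Polynomial.trdeg_of_isDomain,
      (trdeg_eq_zero_iff (R := Polynomial ℂ) (A := RatFunc ℂ)).2 this, add_zero]
  have : FiniteDimensional (RatFunc ℂ) F := hFF
  have h2 := lift_trdeg_add_eq ℂ (RatFunc ℂ) F
  rw [h1, (trdeg_eq_zero_iff (R := RatFunc ℂ) (A := F)).2 inferInstance] at h2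
  simpa using h2.symm

theorem wt_one_le {x : WithTop ℤ} (h : 0 < x) : 1 ≤ x := by
  induction x using WithTop.recTopCoe with
  | top => exact le_top
  | coe x =>
    have : (0 : ℤ) < x := by exact_mod_cast h
    exact_mod_cast this

theorem residue_exists_s1 {F : Type*} [Field F] [Algebra ℂ F] (htr : Algebra.trdeg ℂ F = 1)
    (w : AddValuation F (WithTop ℤ)) (hw : ∀ c : ℂ, c ≠ 0 → w (algebraMap ℂ F c) = 0)
    (π : F) (hπ : w π = 1) (f : F) (hf : 0 ≤ w f) : ∃ c : ℂ, 0 < w (f - algebraMap ℂ F c) := by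
  by_contra! hcon
  have hc0 : ∀ c : ℂ, 0 ≤ w (algebraMap ℂ F c) := by
    intro c
    by_cases hc : c = 0
    · simp [hc]
    · exact (hw c hc).ge
  have hunit : ∀ c : ℂ, w (f - algebraMap ℂ F c) = 0 := fun c =>
    le_antisymm (hcon c) (w.map_le_sub hf (hc0 c))
  have hms : ∀ m : Multiset ℂ, w (m.map (fun c => f - algebraMap ℂ F c)).prod = 0 := by
    intro m
    induction m using Multiset.induction with
    | empty => simp
    | cons a m ih => rw [Multiset.map_cons, Multiset.prod_cons, w.map_mul, ih, hunit, add_zero]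
  have hpoly : ∀ q : Polynomial ℂ, q ≠ 0 → w (Polynomial.aeval f q) = 0 := by
    intro q hq
    rw [(IsAlgClosed.splits q).eq_prod_roots, map_mul, map_multiset_prod, w.map_mul,
      Multiset.map_map]
    simp only [Function.comp_def, map_sub, Polynomial.aeval_X, Polynomial.aeval_C]
    rw [hms, hw _ (by simpa using hq), add_zero]
  have htrans : Transcendental ℂ f := by
    rintro ⟨q, hq, hq0⟩
    have := hpoly q hq
    rw [hq0, w.map_zero] at this
    exact absurd this (by simp)
  have hind : AlgebraicIndependent ℂ (fun _ : Unit => f) :=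
    algebraicIndependent_unique_type_iff.2 htrans
  have hbasis := hind.isTranscendenceBasis_of_lift_trdeg_le_of_finite (by simp [htr])
  have halg := hbasis.isAlgebraic
  obtain ⟨p, hp, hp0⟩ := halg.isAlgebraic π
  have hcoef : ∀ i, p.coeff i ≠ 0 → w (p.coeff i : F) = 0 := by
    intro i hi
    have hadj : Algebra.adjoin ℂ (Set.range fun _ : Unit => f) = (Polynomial.aeval f).range := by
      rw [Set.range_const, Algebra.adjoin_singleton_eq_range_aeval]
    have h1 : (p.coeff i : F) ∈ (Polynomial.aeval (R := ℂ) f).range := hadj ▸ (p.coeff i).2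
    obtain ⟨q, hq⟩ := h1
    have hq' : Polynomial.aeval f q = (p.coeff i : F) := hq
    rw [← hq']
    apply hpoly
    rintro rfl
    apply hi
    rw [map_zero] at hq'
    exact Subtype.ext hq'.symm
  rw [Polynomial.aeval_eq_sum_range' (n := p.natDegree + 1) (by omega)] at hp0
  set k := p.natTrailingDegree with hk
  have hkc : p.coeff k ≠ 0 := by simpa [hk] using hp
  have hkm : k ∈ Finset.range (p.natDegree + 1) := by
    have := Polynomial.natTrailingDegree_le_natDegree p
    simp; omega
  rw [← Finset.add_sum_erase _ _ hkm] at hp0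
  have hterm : ∀ i, p.coeff i ≠ 0 → w (p.coeff i • π ^ i) = (i : ℤ) := by
    intro i hi
    rw [Algebra.smul_def, w.map_mul, w.map_pow, hπ]
    have : w (algebraMap _ F (p.coeff i)) = 0 := hcoef i hi
    rw [this, zero_add]
    simp
  have hlt : ((k : ℤ) : WithTop ℤ) < w (∑ x ∈ (Finset.range (p.natDegree + 1)).erase k, p.coeff x • π ^ x) := by
    refine w.map_lt_sum (by simp) fun i hi => ?_
    by_cases hi0 : p.coeff i = 0
    · simp [hi0]
    · rw [hterm i hi0]
      have h1 : k ≤ i := Polynomial.natTrailingDegree_le_of_ne_zero hi0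
      have h2 : i ≠ k := Finset.ne_of_mem_erase hi
      exact_mod_cast lt_of_le_of_ne h1 (Ne.symm h2)
  have h1 := w.map_add_eq_of_lt_left (x := p.coeff k • π ^ k)
    (y := ∑ x ∈ (Finset.range (p.natDegree + 1)).erase k, p.coeff x • π ^ x) (by rw [hterm k hkc]; exact hlt)
  rw [hp0, hterm k hkc, w.map_zero] at h1
  exact absurd h1 (by simp)

/-- `s` is the power series expansion of `f` in terms of `π`. -/
def IsExp {F : Type*} [Field F] [Algebra ℂ F] (w : AddValuation F (WithTop ℤ)) (π f : F)
    (s : PowerSeries ℂ) : Prop :=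
  ∀ k : ℕ, ∃ p : Polynomial ℂ, PowerSeries.X ^ k ∣ s - (p : PowerSeries ℂ) ∧
    ((k : ℤ) : WithTop ℤ) ≤ w (f - Polynomial.aeval π p)

section
variable {F : Type*} [Field F] [Algebra ℂ F] {w : AddValuation F (WithTop ℤ)} {π : F}

theorem w_const
    (hw : ∀ c : ℂ, c ≠ 0 → w (algebraMap ℂ F c) = 0)
    (c : ℂ) : 0 ≤ w (algebraMap ℂ F c) := by
  by_cases hc : c = 0
  · simp [hc]
  · exact (hw c hc).ge

theorem w_aeval
    (hw : ∀ c : ℂ, c ≠ 0 → w (algebraMap ℂ F c) = 0) (hπ : w π = 1)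
    (p : Polynomial ℂ) : 0 ≤ w (Polynomial.aeval π p) := by
  induction p using Polynomial.induction_on' with
  | add p q hp hq => rw [map_add]; exact w.map_le_add hp hq
  | monomial n a =>
    rw [Polynomial.aeval_monomial, w.map_mul, w.map_pow, hπ]
    have := w_const hw a
    exact add_nonneg this (by simp)

theorem w_aeval_zero
    (hw : ∀ c : ℂ, c ≠ 0 → w (algebraMap ℂ F c) = 0) (hπ : w π = 1)
    (p : Polynomial ℂ) (hp : p.coeff 0 ≠ 0) : w (Polynomial.aeval π p) = 0 := by
  rw [← Polynomial.X_mul_divX_add p, map_add, map_mul, Polynomial.aeval_X, Polynomial.aeval_C]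
  rw [w.map_add_eq_of_lt_right, hw _ hp]
  rw [hw _ hp, w.map_mul, hπ]
  have := w_aeval hw hπ p.divX
  calc (0 : WithTop ℤ) < 1 := by simp
    _ = 1 + 0 := by simp
    _ ≤ _ := by gcongr

theorem w_exp
    (hw : ∀ c : ℂ, c ≠ 0 → w (algebraMap ℂ F c) = 0) (hπ : w π = 1)
    {f : F} {s : PowerSeries ℂ} (h : IsExp w π f s) (n : ℕ)
    (h0 : ∀ i < n, PowerSeries.coeff i s = 0) (hn : PowerSeries.coeff n s ≠ 0) :
    w f = (n : ℤ) := by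
  obtain ⟨p, hp, hpw⟩ := h (n + 1)
  rw [PowerSeries.X_pow_dvd_iff] at hp
  have hc : ∀ i ≤ n, p.coeff i = PowerSeries.coeff i s := by
    intro i hi
    have := hp i (by omega)
    rw [map_sub, Polynomial.coeff_coe, sub_eq_zero] at this
    exact this.symm
  have hd : Polynomial.X ^ n ∣ p := by
    rw [Polynomial.X_pow_dvd_iff]
    intro i hi
    rw [hc i hi.le, h0 i hi]
  obtain ⟨q, rfl⟩ := hd
  have hq : q.coeff 0 ≠ 0 := by
    have := hc n le_rfl
    have e := Polynomial.coeff_X_pow_mul q n 0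
    rw [zero_add] at e
    rw [e] at this
    rwa [this]
  have hwp : w (Polynomial.aeval π (Polynomial.X ^ n * q)) = (n : ℤ) := by
    rw [map_mul, map_pow, Polynomial.aeval_X, w.map_mul, w_aeval_zero hw hπ q hq, w.map_pow, hπ]
    simp
  rw [← hwp]
  apply w.map_eq_of_lt_sub
  rw [hwp]
  refine lt_of_lt_of_le ?_ hpw
  exact_mod_cast Nat.lt_succ_self n

theorem exp_zero
    (hw : ∀ c : ℂ, c ≠ 0 → w (algebraMap ℂ F c) = 0) (hπ : w π = 1)
    {s : PowerSeries ℂ} (h : IsExp w π 0 s) : s = 0 := by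
  by_contra hs
  have hex : ∃ n, PowerSeries.coeff n s ≠ 0 := by
    by_contra! hcon
    exact hs (PowerSeries.ext (by simpa using hcon))
  classical
  have := w_exp hw hπ h (Nat.find hex) (fun i hi => not_not.1 (Nat.find_min hex hi))
    (Nat.find_spec hex)
  rw [w.map_zero] at this
  exact absurd this (by simp)

theorem IsExp.add {f g : F} {s t : PowerSeries ℂ} (hf : IsExp w π f s) (hg : IsExp w π g t) :
    IsExp w π (f + g) (s + t) := by
  intro k
  obtain ⟨p, hp, hp'⟩ := hf k
  obtain ⟨q, hq, hq'⟩ := hg k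
  refine ⟨p + q, ?_, ?_⟩
  · rw [Polynomial.coe_add, add_sub_add_comm]; exact dvd_add hp hq
  · rw [map_add, add_sub_add_comm]; exact w.map_le_add hp' hq'

theorem IsExp.neg {f : F} {s : PowerSeries ℂ} (hf : IsExp w π f s) :
    IsExp w π (-f) (-s) := by
  intro k
  obtain ⟨p, hp, hp'⟩ := hf k
  refine ⟨-p, ?_, ?_⟩
  · rw [Polynomial.coe_neg, neg_sub_neg, dvd_sub_comm]; exact hp
  · rw [map_neg, neg_sub_neg, w.map_sub_swap]; exact hp'

theorem exp_unique
    (hw : ∀ c : ℂ, c ≠ 0 → w (algebraMap ℂ F c) = 0) (hπ : w π = 1)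
    {f : F} {s t : PowerSeries ℂ} (hf : IsExp w π f s) (hg : IsExp w π f t) :
    s = t := by
  have := hf.add hg.neg
  rw [add_neg_cancel] at this
  have := exp_zero hw hπ this
  rwa [← sub_eq_add_neg, sub_eq_zero] at this

theorem exp_const (c : ℂ) : IsExp w π (algebraMap ℂ F c) (PowerSeries.C c) :=
  fun k => ⟨Polynomial.C c, by simp, by simp⟩

theorem IsExp.mul
    (hw : ∀ c : ℂ, c ≠ 0 → w (algebraMap ℂ F c) = 0) (hπ : w π = 1)
    {f g : F} {s t : PowerSeries ℂ} (hf : IsExp w π f s) (hg : IsExp w π g t)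
    (hf0 : 0 ≤ w f) :
    IsExp w π (f * g) (s * t) := by
  intro k
  obtain ⟨p, hp, hp'⟩ := hf k
  obtain ⟨q, hq, hq'⟩ := hg k
  refine ⟨p * q, ?_, ?_⟩
  · have : s * t - ((p * q : Polynomial ℂ) : PowerSeries ℂ) =
        s * (t - (q : PowerSeries ℂ)) + (s - (p : PowerSeries ℂ)) * q := by
      rw [Polynomial.coe_mul]; ring
    rw [this]; exact dvd_add (hq.mul_left _) (hp.mul_right _)
  · have : f * g - Polynomial.aeval π (p * q) =
        f * (g - Polynomial.aeval π q) + Polynomial.aeval π q * (f - Polynomial.aeval π p) := by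
      rw [map_mul]; ring
    rw [this]
    apply w.map_le_add
    · rw [w.map_mul]; exact le_add_of_nonneg_of_le hf0 hq'
    · rw [w.map_mul]; exact le_add_of_nonneg_of_le (w_aeval hw hπ q) hp'

theorem exp_exists
    (hw : ∀ c : ℂ, c ≠ 0 → w (algebraMap ℂ F c) = 0) (hπ : w π = 1)
    (hres : ∀ f : F, 0 ≤ w f → ∃ c : ℂ, 0 < w (f - algebraMap ℂ F c)) (f : F)
    (hf : 0 ≤ w f) : ∃ s, IsExp w π f s := by
  have : ∀ f : F, ∃ c : ℂ, 0 ≤ w f → 0 < w (f - algebraMap ℂ F c) := by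
    intro f
    by_cases h : 0 ≤ w f
    · obtain ⟨c, hc⟩ := hres f h
      exact ⟨c, fun _ => hc⟩
    · exact ⟨0, fun h' => absurd h' h⟩
  choose c hc using this
  have hπ0 : π ≠ 0 := by
    rintro rfl
    rw [w.map_zero] at hπ
    exact absurd hπ (by simp)
  set T : F → F := fun f => (f - algebraMap ℂ F (c f)) / π with hT
  have hTf : ∀ f, f = algebraMap ℂ F (c f) + π * T f := by
    intro f
    simp only [hT]
    field_simp
    ring
  have hT0 : ∀ f, 0 ≤ w f → 0 ≤ w (T f) := by
    intro f hf
    have h1 := wt_one_le (hc f hf)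
    have h2 : f - algebraMap ℂ F (c f) = π * T f := by
      simp only [hT]
      field_simp
    rw [h2, w.map_mul, hπ] at h1
    have h3 : (1 : WithTop ℤ) + 0 ≤ 1 + w (T f) := by simpa using h1
    exact (WithTop.add_le_add_iff_left (by simp)).1 h3
  have hTk : ∀ k, 0 ≤ w (T^[k] f) := by
    intro k
    induction k with
    | zero => exact hf
    | succ k ih => rw [Function.iterate_succ_apply']; exact hT0 _ ih
  have hexp : ∀ k, f = (∑ i ∈ Finset.range k, algebraMap ℂ F (c (T^[i] f)) * π ^ i) +
      π ^ k * T^[k] f := by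
    intro k
    induction k with
    | zero => simp
    | succ k ih =>
      rw [Finset.sum_range_succ, Function.iterate_succ_apply']
      conv_lhs => rw [ih, hTf (T^[k] f)]
      ring
  refine ⟨PowerSeries.mk fun k => c (T^[k] f), fun k => ?_⟩
  refine ⟨∑ i ∈ Finset.range k, Polynomial.monomial i (c (T^[i] f)), ?_, ?_⟩
  · rw [PowerSeries.X_pow_dvd_iff]
    intro m hm
    simp only [map_sub, PowerSeries.coeff_mk, Polynomial.coeff_coe, Polynomial.finsetSum_coeff,
      Polynomial.coeff_monomial]
    simp [hm]
  · have : f - Polynomial.aeval π (∑ i ∈ Finset.range k, Polynomial.monomial i (c (T^[i] f))) =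
        π ^ k * T^[k] f := by
      conv_lhs => enter [1]; rw [hexp k]
      simp [Polynomial.aeval_monomial]
    rw [this, w.map_mul, w.map_pow, hπ]
    have := hTk k
    have h2 : (k • (1 : WithTop ℤ)) = ((k : ℤ) : WithTop ℤ) := by simp
    rw [h2]
    exact le_add_of_nonneg_right this
end


/-- The coefficientwise algebra structure (preferred over the power series one). -/
noncomputable instance hahnAlg : Algebra ℂ (HahnSeries ℤ ℂ) := HahnSeries.instAlgebra

theorem exists_laurent {F : Type*} [Field F] [Algebra ℂ F] (w : AddValuation F (WithTop ℤ))
    (hw : ∀ c : ℂ, c ≠ 0 → w (algebraMap ℂ F c) = 0) (π : F) (hπ : w π = 1)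
    (hres : ∀ f : F, 0 ≤ w f → ∃ c : ℂ, 0 < w (f - algebraMap ℂ F c)) :
    ∃ φ : F →+* HahnSeries ℤ ℂ, (∀ c, φ (algebraMap ℂ F c) = HahnSeries.C c) ∧
      ∀ f, (φ f).orderTop = w f := by
  set O := (AddValuation.toValuation w).valuationSubring with hO
  have hmem : ∀ f : F, f ∈ O ↔ 0 ≤ w f := fun f => Iff.rfl
  have hex : ∀ f : O, ∃ s, IsExp w π (f : F) s := fun f => exp_exists hw hπ hres f ((hmem f).1 f.2)
  choose e he using hex
  let ψ : O →+* PowerSeries ℂ :=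
    { toFun := e
      map_one' := by
        refine exp_unique hw hπ (he 1) ?_
        have := exp_const (w := w) (π := π) 1
        simpa using this
      map_zero' := by
        refine exp_unique hw hπ (he 0) ?_
        have := exp_const (w := w) (π := π) 0
        simpa using this
      map_add' := fun f g => exp_unique hw hπ (he (f + g)) ((he f).add (he g))
      map_mul' := fun f g => exp_unique hw hπ (he (f * g))
        (IsExp.mul hw hπ (he f) (he g) ((hmem f).1 f.2)) }
  have hψ : ∀ f : O, IsExp w π (f : F) (ψ f) := he
  have hord : ∀ f : O, ψ f ≠ 0 → (HahnSeries.ofPowerSeries ℤ ℂ (ψ f)).orderTop = w f := by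
    intro f hf
    have hex : ∃ n, PowerSeries.coeff n (ψ f) ≠ 0 := by
      by_contra! hcon
      exact hf (PowerSeries.ext (by simpa using hcon))
    classical
    have h1 := w_exp hw hπ (hψ f) (Nat.find hex)
      (fun i hi => not_not.1 (Nat.find_min hex hi)) (Nat.find_spec hex)
    rw [h1]
    refine HahnSeries.orderTop_eq_of_le ?_ ?_
    · rw [HahnSeries.mem_support]
      have := LaurentSeries.coeff_coe_powerSeries (ψ f) (Nat.find hex)
      rw [this]
      exact Nat.find_spec hex
    · intro g hg
      rw [HahnSeries.mem_support, PowerSeries.coeff_coe] at hg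
      split_ifs at hg with h
      · exact absurd rfl hg
      · have := Nat.find_min' hex hg
        omega
  have hinj : Function.Injective ψ := by
    rw [injective_iff_map_eq_zero]
    intro f hf
    by_contra hf0
    have hf0' : (f : F) ≠ 0 := fun h => hf0 (Subtype.ext h)
    obtain ⟨k, hk⟩ := WithTop.ne_top_iff_exists.1 (mt w.top_iff.1 hf0')
    have hk0 : 0 ≤ k := by
      have := (hmem f).1 f.2
      rw [← hk] at this
      exact_mod_cast this
    obtain ⟨n, rfl⟩ := Int.eq_ofNat_of_zero_le hk0
    obtain ⟨p, hp, hpw⟩ := hψ f (n + 1)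
    rw [hf, zero_sub, dvd_neg, ← Polynomial.coe_X, ← Polynomial.coe_pow] at hp
    have hd : Polynomial.X ^ (n + 1) ∣ p := by
      rw [Polynomial.X_pow_dvd_iff]
      rw [Polynomial.coe_pow, Polynomial.coe_X, PowerSeries.X_pow_dvd_iff] at hp
      intro i hi
      simpa using hp i hi
    obtain ⟨q, rfl⟩ := hd
    have hwq : (((n + 1 : ℕ) : ℤ) : WithTop ℤ) ≤
        w (Polynomial.aeval π (Polynomial.X ^ (n + 1) * q)) := by
      rw [map_mul, map_pow, Polynomial.aeval_X, w.map_mul, w.map_pow, hπ]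
      have h2 : ((n + 1) • (1 : WithTop ℤ)) = (((n + 1 : ℕ) : ℤ) : WithTop ℤ) := by simp
      rw [h2]
      exact le_add_of_nonneg_right (w_aeval hw hπ q)
    have h3 := w.map_le_add hpw hwq
    rw [sub_add_cancel, ← hk] at h3
    have h4 : ((n + 1 : ℕ) : ℤ) ≤ (n : ℤ) := by exact_mod_cast h3
    push_cast at h4
    omega
  have hord' : ∀ f : O, (HahnSeries.ofPowerSeries ℤ ℂ (ψ f)).orderTop = w f := by
    intro f
    by_cases hf : ψ f = 0
    · have : f = 0 := hinj (by rw [hf, map_zero])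
      subst this
      simp
    · exact hord f hf
  have hinj' : Function.Injective ((HahnSeries.ofPowerSeries ℤ ℂ).comp ψ) :=
    HahnSeries.ofPowerSeries_injective.comp hinj
  refine ⟨IsFractionRing.lift hinj', ?_, ?_⟩
  · intro c
    have h : algebraMap ℂ F c ∈ O := w_const hw c
    have h1 := IsFractionRing.lift_algebraMap hinj' (⟨_, h⟩ : O) (K := F)
    have h2 : ψ ⟨_, h⟩ = PowerSeries.C c := exp_unique hw hπ (hψ _) (exp_const c)
    rw [RingHom.comp_apply, h2, HahnSeries.ofPowerSeries_C] at h1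
    exact h1
  · have hpos : ∀ f : F, 0 ≤ w f → (IsFractionRing.lift hinj' f).orderTop = w f := by
      intro f hf
      have h1 := IsFractionRing.lift_algebraMap hinj' (⟨f, hf⟩ : O) (K := F)
      rw [← hord' ⟨f, hf⟩, ← RingHom.comp_apply, ← h1]
      rfl
    intro f
    rcases le_total 0 (w f) with hf | hf
    · exact hpos f hf
    · by_cases hf0 : f = 0
      · simp [hf0]
      have h0 : w f + w f⁻¹ = 0 := by rw [← w.map_mul, mul_inv_cancel₀ hf0, w.map_one]
      have hi : 0 ≤ w f⁻¹ := by
        rw [← h0]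
        exact add_le_of_nonpos_left hf
      have h1 := hpos _ hi
      have h2 : (IsFractionRing.lift hinj' f).orderTop + (IsFractionRing.lift hinj' f⁻¹).orderTop
          = 0 := by
        have := (HahnSeries.addVal ℤ ℂ).map_mul (IsFractionRing.lift hinj' f)
          (IsFractionRing.lift hinj' f⁻¹)
        simp only [HahnSeries.addVal_apply] at this
        rw [← this, ← map_mul, mul_inv_cancel₀ hf0, map_one, HahnSeries.orderTop_one]
      rw [h1, ← h0] at h2
      refine (WithTop.add_right_inj ?_).1 h2
      exact mt w.top_iff.1 (inv_ne_zero hf0)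

/-- The Euler derivation on Laurent series. -/
noncomputable def thetaFun (f : HahnSeries ℤ ℂ) : HahnSeries ℤ ℂ where
  coeff n := n * f.coeff n
  isPWO_support' := f.isPWO_support.mono (by
    intro n hn
    rw [Function.mem_support] at hn
    exact right_ne_zero_of_mul hn)

theorem thetaFun_support (f : HahnSeries ℤ ℂ) : (thetaFun f).support ⊆ f.support := by
  intro n hn
  exact right_ne_zero_of_mul (a := (n : ℂ)) hn

/-- The Euler derivation on Laurent series. -/
noncomputable def theta : Derivation ℂ (HahnSeries ℤ ℂ) (HahnSeries ℤ ℂ) :=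
  Derivation.mk'
    { toFun := thetaFun
      map_add' := by
        intro f g
        ext n
        simp [thetaFun, mul_add]
      map_smul' := by
        intro c f
        ext n
        simp [thetaFun]
        ring }
    (by
      intro f g
      ext n
      change (n : ℂ) * (f * g).coeff n = (f * thetaFun g + g * thetaFun f).coeff n
      rw [HahnSeries.coeff_add, mul_comm g, HahnSeries.coeff_mul,
        HahnSeries.coeff_mul_right' g.isPWO_support (thetaFun_support g),
        HahnSeries.coeff_mul_left' f.isPWO_support (thetaFun_support f), Finset.mul_sum,
        ← Finset.sum_add_distrib]
      refine Finset.sum_congr rfl fun ij hij => ?_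
      have h : ij.1 + ij.2 = n := (Finset.mem_addAntidiagonal.1 hij).2.2
      rw [← h]
      simp only [thetaFun]
      push_cast
      ring)

theorem theta_coeff (f : HahnSeries ℤ ℂ) (n : ℤ) : (theta f).coeff n = n * f.coeff n := rfl

theorem theta_const (f : HahnSeries ℤ ℂ) (h : theta f = 0) :
    f = HahnSeries.C (f.coeff 0) := by
  ext n
  by_cases hn : n = 0
  · subst hn; simp [HahnSeries.C_apply]
  · have h1 := theta_coeff f n
    rw [h, HahnSeries.coeff_zero] at h1
    have h2 : f.coeff n = 0 := by
      rcases mul_eq_zero.1 h1.symm with h3 | h3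
      · exact absurd (by exact_mod_cast h3) hn
      · exact h3
    rw [h2, HahnSeries.C_apply, HahnSeries.coeff_single_of_ne hn]

theorem theta_orderTop (f : HahnSeries ℤ ℂ) : f.orderTop ≤ (theta f).orderTop := by
  rw [HahnSeries.le_orderTop_iff_forall]
  intro j hj
  rw [theta_coeff, HahnSeries.coeff_eq_zero_of_lt_orderTop hj, mul_zero]

end Aux

theorem stmt_1
    (F : Type*) [Field F] [Algebra ℂ F] [Algebra (RatFunc ℂ) F]
    [IsScalarTower ℂ (RatFunc ℂ) F] (hFF : FunctionField ℂ F)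
    (d t : ℕ)
    -- the data of the two linear recurrence sequences
    (α : Fin (d + 1) → F) (A : Fin (d + 1) → Polynomial F)
    (β : Fin (t + 1) → F) (B : Fin (t + 1) → Polynomial F)
    (hα0 : ∀ i, α i ≠ 0) (hA0 : ∀ i, A i ≠ 0)
    (hβ0 : ∀ j, β j ≠ 0) (hB0 : ∀ j, B j ≠ 0)
    (hαinj : Function.Injective α) (hβinj : Function.Injective β)
    -- non-degeneracy
    (hGnd : ∀ i j, i ≠ j → ¬ IsConst F (α i / α j))
    (hHnd : ∀ i j, i ≠ j → ¬ IsConst F (β i / β j))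
    -- no `αᵢ` and no `βⱼ` lies in `ℂ`
    (hα1 : ∀ i, ¬ IsConst F (α i)) (hβ1 : ∀ j, ¬ IsConst F (β j))
    -- `(α₁, βⱼ)` multiplicatively independent for all `j`
    (hindep : ∀ j, MultIndep F (α 0) (β j))
    -- a valuation `μ` with `μ(α₁) ≤ μ(αᵢ)` for all `i`
    (μ : FFValuation F)
    (hμmin : ∀ i, μ.v (α 0) ≤ μ.v (α i))
    (a b : F) (ha : a ≠ 0) (hb : b ≠ 0)
    (G H : ℕ → F)
    (hG : ∀ n : ℕ, G n = ∑ i, (A i).eval (n : F) * α i ^ n)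
    (hH : ∀ m : ℕ, H m = ∑ j, (B j).eval (m : F) * β j ^ m) :
    ∃ c₁ : ℕ, ∃ C' : ℤ, ∀ n m : ℕ, c₁ < max n m →
      μ.v (a * G n - b * H m) ≤ μ.v (G n) + (C' : WithTop ℤ) := by
  have hv1 : μ.v 1 = 0 := by
    have := μ.v_const 1 one_ne_zero
    rwa [map_one] at this
  let w : AddValuation F (WithTop ℤ) := AddValuation.of μ.v μ.v_zero hv1 μ.v_add μ.v_mul
  have hwv : ∀ f, w f = μ.v f := fun f => rfl
  obtain ⟨π, hπ⟩ := μ.v_exists_one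
  have htr := trdeg_le_one_of_functionField F hFF
  obtain ⟨φ, hφC, hφo⟩ := exists_laurent w μ.v_const π hπ
    (residue_exists_s1 htr w μ.v_const π hπ)
  have halg : ∀ c : ℂ, algebraMap ℂ (HahnSeries ℤ ℂ) c = HahnSeries.C c := fun c => rfl
  have hpull : ∀ f : F, φ f ∈ Set.range (algebraMap ℂ (HahnSeries ℤ ℂ)) → IsConst F f := by
    rintro f ⟨c, hc⟩
    refine ⟨c, φ.injective ?_⟩
    rw [hφC, ← hc, halg]
  set v := AddValuation.toValuation (HahnSeries.addVal ℤ ℂ) with hv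
  have hle : ∀ x y : HahnSeries ℤ ℂ, v x ≤ v y ↔ y.orderTop ≤ x.orderTop := fun x y => Iff.rfl
  obtain ⟨c₁, C, hC, hmain⟩ := main_L theta (fun f hf => ⟨f.coeff 0, (theta_const f hf).symm⟩) v
    (by
      intro c
      rw [← v.map_one, hle, halg, HahnSeries.orderTop_one, HahnSeries.C_apply]
      exact HahnSeries.orderTop_single_le)
    (fun f => theta_orderTop f) d t (fun i => φ (α i))
    (fun i => Polynomial.C (φ a) * (A i).map φ) (fun j => φ (β j))
    (fun j => Polynomial.C (-φ b) * (B j).map φ)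
    (by simpa using hα0)
    (by
      intro i
      refine mul_ne_zero (by simpa using ha) ?_
      exact (Polynomial.map_ne_zero_iff φ.injective).2 (hA0 i))
    (by simpa using hβ0)
    (by
      intro i hi h
      rw [← map_div₀] at h
      exact hGnd 0 i hi.symm (hpull _ h))
    (fun j h => hβ1 j (hpull _ h))
    (by
      intro j r s h
      rw [← map_zpow₀, ← map_zpow₀, ← map_mul] at h
      exact hindep j r s (hpull _ h))
    (by
      intro i
      rw [hle, hφo, hφo]
      exact hμmin i)
    (fun n => φ (a * G n)) (fun m => φ (-(b * H m)))
    (by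
      intro n
      simp only [hG, Finset.mul_sum, map_sum, map_mul, map_pow, Polynomial.eval_mul,
        Polynomial.eval_C, mul_assoc]
      refine Finset.sum_congr rfl fun i _ => ?_
      rw [← map_natCast φ n, Polynomial.eval_map_apply])
    (by
      intro n
      have e : -(b * H n) = ∑ j, -b * ((B j).eval (n : F) * β j ^ n) := by
        rw [hH, ← neg_mul, Finset.mul_sum]
      rw [e, map_sum]
      refine Finset.sum_congr rfl fun i _ => ?_
      rw [← map_natCast φ n, Polynomial.eval_mul, Polynomial.eval_C, Polynomial.eval_map_apply,
        map_mul, map_mul, map_pow, map_neg, mul_assoc])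
  obtain ⟨k, hk⟩ : ∃ k : ℤ, C = Multiplicative.ofAdd (OrderDual.toDual (k : WithTop ℤ)) := by
    have : (OrderDual.ofDual (Multiplicative.toAdd C)) ≠ ⊤ := fun h => hC h
    obtain ⟨k, hk⟩ := WithTop.ne_top_iff_exists.1 this
    exact ⟨k, by rw [hk]; rfl⟩
  obtain ⟨l, hl⟩ := WithTop.ne_top_iff_exists.1 (μ.v_ne_top a ha)
  refine ⟨c₁, l + k, fun n m hnm => ?_⟩
  have h := hmain n m hnm
  rw [← map_add, ← sub_eq_add_neg] at h
  have h2 : (φ (a * G n - b * H m)).orderTop ≤ (φ (a * G n)).orderTop + (k : WithTop ℤ) := by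
    rw [hk] at h
    exact h
  rw [hφo, hφo, hwv, hwv, μ.v_mul, ← hl] at h2
  refine h2.trans (le_of_eq ?_)
  push_cast
  rw [← add_assoc, add_comm (l : WithTop ℤ)]
end

section
/- Let $G_n = a_1(n)\alpha_1^n + \cdots + a_d(n)\alpha_d^n$ and $H_m = b_1(m)\beta_1^m + \cdots + b_t(m)\beta_t^m$ be two non-degenerate linear recurrence sequences of polynomials in $\mathbb{C}[x]$ whose characteristic roots $\alpha_i, \beta_j$ are polynomials in $\mathbb{C}[x]$ as well. Assume that $\alpha_1 \notin \mathbb{C}$, that for every $j \in \{1,\ldots,t\}$ the pair $(\alpha_1, \beta_j)$ is multiplicatively independent, and that $\deg \alpha_1 \ge \deg \alpha_i$ for all $i \in \{1,\ldots,d\}$. Fix nonzero $a, b \in \mathbb{C}[x]$. Then there exist effectively computable constants $c_0$ and $C$, independent of $n$ and $m$, such that for all pairs $(n,m)$ of non-negative integers with $\min\{n,m\} > c_0$ one has $\deg(a G_n - b H_m) \ge \deg G_n - C$. -/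
/-!
STATEMENT 2: The corollary of Theorem 1 for linear recurrence sequences of
polynomials in `ℂ[x]` whose characteristic roots are polynomials as well:
`deg (a Gₙ - b Hₘ) ≥ deg Gₙ - C` for `min {n, m} > c₀`
(with the convention `deg 0 = -∞`, formalized via `Polynomial.degree` in
`WithBot ℕ` and the equivalent inequality `deg Gₙ ≤ deg (a Gₙ - b Hₘ) + C`).
-/

/-- A rational function is constant, i.e. lies in `ℂ`. -/
def RatIsConst (f : RatFunc ℂ) : Prop :=
  f ∈ Set.range (RatFunc.C : ℂ →+* RatFunc ℂ)

/-- Two polynomials `p, q ∈ ℂ[x]`, viewed in `ℂ(x)`, are multiplicatively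
independent: `p^r q^s ∈ ℂ` forces `r = s = 0`. -/
def PolyMultIndep (p q : Polynomial ℂ) : Prop :=
  ∀ r s : ℤ,
    RatIsConst ((algebraMap (Polynomial ℂ) (RatFunc ℂ) p) ^ r *
      (algebraMap (Polynomial ℂ) (RatFunc ℂ) q) ^ s) → r = 0 ∧ s = 0

open Polynomial in
theorem aux_prop (u v : ℂ[X]) (hu : u ≠ 0) (h : v * derivative u = u * derivative v) :
    ∃ c : ℂ, v = C c * u := by
  by_contra hc
  push Not at hc
  -- choose c to cancel the top coefficient
  set w : ℂ[X] := v - C (v.coeff u.natDegree / u.leadingCoeff) * u with hw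
  have hlc : u.leadingCoeff ≠ 0 := leadingCoeff_ne_zero.mpr hu
  have hw0 : w ≠ 0 := fun h0 => hc _ (sub_eq_zero.mp h0)
  have hcoef : w.coeff u.natDegree = 0 := by
    rw [hw, coeff_sub, coeff_C_mul, coeff_natDegree]
    field_simp
    ring
  have hne : w.natDegree ≠ u.natDegree := by
    intro he
    rw [← he, coeff_natDegree] at hcoef
    exact hw0 (leadingCoeff_eq_zero.mp hcoef)
  have hrel : w * derivative u = u * derivative w := by
    rw [hw]; simp only [derivative_sub, derivative_mul, derivative_C]
    linear_combination h
  -- compare coefficients via X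
  have h2 : w * (X * derivative u) = u * (X * derivative w) := by linear_combination X * hrel
  have hd : ∀ p : ℂ[X], (X * derivative p).natDegree ≤ p.natDegree ∧
      (X * derivative p).coeff p.natDegree = p.natDegree * p.leadingCoeff := by
    intro p
    have hco : ∀ k, (X * derivative p).coeff k = k * p.coeff k := by
      intro k
      cases k with
      | zero => simp
      | succ k => rw [coeff_X_mul, coeff_derivative]; push_cast; ring
    constructor
    · rw [natDegree_le_iff_coeff_eq_zero]
      intro k hk
      rw [hco, coeff_eq_zero_of_natDegree_lt hk, mul_zero]
    · rw [hco, coeff_natDegree]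
  have h3 := congrArg (fun p => p.coeff (w.natDegree + u.natDegree)) h2
  rw [coeff_mul_add_eq_of_natDegree_le le_rfl (hd u).1, add_comm,
    coeff_mul_add_eq_of_natDegree_le le_rfl (hd w).1, (hd u).2, (hd w).2, coeff_natDegree,
    coeff_natDegree] at h3
  have hwl : w.leadingCoeff ≠ 0 := leadingCoeff_ne_zero.mpr hw0
  have : ((w.natDegree : ℂ) - u.natDegree) * (w.leadingCoeff * u.leadingCoeff) = 0 := by
    linear_combination -h3
  rcases mul_eq_zero.mp this with h4 | h4
  · exact hne (by exact_mod_cast sub_eq_zero.mp h4)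
  · exact mul_ne_zero hwl hlc h4

open Polynomial in
theorem aux_dep {ι : Type*} [DecidableEq ι] (f : ι → ℂ[X]) : ∀ (r : ℕ) (s : Finset ι) (v : ι → ℂ[X]),
    s.card = r → (∃ i ∈ s, v i ≠ 0) →
    (∀ j < r, ∑ i ∈ s, v i * derivative^[j] (f i) = 0) →
    ∃ c : ι → ℂ, (∃ i ∈ s, c i ≠ 0) ∧ ∑ i ∈ s, C (c i) * f i = 0 := by
  intro r
  induction r with
  | zero =>
    intro s v hs ⟨i, hi, _⟩
    rw [Finset.card_eq_zero] at hs
    simp [hs] at hi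
  | succ r ih =>
    intro s v hs ⟨i₀, hi₀, hv⟩ hrel
    by_cases hw : ∃ i ∈ s, v i * derivative (v i₀) - v i₀ * derivative (v i) ≠ 0
    · obtain ⟨i, hi, hwi⟩ := hw
      have hii : i ≠ i₀ := by
        rintro rfl
        exact hwi (by ring)
      obtain ⟨c, ⟨l, hl, hcl⟩, hc⟩ := ih (s.erase i₀)
        (fun i => v i * derivative (v i₀) - v i₀ * derivative (v i))
        (by rw [Finset.card_erase_of_mem hi₀, hs]; rfl)
        ⟨i, Finset.mem_erase.mpr ⟨hii, hi⟩, hwi⟩ (by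
          intro j hj
          have h1 := hrel j (by omega)
          have h2 := hrel (j+1) (by omega)
          have h3 := congrArg derivative h1
          rw [derivative_sum] at h3
          simp only [derivative_mul, derivative_zero, ← Function.iterate_succ_apply' (f := (derivative : ℂ[X] → ℂ[X])),
            Finset.sum_add_distrib] at h3
          rw [h2, add_zero] at h3
          have h4 : ∑ i ∈ s, (v i * derivative (v i₀) - v i₀ * derivative (v i)) * derivative^[j] (f i) = 0 := by
            have : ∑ i ∈ s, (v i * derivative (v i₀) - v i₀ * derivative (v i)) * derivative^[j] (f i)
              = derivative (v i₀) * ∑ i ∈ s, v i * derivative^[j] (f i)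
                - v i₀ * ∑ i ∈ s, derivative (v i) * derivative^[j] (f i) := by
              rw [Finset.mul_sum, Finset.mul_sum, ← Finset.sum_sub_distrib]
              exact Finset.sum_congr rfl fun i _ => by ring
            rw [this, h1, h3]; ring
          rw [← Finset.add_sum_erase _ _ hi₀] at h4
          rw [← h4]; ring)
      refine ⟨Function.update c i₀ 0, ⟨l, Finset.mem_of_mem_erase hl, ?_⟩, ?_⟩
      · rwa [Function.update_of_ne (Finset.ne_of_mem_erase hl)]
      · rw [← Finset.add_sum_erase _ _ hi₀, Function.update_self, ← hc]
        simp only [map_zero, zero_mul, zero_add]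
        exact Finset.sum_congr rfl fun i hi => by
          rw [Function.update_of_ne (Finset.ne_of_mem_erase hi)]
    · push Not at hw
      have : ∀ i, ∃ c : ℂ, i ∈ s → v i = C c * v i₀ := by
        intro i
        by_cases hi : i ∈ s
        · obtain ⟨c, hc⟩ := aux_prop (v i₀) (v i) hv (sub_eq_zero.mp (hw i hi))
          exact ⟨c, fun _ => hc⟩
        · exact ⟨0, fun h => absurd h hi⟩
      choose c hc using this
      refine ⟨c, ⟨i₀, hi₀, ?_⟩, ?_⟩
      · intro h0
        have := hc i₀ hi₀
        rw [h0] at this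
        exact hv (by simpa using this)
      · have h1 := hrel 0 (by omega)
        have : ∑ i ∈ s, v i * derivative^[0] (f i) = v i₀ * ∑ i ∈ s, C (c i) * f i := by
          rw [Finset.mul_sum]
          refine Finset.sum_congr rfl fun i hi => ?_
          rw [Function.iterate_zero_apply, hc i hi]; ring
        rw [this] at h1
        exact (mul_eq_zero.mp h1).resolve_left hv

open Polynomial in
theorem aux_wronsk {r : ℕ} (f : Fin r → ℂ[X]) (hf : LinearIndependent ℂ f) :
    (Matrix.of fun i j : Fin r => derivative^[(j : ℕ)] (f i)).det ≠ 0 := by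
  intro h0
  obtain ⟨v, hv, hM⟩ := Matrix.exists_vecMul_eq_zero_iff.mpr h0
  obtain ⟨i, hi⟩ := Function.ne_iff.mp hv
  obtain ⟨c, ⟨l, _, hl⟩, hc⟩ := aux_dep f r Finset.univ v (by simp) ⟨i, Finset.mem_univ _, hi⟩ (by
    intro j hj
    have := congrFun hM ⟨j, hj⟩
    simpa [Matrix.vecMul, dotProduct] using this)
  refine hl (Fintype.linearIndependent_iff.mp hf c ?_ l)
  simpa [smul_eq_C_mul] using hc

open Polynomial in
theorem aux_deriv (D : ℕ) (p γ : ℂ[X]) (k : ℕ) (hp : p.natDegree ≤ D) (hγ : γ.natDegree ≤ D) :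
    ∀ j ≤ k, ∃ q : ℂ[X], q.natDegree ≤ D + j * D ∧ derivative^[j] (p * γ ^ k) = γ ^ (k - j) * q := by
  intro j
  induction j with
  | zero => intro _; exact ⟨p, by simpa using hp, by simp [mul_comm]⟩
  | succ j ih =>
    intro hj
    obtain ⟨q, hq, he⟩ := ih (by omega)
    obtain ⟨e, rfl⟩ : ∃ e, k = e + (j + 1) := ⟨k - (j+1), by omega⟩
    refine ⟨C ((e + 1 : ℕ) : ℂ) * derivative γ * q + γ * derivative q, ?_, ?_⟩
    · have h1 := natDegree_derivative_le γ
      have h2 := natDegree_derivative_le q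
      refine (natDegree_add_le _ _).trans (max_le ?_ ?_)
      · refine natDegree_mul_le.trans ?_
        have := natDegree_C_mul_le ((e + 1 : ℕ) : ℂ) (derivative γ)
        have : (j+1)*D = j * D + D := by ring
        omega
      · refine natDegree_mul_le.trans ?_
        have : (j+1)*D = j * D + D := by ring
        omega
    · rw [Function.iterate_succ_apply', he]
      rw [show e + (j+1) - j = e + 1 by omega, show e + (j+1) - (j+1) = e by omega,
        derivative_mul, derivative_pow]
      simp only [Nat.add_sub_cancel]
      ring

open Polynomial in
theorem aux_deriv2 (D r : ℕ) (p γ : ℂ[X]) (k : ℕ) (hp : p.natDegree ≤ D) (hγ : γ.natDegree ≤ D)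
    (hk : r ≤ k) :
    ∃ q : Fin r → ℂ[X], ∀ j : Fin r, (q j).natDegree ≤ D + r * D ∧
      derivative^[(j : ℕ)] (p * γ ^ k) = γ ^ (k - r) * q j := by
  have : ∀ j : Fin r, ∃ q : ℂ[X], q.natDegree ≤ D + r * D ∧
      derivative^[(j : ℕ)] (p * γ ^ k) = γ ^ (k - r) * q := by
    intro j
    obtain ⟨q, hq, he⟩ := aux_deriv D p γ k hp hγ j (by omega)
    refine ⟨γ ^ (r - j) * q, ?_, ?_⟩
    · refine natDegree_mul_le.trans ?_
      have h1 : (γ ^ (r - (j:ℕ))).natDegree ≤ (r - j) * D :=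
        natDegree_pow_le.trans (Nat.mul_le_mul_left _ hγ)
      have : r * D = (r - j) * D + j * D := by rw [← add_mul]; congr 1; omega
      omega
    · rw [he, ← mul_assoc, ← pow_add]; congr 2; omega
  choose q hq using this
  exact ⟨q, hq⟩

open Polynomial in
theorem aux_detdeg {r : ℕ} (M : Matrix (Fin r) (Fin r) ℂ[X]) (w : Fin r → ℕ)
    (h : ∀ i j, (M i j).natDegree ≤ w i) : M.det.natDegree ≤ ∑ i, w i := by
  rw [Matrix.det_apply]
  refine natDegree_sum_le_of_forall_le _ _ fun σ _ => ?_
  have h1 : (∏ i, M (σ i) i).natDegree ≤ ∑ i, w i := by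
    refine (natDegree_prod_le _ _).trans ?_
    rw [← Equiv.sum_comp σ w]
    exact Finset.sum_le_sum fun i _ => h _ _
  rcases Int.units_eq_one_or (Equiv.Perm.sign σ) with h2 | h2 <;> rw [h2]
  · simpa using h1
  · simpa using h1

open Polynomial in
theorem aux_key (D r : ℕ) (p γ : Fin r → ℂ[X]) (k : Fin r → ℕ)
    (hp : ∀ i, (p i).natDegree ≤ D) (hγ : ∀ i, (γ i).natDegree ≤ D) (hk : ∀ i, r ≤ k i)
    (hγ0 : ∀ i, γ i ≠ 0)
    (hf : LinearIndependent ℂ fun i => p i * γ i ^ k i)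
    (i₀ : Fin r) (c : Fin r → ℂ) (hc : c i₀ ≠ 0) (σ : ℂ[X])
    (hσ : σ = ∑ i, C (c i) * (p i * γ i ^ k i)) :
    (σ ≠ 0 ∧ (k i₀ - r) * (γ i₀).natDegree ≤ σ.natDegree + r * (D + r * D)) ∧
    ∀ (p' γ' : ℂ[X]) (k' : ℕ), p'.natDegree ≤ D → γ'.natDegree ≤ D → r ≤ k' →
      σ = p' * γ' ^ k' → γ' ≠ 0 →
      ∃ Q R : ℂ[X], Q ≠ 0 ∧ R ≠ 0 ∧ Q.natDegree ≤ r * (D + r * D) ∧ R.natDegree ≤ r * (D + r * D) ∧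
        Q * γ i₀ ^ (k i₀ - r) = R * γ' ^ (k' - r) := by
  have hq := fun i => aux_deriv2 D r (p i) (γ i) (k i) (hp i) (hγ i) (hk i)
  choose q hq using hq
  have hW := aux_wronsk _ hf
  set M : Matrix (Fin r) (Fin r) ℂ[X] :=
    Matrix.of fun i j : Fin r => derivative^[(j : ℕ)] (p i * γ i ^ k i) with hM
  set N : Matrix (Fin r) (Fin r) ℂ[X] := Matrix.of q with hN
  have hMN : M.det = (∏ i, γ i ^ (k i - r)) * N.det := by
    rw [← Matrix.det_mul_column]
    congr 1
    ext1 i j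
    exact (hq i j).2
  set ρ : Fin r → ℂ[X] := fun j => derivative^[(j : ℕ)] σ with hρ
  have hM2 : (M.updateRow i₀ ρ).det = C (c i₀) * M.det := by
    have h := Matrix.det_updateRow_sum M i₀ (fun i => C (c i))
    rw [smul_eq_mul] at h
    rw [← h]
    congr 2
    ext1 j
    simp only [hρ, hσ, hM, Finset.sum_apply, Pi.smul_apply, Matrix.of_apply, smul_eq_mul,
      iterate_derivative_sum, iterate_derivative_C_mul]
  have hM3 : (M.updateRow i₀ ρ).det = (∏ i, Function.update (fun i => γ i ^ (k i - r)) i₀ 1 i)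
      * (N.updateRow i₀ ρ).det := by
    rw [← Matrix.det_mul_column]
    congr 1
    ext1 i j
    by_cases hi : i = i₀
    · subst hi; simp
    · simp only [Matrix.updateRow_ne hi, Matrix.of_apply, Function.update_of_ne hi]
      exact (hq i j).2
  rw [Finset.prod_update_of_mem (Finset.mem_univ _), one_mul] at hM3
  rw [← Finset.mul_prod_erase _ _ (Finset.mem_univ i₀)] at hMN
  rw [Finset.sdiff_singleton_eq_erase] at hM3
  set P0 := ∏ i ∈ Finset.univ.erase i₀, γ i ^ (k i - r) with hPi
  have hPi0 : P0 ≠ 0 := Finset.prod_ne_zero_iff.mpr fun i _ => pow_ne_zero _ (hγ0 i)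
  have hN0 : N.det ≠ 0 := fun h => hW (by rw [hMN, h, mul_zero])
  have key : C (c i₀) * γ i₀ ^ (k i₀ - r) * N.det = (N.updateRow i₀ ρ).det := by
    apply mul_left_cancel₀ hPi0
    rw [← hM3, hM2, hMN]; ring
  have hL0 : C (c i₀) * γ i₀ ^ (k i₀ - r) * N.det ≠ 0 :=
    mul_ne_zero (mul_ne_zero (by simpa using hc) (pow_ne_zero _ (hγ0 _))) hN0
  have hNdeg : N.det.natDegree ≤ r * (D + r * D) := by
    have := aux_detdeg N (fun _ => D + r * D) (fun i j => (hq i j).1)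
    simpa using this
  refine ⟨⟨?_, ?_⟩, ?_⟩
  · intro h0
    apply hL0
    rw [key]
    apply Matrix.det_eq_zero_of_row_eq_zero i₀
    intro j
    simp [hρ, h0]
  · have h1 := aux_detdeg (N.updateRow i₀ ρ) (fun i => if i = i₀ then σ.natDegree else D + r * D) (by
      intro i j
      by_cases hi : i = i₀
      · subst hi
        simp only [Matrix.updateRow_self, if_true, hρ]
        exact (natDegree_iterate_derivative _ _).trans (Nat.sub_le _ _)
      · simp only [Matrix.updateRow_ne hi, if_neg hi]
        exact (hq i j).1)
    rw [← key, natDegree_mul (left_ne_zero_of_mul hL0) hN0, natDegree_C_mul hc, natDegree_pow,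
      ← Finset.add_sum_erase _ _ (Finset.mem_univ i₀)] at h1
    simp only [if_true] at h1
    have h2 : ∑ i ∈ Finset.univ.erase i₀, (if i = i₀ then σ.natDegree else D + r * D) ≤
        r * (D + r * D) := by
      calc _ ≤ ∑ i ∈ Finset.univ.erase i₀, (D + r * D) := by
            refine Finset.sum_le_sum fun i hi => ?_
            rw [if_neg (Finset.ne_of_mem_erase hi)]
        _ ≤ ∑ i : Fin r, (D + r * D) :=
            Finset.sum_le_sum_of_subset (Finset.erase_subset _ _)
        _ = _ := by simp
    omega
  · intro p' γ' k' hp' hγ' hk' hσ' hγ'0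
    obtain ⟨q', hq'⟩ := aux_deriv2 D r p' γ' k' hp' hγ' hk'
    have h1 : (N.updateRow i₀ ρ).det = γ' ^ (k' - r) * (N.updateRow i₀ q').det := by
      have : ρ = γ' ^ (k' - r) • q' := by
        ext1 j
        simp only [hρ, hσ', Pi.smul_apply, smul_eq_mul]
        exact (hq' j).2
      rw [this, Matrix.det_updateRow_smul]
    refine ⟨C (c i₀) * N.det, (N.updateRow i₀ q').det, mul_ne_zero (by simpa using hc) hN0, ?_,
      ?_, ?_, ?_⟩
    · intro h0
      apply hL0
      rw [key, h1, h0, mul_zero]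
    · rwa [natDegree_C_mul hc]
    · have := aux_detdeg (N.updateRow i₀ q') (fun _ => D + r * D) (by
        intro i j
        by_cases hi : i = i₀
        · subst hi
          simp only [Matrix.updateRow_self]
          exact (hq' j).1
        · simp only [Matrix.updateRow_ne hi]
          exact (hq i j).1)
      simpa using this
    · rw [mul_comm _ (γ' ^ _), ← h1, ← key]; ring

open Polynomial in
theorem aux_assoc (p q : ℂ[X]) (hp : p ≠ 0) (hq : q ≠ 0)
    (h : ∀ z, p.rootMultiplicity z = q.rootMultiplicity z) : ∃ c : ℂ, p = C c * q := by
  have hr : p.roots = q.roots := by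
    ext z
    rw [count_roots, count_roots, h]
  have h1 := (IsAlgClosed.splits p).eq_prod_roots
  have h2 := (IsAlgClosed.splits q).eq_prod_roots
  have hlc : q.leadingCoeff ≠ 0 := leadingCoeff_ne_zero.mpr hq
  refine ⟨p.leadingCoeff / q.leadingCoeff, ?_⟩
  calc p = C p.leadingCoeff * (Multiset.map (fun x => X - C x) p.roots).prod := h1
    _ = C (p.leadingCoeff / q.leadingCoeff) *
        (C q.leadingCoeff * (Multiset.map (fun x => X - C x) q.roots).prod) := by
      rw [← mul_assoc, ← C_mul, div_mul_cancel₀ _ hlc, hr]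
    _ = _ := by rw [← h2]

open Polynomial in
theorem aux_ratio (p q : ℂ[X]) (hq : q ≠ 0) (c : ℂ) (h : p = C c * q) :
    RatIsConst (algebraMap ℂ[X] (RatFunc ℂ) p / algebraMap ℂ[X] (RatFunc ℂ) q) := by
  refine ⟨c, ?_⟩
  have : algebraMap ℂ[X] (RatFunc ℂ) q ≠ 0 := RatFunc.algebraMap_ne_zero hq
  rw [h, map_mul, mul_div_assoc, div_self this, mul_one, RatFunc.algebraMap_C]

open Polynomial in
theorem aux_rm_pow (p : ℂ[X]) (_hp : p ≠ 0) (z : ℂ) (n : ℕ) :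
    (p ^ n).rootMultiplicity z = n * p.rootMultiplicity z := by
  rw [← count_roots, ← count_roots, roots_pow, Multiset.count_nsmul]

open Polynomial in
theorem aux_zw (p q : ℂ[X]) (hp : p ≠ 0) (hq : q ≠ 0) (hpc : ∀ c : ℂ, p ≠ C c)
    (h : PolyMultIndep p q) :
    ∃ z w : ℂ, p.rootMultiplicity z * q.rootMultiplicity w ≠
      p.rootMultiplicity w * q.rootMultiplicity z := by
  by_contra hcon
  push Not at hcon
  have hdeg : p.degree ≠ 0 := by
    intro h0
    exact hpc _ (eq_C_of_degree_eq_zero h0)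
  obtain ⟨z, hz⟩ := IsAlgClosed.exists_root p hdeg
  have he : 0 < p.rootMultiplicity z := (rootMultiplicity_pos hp).mpr hz
  obtain ⟨c, hc⟩ := aux_assoc (q ^ p.rootMultiplicity z) (p ^ q.rootMultiplicity z)
    (pow_ne_zero _ hq) (pow_ne_zero _ hp) (by
      intro w
      rw [aux_rm_pow _ hq, aux_rm_pow _ hp, hcon z w, mul_comm])
  have h1 := aux_ratio _ _ (pow_ne_zero _ hp) c hc
  have h2 := h (-(q.rootMultiplicity z : ℤ)) (p.rootMultiplicity z : ℤ) (by
    rw [zpow_neg, zpow_natCast, zpow_natCast, mul_comm, ← div_eq_mul_inv]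
    rwa [map_pow, map_pow] at h1)
  omega

open Polynomial in
theorem aux_rm_le (p : ℂ[X]) (z : ℂ) : p.rootMultiplicity z ≤ p.natDegree := by
  rw [← count_roots]
  exact (Multiset.count_le_card _ _).trans (card_roots' p)

open Polynomial in
theorem aux_ord (Q R g h : ℂ[X]) (hQ : Q ≠ 0) (hR : R ≠ 0) (hg : g ≠ 0) (hh : h ≠ 0) (k l : ℕ)
    (e : Q * g ^ k = R * h ^ l) (z : ℂ) :
    Q.rootMultiplicity z + k * g.rootMultiplicity z =
      R.rootMultiplicity z + l * h.rootMultiplicity z := by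
  have := congrArg (rootMultiplicity z) e
  rwa [rootMultiplicity_mul (mul_ne_zero hQ (pow_ne_zero _ hg)),
    rootMultiplicity_mul (mul_ne_zero hR (pow_ne_zero _ hh)), aux_rm_pow _ hg, aux_rm_pow _ hh] at this

open Polynomial in
theorem aux_same (E : ℕ) (Q R g h : ℂ[X]) (hQ : Q ≠ 0) (hR : R ≠ 0) (hg : g ≠ 0) (hh : h ≠ 0) (k : ℕ)
    (e : Q * g ^ k = R * h ^ k) (hQE : Q.natDegree ≤ E) (hRE : R.natDegree ≤ E) (hk : E < k) :
    ∃ c : ℂ, h = C c * g := by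
  refine aux_assoc _ _ hh hg fun z => ?_
  have h1 := aux_ord Q R g h hQ hR hg hh k k e z
  have h2 := (aux_rm_le Q z).trans hQE
  have h3 := (aux_rm_le R z).trans hRE
  generalize rootMultiplicity z h = x at *
  generalize rootMultiplicity z g = y at *
  rcases lt_trichotomy x y with h4 | h4 | h4
  · have : k * (x + 1) ≤ k * y := Nat.mul_le_mul_left _ h4
    rw [mul_add] at this
    omega
  · exact h4
  · have : k * (y + 1) ≤ k * x := Nat.mul_le_mul_left _ h4
    rw [mul_add] at this
    omega

open Polynomial in
theorem aux_diff (E D : ℕ) (Q R g h : ℂ[X]) (hQ : Q ≠ 0) (hR : R ≠ 0) (hg : g ≠ 0) (hh : h ≠ 0)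
    (k l : ℕ) (e : Q * g ^ k = R * h ^ l) (hQE : Q.natDegree ≤ E) (hRE : R.natDegree ≤ E)
    (hgD : g.natDegree ≤ D) (hk : 2 * (E * D) < l) (hhc : ∀ c : ℂ, h ≠ C c)
    (hi : PolyMultIndep h g) : False := by
  obtain ⟨z, w, hzw⟩ := aux_zw h g hh hg hhc hi
  have h1 := aux_ord Q R g h hQ hR hg hh k l e z
  have h2 := aux_ord Q R g h hQ hR hg hh k l e w
  have a1 := (aux_rm_le Q z).trans hQE
  have a2 := (aux_rm_le R z).trans hRE
  have a3 := (aux_rm_le Q w).trans hQE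
  have a4 := (aux_rm_le R w).trans hRE
  have a5 := (aux_rm_le g z).trans hgD
  have a6 := (aux_rm_le g w).trans hgD
  generalize rootMultiplicity z h = x at *
  generalize rootMultiplicity z g = y at *
  generalize rootMultiplicity w h = x' at *
  generalize rootMultiplicity w g = y' at *
  generalize rootMultiplicity z Q = u at *
  generalize rootMultiplicity w Q = u' at *
  generalize rootMultiplicity z R = v at *
  generalize rootMultiplicity w R = v' at *
  have b1 : u * y' ≤ E * D := Nat.mul_le_mul a1 a6
  have b2 : v * y' ≤ E * D := Nat.mul_le_mul a2 a6
  have b3 : u' * y ≤ E * D := Nat.mul_le_mul a3 a5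
  have b4 : v' * y ≤ E * D := Nat.mul_le_mul a4 a5
  have id1 : l * (x * y') + v * y' + u' * y = l * (x' * y) + v' * y + u * y' := by
    zify at h1 h2 ⊢
    linear_combination -(y' : ℤ) * h1 + (y : ℤ) * h2
  rcases lt_or_gt_of_ne hzw with h4 | h4
  · have : l * (x * y' + 1) ≤ l * (x' * y) := Nat.mul_le_mul_left _ h4
    rw [mul_add] at this
    omega
  · have : l * (x' * y + 1) ≤ l * (x * y') := Nat.mul_le_mul_left _ h4
    rw [mul_add] at this
    omega

open Polynomial in
theorem aux_basis {ι : Type*} [Fintype ι] (F : ι → ℂ[X]) (S : Set ι) :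
    ∃ (r : ℕ) (e : Fin r → ι), r ≤ Fintype.card ι ∧ (∀ i, e i ∈ S) ∧
      LinearIndependent ℂ (fun i => F (e i)) ∧
      ∀ s ∈ S, F s ∈ Submodule.span ℂ (Set.range fun i => F (e i)) := by
  classical
  obtain ⟨b, hb, -, hspan, hli⟩ := exists_linearIndepOn_extension (K := ℂ) (v := F)
    (linearIndepOn_empty ℂ F) (Set.empty_subset S)
  have : Fintype b := Fintype.ofFinite b
  let e := (Fintype.equivFin b).symm
  refine ⟨Fintype.card b, fun i => (e i : ι), Fintype.card_le_of_injective _ Subtype.val_injective,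
    fun i => hb (e i).2, ?_, ?_⟩
  · exact hli.comp e e.injective
  · intro s hs
    have h1 := hspan ⟨s, hs, rfl⟩
    have h2 : (Set.range fun i => F (e i : ι)) = F '' b := by
      ext x
      constructor
      · rintro ⟨i, rfl⟩
        exact ⟨_, (e i).2, rfl⟩
      · rintro ⟨y, hy, rfl⟩
        exact ⟨e.symm ⟨y, hy⟩, by simp⟩
    rw [h2]
    exact h1

open Polynomial in
theorem aux_eval_bound (A : ℂ[X][X]) : ∃ D : ℕ, ∀ n : ℕ, (A.eval (n : ℂ[X])).natDegree ≤ D := by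
  refine ⟨A.support.sup fun k => (A.coeff k).natDegree, fun n => ?_⟩
  rw [eval_eq_sum, Polynomial.sum]
  refine natDegree_sum_le_of_forall_le _ _ fun k hk => ?_
  refine natDegree_mul_le.trans ?_
  have h1 : ((n : ℂ[X]) ^ k).natDegree = 0 := by simp
  rw [h1, add_zero]
  exact Finset.le_sup (f := fun k => (A.coeff k).natDegree) hk

open Polynomial in
theorem aux_eval_ne (A : ℂ[X][X]) (hA : A ≠ 0) : ∃ c : ℕ, ∀ n : ℕ, c < n → A.eval (n : ℂ[X]) ≠ 0 := by
  have hfin : (A.rootSet ℂ[X]).Finite := rootSet_finite A _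
  have h2 : {n : ℕ | A.eval (n : ℂ[X]) = 0}.Finite := by
    have := hfin.preimage (f := fun n : ℕ => (n : ℂ[X])) (Nat.cast_injective.injOn)
    refine this.subset fun n hn => ?_
    simp only [Set.mem_preimage, mem_rootSet]
    exact ⟨hA, by simpa [aeval_def, eval₂_eq_eval_map] using hn⟩
  obtain ⟨c, hc⟩ := h2.bddAbove
  exact ⟨c, fun n hn h => absurd (hc h) (by omega)⟩

theorem stmt_2
    (d t : ℕ)
    -- the characteristic roots (polynomials) and coefficients
    -- (the `A i`, `B j` are polynomials in `n` with coefficients in `ℂ[x]`)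
    (α : Fin (d + 1) → Polynomial ℂ) (A : Fin (d + 1) → Polynomial (Polynomial ℂ))
    (β : Fin (t + 1) → Polynomial ℂ) (B : Fin (t + 1) → Polynomial (Polynomial ℂ))
    (hα0 : ∀ i, α i ≠ 0) (hA0 : ∀ i, A i ≠ 0)
    (hβ0 : ∀ j, β j ≠ 0) (hB0 : ∀ j, B j ≠ 0)
    (hαinj : Function.Injective α) (hβinj : Function.Injective β)
    -- non-degeneracy: no ratio of distinct roots is constant
    (hGnd : ∀ i j, i ≠ j → ¬ RatIsConst
      (algebraMap (Polynomial ℂ) (RatFunc ℂ) (α i) / algebraMap (Polynomial ℂ) (RatFunc ℂ) (α j)))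
    (hHnd : ∀ i j, i ≠ j → ¬ RatIsConst
      (algebraMap (Polynomial ℂ) (RatFunc ℂ) (β i) / algebraMap (Polynomial ℂ) (RatFunc ℂ) (β j)))
    -- `α₁ ∉ ℂ`
    (hα1 : ∀ c : ℂ, α 0 ≠ Polynomial.C c)
    -- `(α₁, βⱼ)` multiplicatively independent for all `j`
    (hindep : ∀ j, PolyMultIndep (α 0) (β j))
    -- `deg α₁ ≥ deg αᵢ` for all `i`
    (hdeg : ∀ i, (α i).degree ≤ (α 0).degree)
    (a b : Polynomial ℂ) (ha : a ≠ 0) (hb : b ≠ 0)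
    (G H : ℕ → Polynomial ℂ)
    (hG : ∀ n : ℕ, G n = ∑ i, (A i).eval (n : Polynomial ℂ) * α i ^ n)
    (hH : ∀ m : ℕ, H m = ∑ j, (B j).eval (m : Polynomial ℂ) * β j ^ m) :
    ∃ c₀ : ℕ, ∃ C : ℕ, ∀ n m : ℕ, c₀ < min n m →
      (G n).degree ≤ (a * G n - b * H m).degree + (C : WithBot ℕ) := by
  classical
  choose DA hDA using fun i => aux_eval_bound (A i)
  choose DB hDB using fun j => aux_eval_bound (B j)
  obtain ⟨cA, hcA⟩ := aux_eval_ne (A 0) (hA0 0)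
  obtain ⟨D, hD⟩ : ∃ D, D = a.natDegree + b.natDegree + ∑ i, DA i + ∑ j, DB j
    + ∑ i, (α i).natDegree + ∑ j, (β j).natDegree := ⟨_, rfl⟩
  obtain ⟨N, hN⟩ : ∃ N, N = Fintype.card (Fin (d + 1) ⊕ Fin (t + 1)) + 1 := ⟨_, rfl⟩
  obtain ⟨E, hE⟩ : ∃ E, E = N * (D + N * D) := ⟨_, rfl⟩
  have hmono : ∀ r ≤ N, r * (D + r * D) ≤ E := by
    intro r hr
    rw [hE]
    exact Nat.mul_le_mul hr (Nat.add_le_add_left (Nat.mul_le_mul_right _ hr) _)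
  have hDAi : ∀ i, DA i ≤ ∑ i, DA i := fun i => Finset.single_le_sum (f := DA) (fun _ _ => Nat.zero_le _) (Finset.mem_univ i)
  have hDBj : ∀ j, DB j ≤ ∑ j, DB j := fun j => Finset.single_le_sum (f := DB) (fun _ _ => Nat.zero_le _) (Finset.mem_univ j)
  have hαi : ∀ i, (α i).natDegree ≤ ∑ i, (α i).natDegree := fun i =>
    Finset.single_le_sum (f := fun i => (α i).natDegree) (fun _ _ => Nat.zero_le _) (Finset.mem_univ i)
  have hβj : ∀ j, (β j).natDegree ≤ ∑ j, (β j).natDegree := fun j =>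
    Finset.single_le_sum (f := fun j => (β j).natDegree) (fun _ _ => Nat.zero_le _) (Finset.mem_univ j)
  have hαdeg : ∀ i, (α i).natDegree ≤ (α 0).natDegree := fun i => Polynomial.natDegree_le_natDegree (hdeg i)
  refine ⟨N + cA + E + 2 * (E * D), E + D + N * D, fun n m hnm => ?_⟩
  have hn : N + cA + E + 2 * (E * D) < n := lt_of_lt_of_le hnm (min_le_left _ _)
  have hm : N + cA + E + 2 * (E * D) < m := lt_of_lt_of_le hnm (min_le_right _ _)
  -- the family
  let P : Fin (d + 1) ⊕ Fin (t + 1) → Polynomial ℂ := Sum.elim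
    (fun i => a * (A i).eval (n : Polynomial ℂ)) (fun j => -(b * (B j).eval (m : Polynomial ℂ)))
  let Γ : Fin (d + 1) ⊕ Fin (t + 1) → Polynomial ℂ := Sum.elim α β
  let K : Fin (d + 1) ⊕ Fin (t + 1) → ℕ := Sum.elim (fun _ => n) (fun _ => m)
  let F : Fin (d + 1) ⊕ Fin (t + 1) → Polynomial ℂ := fun s => P s * Γ s ^ K s
  have hP : ∀ s, (P s).natDegree ≤ D := by
    rintro (i | j)
    · have h1 := hDA i n
      have h2 := hDAi i
      refine Polynomial.natDegree_mul_le.trans ?_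
      omega
    · have h1 := hDB j m
      have h2 := hDBj j
      simp only [P, Sum.elim_inr, Polynomial.natDegree_neg]
      refine Polynomial.natDegree_mul_le.trans ?_
      omega
  have hΓ : ∀ s, (Γ s).natDegree ≤ D := by
    rintro (i | j)
    · have h1 := hαi i
      simp only [Γ, Sum.elim_inl]
      omega
    · have h1 := hβj j
      simp only [Γ, Sum.elim_inr]
      omega
  have hΓ0 : ∀ s, Γ s ≠ 0 := by
    rintro (i | j)
    · exact hα0 i
    · exact hβ0 j
  have hK : ∀ s, N ≤ K s := by
    rintro (i | j)
    · simp only [K, Sum.elim_inl]; omega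
    · simp only [K, Sum.elim_inr]; omega
  have hF0 : F (Sum.inl 0) ≠ 0 :=
    mul_ne_zero (mul_ne_zero ha (hcA n (by omega))) (pow_ne_zero _ (hα0 0))
  have hσ : a * G n - b * H m = ∑ s, F s := by
    rw [hG, hH, Fintype.sum_sum_type, Finset.mul_sum, Finset.mul_sum, sub_eq_add_neg,
      ← Finset.sum_neg_distrib]
    congr 1
    · exact Finset.sum_congr rfl fun i _ => by simp only [F, P, Γ, K, Sum.elim_inl]; ring
    · exact Finset.sum_congr rfl fun i _ => by simp only [F, P, Γ, K, Sum.elim_inr]; ring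
  obtain ⟨r, e, hr, heS, hli, hspan⟩ := aux_basis F {Sum.inl 0}ᶜ
  -- step 1: the leading term is not in the span of the others
  have hnot : F (Sum.inl 0) ∉ Submodule.span ℂ (Set.range fun i => F (e i)) := by
    intro hmem
    obtain ⟨c, hc⟩ := (Submodule.mem_span_range_iff_exists_fun ℂ).mp hmem
    have : ∃ i, c i ≠ 0 := by
      by_contra hcon
      push Not at hcon
      apply hF0
      rw [← hc]
      simp [hcon]
    obtain ⟨i₀, hi₀⟩ := this
    have hrN : r ≤ N := by omega
    obtain ⟨Q, R, hQ, hR, hQE, hRE, hQR⟩ := (aux_key D r (fun i => P (e i)) (fun i => Γ (e i))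
      (fun i => K (e i)) (fun i => hP _) (fun i => hΓ _) (fun i => hrN.trans (hK _))
      (fun i => hΓ0 _) hli i₀ c hi₀ (F (Sum.inl 0)) (by
        rw [← hc]
        exact Finset.sum_congr rfl fun i _ => by rw [Polynomial.smul_eq_C_mul])).2
      (P (Sum.inl 0)) (Γ (Sum.inl 0)) (K (Sum.inl 0)) (hP _) (hΓ _) (hrN.trans (hK _)) rfl (hΓ0 _)
    have hEr := hmono r hrN
    have hne := heS i₀
    cases hs : e i₀ with
    | inl i =>
      rw [hs] at hne hQR
      have hi : (0 : Fin (d + 1)) ≠ i := by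
        rintro rfl
        exact hne rfl
      obtain ⟨c', hc'⟩ := aux_same E Q R (α i) (α 0) hQ hR (hα0 _) (hα0 _) (n - r) hQR
        (hQE.trans hEr) (hRE.trans hEr) (by omega)
      exact hGnd 0 i hi (aux_ratio _ _ (hα0 _) c' hc')
    | inr j =>
      rw [hs] at hQR
      exact aux_diff E D Q R (β j) (α 0) hQ hR (hβ0 _) (hα0 _) (m - r) (n - r) hQR
        (hQE.trans hEr) (hRE.trans hEr) (hΓ (Sum.inr j)) (by omega) hα1 (hindep j)
  -- step 2
  have hli2 : LinearIndependent ℂ (fun i : Fin (r + 1) =>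
      F ((Fin.cons (Sum.inl 0) e : Fin (r + 1) → Fin (d + 1) ⊕ Fin (t + 1)) i)) := by
    have h1 := linearIndependent_finCons.mpr ⟨hli, hnot⟩
    have h2 : (fun i : Fin (r + 1) =>
        F ((Fin.cons (Sum.inl 0) e : Fin (r + 1) → Fin (d + 1) ⊕ Fin (t + 1)) i)) =
        Fin.cons (F (Sum.inl 0)) (fun i => F (e i)) := by
      funext i
      refine Fin.cases ?_ (fun i => ?_) i <;> simp
    rw [h2]
    exact h1
  have hrest : ∑ s ∈ Finset.univ.erase (Sum.inl 0), F s ∈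
      Submodule.span ℂ (Set.range fun i => F (e i)) :=
    Submodule.sum_mem _ fun s hs => hspan s (by
      simpa using Finset.ne_of_mem_erase hs)
  obtain ⟨c, hc⟩ := (Submodule.mem_span_range_iff_exists_fun ℂ).mp hrest
  have hrN : r + 1 ≤ N := by omega
  obtain ⟨⟨hσ0, hσdeg⟩, -⟩ := aux_key D (r + 1)
    (fun i => P ((Fin.cons (Sum.inl 0) e : Fin (r + 1) → Fin (d + 1) ⊕ Fin (t + 1)) i))
    (fun i => Γ ((Fin.cons (Sum.inl 0) e : Fin (r + 1) → Fin (d + 1) ⊕ Fin (t + 1)) i))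
    (fun i => K ((Fin.cons (Sum.inl 0) e : Fin (r + 1) → Fin (d + 1) ⊕ Fin (t + 1)) i))
    (fun i => hP _) (fun i => hΓ _) (fun i => hrN.trans (hK _)) (fun i => hΓ0 _) hli2 0
    (Fin.cons 1 c) (by simp) (a * G n - b * H m) (by
      rw [hσ, ← Finset.add_sum_erase _ _ (Finset.mem_univ (Sum.inl 0)), ← hc, Fin.sum_univ_succ]
      simp only [Fin.cons_zero, Fin.cons_succ, map_one, one_mul, Polynomial.smul_eq_C_mul, F])
  have hEr := hmono (r + 1) hrN
  simp only [Fin.cons_zero] at hσdeg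
  change (n - (r + 1)) * (α 0).natDegree ≤ _ at hσdeg
  have hGdeg : (G n).natDegree ≤ D + n * (α 0).natDegree := by
    rw [hG]
    refine Polynomial.natDegree_sum_le_of_forall_le _ _ fun i _ => ?_
    refine Polynomial.natDegree_mul_le.trans (Nat.add_le_add ?_ ?_)
    · have h1 := hDA i n
      have h2 := hDAi i
      omega
    · exact Polynomial.natDegree_pow_le.trans (Nat.mul_le_mul_left _ (hαdeg i))
  have hsplit : n * (α 0).natDegree = (n - (r + 1)) * (α 0).natDegree + (r + 1) * (α 0).natDegree := by
    rw [← add_mul]; congr 1; omega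
  have hlast : (r + 1) * (α 0).natDegree ≤ N * D := Nat.mul_le_mul hrN (hΓ (Sum.inl 0))
  refine Polynomial.degree_le_natDegree.trans ?_
  rw [Polynomial.degree_eq_natDegree hσ0]
  exact_mod_cast (by omega : (G n).natDegree ≤ (a * G n - b * H m).natDegree + (E + D + N * D))
end
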